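/- arXiv:1102.5415 — 2 statements merged into one kernel-verified Lean document; each statement's English description precedes it below -/
import Mathlib

section
/- Let F be a finite field with q elements, χ a multiplicative character of F of order d = q-1 (extended by χ(0) = 0), and f ∈ F[x] a monic polynomial with m distinct roots (in the algebraic closure) that is not a d-th power in F[x]. Then |Σ_{x∈F} χ(f(x))| ≤ (m-1)√q. -/
open Finset Polynomial
open scoped Classical

theorem wl_kummer {L M : Type*} [Field L] [Field M] [Algebra L M] [IsAlgClosed M] {d : ℕ} (hd : 0 < d)
    {ζ : L} (hζ : IsPrimitiveRoot ζ d) {a : L} {y : M} (hy : y ^ d = algebraMap L M a)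
    (hnot : ∀ l : ℕ, l.Prime → l ∣ d → ∀ b : L, b ^ l ≠ a)
    {p : L[X]} (hp : p ≠ 0) (hdeg : p.natDegree < d) : aeval y p ≠ 0 := by
  intro h0
  have hint : IsIntegral L y := by
    refine ⟨X ^ d - C a, monic_X_pow_sub_C _ hd.ne', ?_⟩
    simp [hy]
  set μ := minpoly L y with hμ
  have hs : μ.natDegree < d := lt_of_le_of_lt
    (natDegree_le_of_dvd (minpoly.dvd L y h0) hp) hdeg
  have hs0 : 0 < μ.natDegree := minpoly.natDegree_pos hint
  have hy0 : y ≠ 0 := by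
    rintro rfl
    rw [zero_pow hd.ne'] at hy
    have ha : a = 0 := by
      have := hy.symm
      simpa using this
    have h1 : d ≠ 1 := by omega
    exact hnot _ (Nat.minFac_prime h1) (Nat.minFac_dvd d) 0
      (by rw [ha, zero_pow (Nat.minFac_prime h1).ne_zero])
  have hζ' := hζ.map_of_injective (algebraMap L M).injective
  have : NeZero d := ⟨hd.ne'⟩
  have hsp : (μ.map (algebraMap L M)).Splits := IsAlgClosed.splits _
  have hmon : (μ.map (algebraMap L M)).Monic := (minpoly.monic hint).map _
  have hdv : μ ∣ X ^ d - C a := minpoly.dvd L y (by simp [hy])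
  have key : ∀ s : Multiset M, (∀ b ∈ s, b ^ d = y ^ d) → ∃ c : L, c ≠ 0 ∧ s.prod = algebraMap L M c * y ^ s.card := by
    intro s
    induction s using Multiset.induction with
    | empty => intro _; exact ⟨1, one_ne_zero, by simp⟩
    | cons b s ih =>
      intro h
      obtain ⟨c, hc, e⟩ := ih (fun b hb => h b (Multiset.mem_cons_of_mem hb))
      have hb := h b (Multiset.mem_cons_self b s)
      have : (b / y) ^ d = 1 := by rw [div_pow, hb, div_self (pow_ne_zero _ hy0)]
      obtain ⟨i, _, hi⟩ := hζ'.eq_pow_of_pow_eq_one this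
      refine ⟨ζ ^ i * c, mul_ne_zero (pow_ne_zero _ (hζ.ne_zero hd.ne')) hc, ?_⟩
      have hb2 : b = algebraMap L M ζ ^ i * y := by rw [hi]; field_simp
      rw [Multiset.prod_cons, e, Multiset.card_cons, map_mul, map_pow, hb2]
      ring
  obtain ⟨c, hc, e⟩ := key (μ.map (algebraMap L M)).roots (by
    intro b hb
    have h1 := (mem_roots'.1 hb).2
    have : eval b ((X ^ d - C a).map (algebraMap L M)) = 0 := by
      obtain ⟨w, hw⟩ := hdv
      rw [hw, Polynomial.map_mul, eval_mul, h1.eq_zero, zero_mul]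
    simp [sub_eq_zero] at this
    rw [this, hy])
  have hco := hsp.coeff_zero_eq_prod_roots_of_monic hmon
  rw [e, ← hsp.natDegree_eq_card_roots, natDegree_map] at hco
  have hys : ∃ b : L, algebraMap L M b = y ^ μ.natDegree := by
    refine ⟨(-1) ^ μ.natDegree * μ.coeff 0 / c, ?_⟩
    rw [coeff_map] at hco
    have hc' : algebraMap L M c ≠ 0 := by simpa using hc
    rw [map_div₀, map_mul, hco]
    field_simp
    simp [← mul_pow]
  obtain ⟨b, hb⟩ := hys
  set s := μ.natDegree
  set t := Nat.gcd s d with ht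
  have hyt : ∃ b : L, algebraMap L M b = y ^ t := by
    refine ⟨b ^ (Nat.gcdA s d) * a ^ (Nat.gcdB s d), ?_⟩
    rw [map_mul, map_zpow₀, map_zpow₀, hb, ← hy, ← zpow_natCast, ← zpow_natCast, ← zpow_mul,
      ← zpow_mul, ← zpow_add₀ hy0, ← Nat.gcd_eq_gcd_ab, zpow_natCast]
  obtain ⟨b', hb'⟩ := hyt
  have htd : t ∣ d := Nat.gcd_dvd_right s d
  obtain ⟨u, hu⟩ := htd
  have hts : t ≤ s := Nat.gcd_le_left _ hs0
  have hu1 : u ≠ 1 := by rintro rfl; omega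
  obtain ⟨v, hv⟩ := Nat.minFac_dvd u
  refine hnot _ (Nat.minFac_prime hu1) ((Nat.minFac_dvd u).trans ⟨t, by rw [hu, mul_comm]⟩) (b' ^ v) ?_
  apply (algebraMap L M).injective
  rw [map_pow, map_pow, hb', ← hy, ← pow_mul, ← pow_mul]
  congr 1
  rw [hu, mul_comm v, ← hv]

theorem wl_core {S : Type*} [CommRing S] {d : ℕ} (gx gz y : S) (h : gz = gx * y ^ d)
    (w : Fin d → S) (j : Fin d) :
    ∑ k : Fin d, ((if j ≤ k then gx else gz) * w (k - j)) * y ^ (k : ℕ)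
      = gx * y ^ (j : ℕ) * ∑ i : Fin d, w i * y ^ (i : ℕ) := by
  have : NeZero d := ⟨by have := j.2; omega⟩
  rw [← Equiv.sum_comp (Equiv.addRight j), Finset.mul_sum]
  refine Finset.sum_congr rfl fun i _ => ?_
  change (if j ≤ i + j then gx else gz) * w (i + j - j) * y ^ ((i + j : Fin d) : ℕ) = _
  rw [add_sub_cancel_right]
  have hv := Fin.val_add_eq_ite i j
  by_cases hc : d ≤ (i : ℕ) + j
  · rw [if_pos hc] at hv
    have hlt : ¬ j ≤ i + j := by
      rw [Fin.le_def, hv]; have := i.2; have := j.2; omega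
    rw [if_neg hlt, hv, h]
    have : y ^ d * y ^ ((i : ℕ) + j - d) = y ^ (i : ℕ) * y ^ (j : ℕ) := by
      rw [← pow_add, ← pow_add]; congr 1; omega
    linear_combination (gx * w i) * this
  · rw [if_neg hc] at hv
    have hlt : j ≤ i + j := by
      rw [Fin.le_def, hv]; omega
    rw [if_pos hlt, hv, pow_add]
    ring

noncomputable def wlM {K : Type*} [Field K] {d : ℕ} (g : K[X]) (w : Fin d → K[X][X]) :
    Matrix (Fin d) (Fin d) K[X][X] :=
  fun j k => (if j ≤ k then g.map C else C g) * w (k - j)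

theorem wl_notpow {K L : Type*} [Field K] [Field L] [Algebra K[X][X] L] [IsFractionRing K[X][X] L]
    {g : K[X]} (hg : g.Monic) {α : K} {l : ℕ} (hl : ¬ l ∣ g.rootMultiplicity α) (b : L) :
    b ^ l ≠ algebraMap K[X][X] L (C g) / algebraMap K[X][X] L (g.map C) := by
  intro hb
  have hinj := IsFractionRing.injective K[X][X] L
  have hgx : (g.map (C : K →+* K[X])).Monic := hg.map _
  have hgx0 : algebraMap K[X][X] L (g.map C) ≠ 0 := by
    rw [Ne, map_eq_zero_iff _ hinj]; exact hgx.ne_zero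
  obtain ⟨u, v, hv, rfl⟩ := IsFractionRing.div_surjective (A := K[X][X]) b
  have hv0 : v ≠ 0 := nonZeroDivisors.ne_zero hv
  have hv0' : algebraMap K[X][X] L v ≠ 0 := by
    rw [Ne, map_eq_zero_iff _ hinj]; exact hv0
  rw [div_pow, div_eq_div_iff (pow_ne_zero _ hv0') hgx0, ← map_pow, ← map_pow, ← map_mul,
    ← map_mul] at hb
  have hb := hinj hb
  have hl0 : l ≠ 0 := by
    rintro rfl
    have h1 : C g = g.map C := by simpa using hb.symm
    apply hl
    rw [zero_dvd_iff]
    have h2 := congrArg natDegree h1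
    rw [natDegree_C, hg.natDegree_map] at h2
    have := hg.natDegree_eq_zero.1 h2.symm
    simp [this, rootMultiplicity_eq_zero]
  have hu0 : u ≠ 0 := by
    rintro rfl
    rw [zero_pow hl0, zero_mul] at hb
    have := mul_ne_zero (by simpa using hg.ne_zero : C g ≠ (0 : K[X][X])) (pow_ne_zero l hv0)
    exact this hb.symm
  set π : K[X][X] := C (X - C α) with hπ
  have hpr : Prime π := by
    rw [hπ, prime_C_iff]; exact prime_X_sub_C α
  have hf : ∀ x : K[X][X], x ≠ 0 → FiniteMultiplicity π x := fun x hx =>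
    FiniteMultiplicity.of_not_isUnit hpr.not_isUnit hx
  have e1 : multiplicity π (u ^ l * g.map C) = multiplicity π (C g * v ^ l) := by rw [hb]
  rw [multiplicity_mul hpr (hf _ (mul_ne_zero (pow_ne_zero _ hu0) hgx.ne_zero)),
    multiplicity_mul hpr (hf _ (mul_ne_zero (by simpa using hg.ne_zero) (pow_ne_zero _ hv0))),
    FiniteMultiplicity.multiplicity_pow hpr (hf _ hu0),
    FiniteMultiplicity.multiplicity_pow hpr (hf _ hv0)] at e1
  have e2 : multiplicity π (g.map C) = 0 := by
    rw [multiplicity_eq_zero]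
    intro hd
    have := (C_dvd_iff_dvd_coeff _ _).1 hd (g.map (C : K →+* K[X])).natDegree
    rw [coeff_natDegree, hgx.leadingCoeff] at this
    exact (prime_X_sub_C α).not_isUnit (isUnit_of_dvd_one this)
  have e3 : multiplicity π (C g) = g.rootMultiplicity α := by
    rw [rootMultiplicity_eq_multiplicity, if_neg hg.ne_zero]
    apply multiplicity_eq_of_emultiplicity_eq
    rw [emultiplicity_eq_emultiplicity_iff]
    intro n
    rw [hπ, ← C_pow, C_dvd_iff_dvd_coeff]
    constructor
    · intro h; simpa using h 0
    · intro h i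
      rw [coeff_C]; split_ifs
      · exact h
      · exact dvd_zero _
  rw [e2, e3] at e1
  apply hl
  have : l ∣ g.rootMultiplicity α + l * multiplicity π v := ⟨multiplicity π u, by rw [← e1]; ring⟩
  exact (Nat.dvd_add_left ⟨_, rfl⟩).1 this

theorem wl_det_ne_zero {K : Type*} [Field K] {d : ℕ} (hd : 0 < d) {ζ : K} (hζ : IsPrimitiveRoot ζ d)
    {g : K[X]} (hg : g.Monic)
    (hm : ∀ l : ℕ, l.Prime → l ∣ d → ∃ α : K, ¬ l ∣ g.rootMultiplicity α)
    {w : Fin d → K[X][X]} (hw : w ≠ 0) : (wlM g w).det ≠ 0 := by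
  intro h0
  let L := FractionRing K[X][X]
  let M := AlgebraicClosure L
  have hinj : Function.Injective (algebraMap K[X][X] L) := IsFractionRing.injective K[X][X] L
  have hgx0 : algebraMap K[X][X] L (g.map C) ≠ 0 := by
    rw [Ne, map_eq_zero_iff _ hinj]; exact (hg.map _).ne_zero
  set a : L := algebraMap K[X][X] L (C g) / algebraMap K[X][X] L (g.map C) with ha
  obtain ⟨y, hy⟩ := IsAlgClosed.exists_pow_nat_eq (algebraMap L M a) hd
  have hζL : IsPrimitiveRoot (algebraMap K[X][X] L (C (C ζ))) d :=
    hζ.map_of_injective (f := (algebraMap K[X][X] L).comp (C.comp C))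
      (hinj.comp (C_injective.comp C_injective))
  have hnot : ∀ l : ℕ, l.Prime → l ∣ d → ∀ b : L, b ^ l ≠ a := fun l hl hld b => by
    obtain ⟨α, hα⟩ := hm l hl hld
    exact wl_notpow hg hα b
  have key : ∀ c : Fin d → L, c ≠ 0 → ∑ i : Fin d, algebraMap L M (c i) * y ^ (i : ℕ) ≠ 0 := by
    intro c hc
    have hcoef : ∀ i : Fin d, (∑ i : Fin d, C (c i) * X ^ (i : ℕ) : L[X]).coeff i = c i := by
      intro i
      simp only [finsetSum_coeff, coeff_C_mul, coeff_X_pow]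
      rw [Finset.sum_eq_single i]
      · simp
      · intro j _ hj
        rw [if_neg (fun h => hj (Fin.ext h.symm)), mul_zero]
      · simp
    have := wl_kummer hd hζL hy hnot (p := ∑ i : Fin d, C (c i) * X ^ (i : ℕ)) (by
      intro h
      apply hc
      funext i
      rw [← hcoef i, h]; simp) (by
      rw [Nat.lt_iff_le_pred hd]
      apply natDegree_sum_le_of_forall_le
      intro i _
      refine (natDegree_C_mul_X_pow_le _ _).trans ?_
      have := i.2; change (i : ℕ) ≤ d - 1; omega)
    simpa using this
  have h1 : ((wlM g w).map (algebraMap K[X][X] L)).det = 0 := by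
    have := RingHom.map_det (algebraMap K[X][X] L) (wlM g w)
    rw [h0, map_zero] at this
    exact this.symm
  obtain ⟨c, hc, hcM⟩ := Matrix.exists_vecMul_eq_zero_iff.2 h1
  have hw' : (fun i => algebraMap K[X][X] L (w i)) ≠ 0 := by
    intro h
    apply hw
    funext i
    apply hinj
    simpa using congrFun h i
  set φ : K[X][X] →+* M := (algebraMap L M).comp (algebraMap K[X][X] L) with hφ
  have hgz : φ (C g) = φ (g.map C) * y ^ d := by
    rw [hy, ha, hφ, RingHom.comp_apply, RingHom.comp_apply, ← map_mul, mul_div_cancel₀ _ hgx0]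
  have h2 : ∑ j : Fin d, algebraMap L M (c j) *
      (∑ k : Fin d, φ (wlM g w j k) * y ^ (k : ℕ)) = 0 := by
    simp only [Finset.mul_sum]
    rw [Finset.sum_comm]
    apply Finset.sum_eq_zero
    intro k _
    have := congrFun hcM k
    simp only [Matrix.vecMul, dotProduct, Matrix.map_apply, Pi.zero_apply] at this
    have := congrArg (algebraMap L M) this
    simp only [map_sum, map_mul, map_zero] at this
    simp only [hφ, RingHom.comp_apply, ← mul_assoc, ← Finset.sum_mul]
    rw [this, zero_mul]
  have h3 : ∀ j : Fin d, ∑ k : Fin d, φ (wlM g w j k) * y ^ (k : ℕ) =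
      φ (g.map C) * y ^ (j : ℕ) * ∑ i : Fin d, φ (w i) * y ^ (i : ℕ) := by
    intro j
    rw [← wl_core _ _ y hgz (fun i => φ (w i)) j]
    refine Finset.sum_congr rfl fun k _ => ?_
    rw [wlM, map_mul]
    split_ifs <;> rfl
  simp only [h3] at h2
  have h4 : (∑ j : Fin d, algebraMap L M (c j) * y ^ (j : ℕ)) *
      (φ (g.map C) * ∑ i : Fin d, φ (w i) * y ^ (i : ℕ)) = 0 := by
    rw [← h2, Finset.sum_mul]
    refine Finset.sum_congr rfl fun k _ => ?_
    ring
  rcases mul_eq_zero.1 h4 with h | h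
  · exact key c hc h
  · rcases mul_eq_zero.1 h with h | h
    · apply hgx0
      apply (algebraMap L M).injective
      simpa [hφ] using h
    · exact key _ hw' h

noncomputable def wlψ (K : Type*) [Field K] (r : ℕ) : K[X][X] →+* K[X] :=
  eval₂RingHom ((expand K r : K[X] →ₐ[K] K[X]) : K[X] →+* K[X]) X

theorem wlψ_mono (K : Type*) [Field K] (r : ℕ) (q : K[X]) (l : ℕ) :
    wlψ K r (C q * X ^ l) = expand K r q * X ^ l := by
  simp [wlψ]

theorem wlψ_inj {K : Type*} [Field K] {r : ℕ} (hr : 0 < r) {p : K[X][X]} (hp : p.natDegree < r)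
    (h : wlψ K r p = 0) : p = 0 := by
  ext l j
  simp only [coeff_zero]
  by_cases hl : r ≤ l
  · rw [coeff_eq_zero_of_natDegree_lt (lt_of_lt_of_le hp hl), coeff_zero]
  push Not at hl
  rw [p.as_sum_range' r hp, map_sum] at h
  have h2 := congrArg (fun q => coeff q (j * r + l)) h
  simp only [← C_mul_X_pow_eq_monomial, wlψ_mono, finsetSum_coeff, coeff_zero, coeff_mul_X_pow'] at h2
  rw [Finset.sum_eq_single l] at h2
  · rw [if_pos (by omega), Nat.add_sub_cancel, coeff_expand_mul hr] at h2
    exact h2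
  · intro b hb hbl
    split_ifs with hle
    · rw [coeff_expand hr, if_neg]
      intro hd
      have hb := Finset.mem_range.1 hb
      apply hbl
      have h3 : b ≡ j * r + l [MOD r] := (Nat.modEq_iff_dvd' hle).2 hd
      have h4 : b % r = (j * r + l) % r := h3
      rw [Nat.mod_eq_of_lt hb, Nat.add_comm, Nat.add_mul_mod_self_right, Nat.mod_eq_of_lt hl] at h4
      exact h4
    · rfl
  · intro hh; exact absurd (Finset.mem_range.2 hl) hh

theorem wl_R_ne_zero {K : Type*} [Field K] {d : ℕ} (hd : 0 < d) {ζ : K} (hζ : IsPrimitiveRoot ζ d)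
    {g : K[X]} (hg : g.Monic)
    (hm : ∀ l : ℕ, l.Prime → l ∣ d → ∃ α : K, ¬ l ∣ g.rootMultiplicity α)
    {w : Fin d → K[X][X]} (hw : w ≠ 0) {b r : ℕ} (hb : ∀ i, (w i).natDegree ≤ b)
    (hr : d * (g.natDegree + b) < r) (hgr : g ^ r = expand K r g) {h : K[X]} (hh : g * h ^ d = g ^ r) :
    ∑ i : Fin d, wlψ K r (w i) * h ^ (i : ℕ) ≠ 0 := by
  intro h0
  have hdet := wl_det_ne_zero hd hζ hg hm hw
  apply hdet
  apply wlψ_inj (r := r) (by omega)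
  · refine lt_of_le_of_lt ?_ hr
    rw [Matrix.det_apply]
    apply natDegree_sum_le_of_forall_le
    intro σ _
    refine (natDegree_smul_le _ _).trans ?_
    refine (natDegree_prod_le _ _).trans ?_
    have : ∀ i : Fin d, (wlM g w (σ i) i).natDegree ≤ g.natDegree + b := by
      intro i
      rw [wlM]
      refine natDegree_mul_le.trans (add_le_add ?_ (hb _))
      split_ifs
      · exact natDegree_map_le
      · simp
    refine (Finset.sum_le_sum fun i _ => this i).trans ?_
    simp
  · have e1 : wlψ K r (C g) = wlψ K r (g.map C) * h ^ d := by
      have a1 : wlψ K r (C g) = expand K r g := by simp [wlψ]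
      have a2 : wlψ K r (g.map C) = g := by
        rw [wlψ, coe_eval₂RingHom, eval₂_map]
        have : ((expand K r : K[X] →ₐ[K] K[X]) : K[X] →+* K[X]).comp C = C := by
          ext x; simp
        rw [this, eval₂_C_X]
      rw [a1, a2, hh, hgr]
    rw [RingHom.map_det]
    apply Matrix.exists_mulVec_eq_zero_iff.1
    refine ⟨fun k => h ^ (k : ℕ), ?_, ?_⟩
    · intro hz
      have := congrFun hz ⟨0, hd⟩
      simp at this
    · funext j
      have := wl_core _ _ h e1 (fun i => wlψ K r (w i)) j
      rw [h0, mul_zero] at this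
      rw [Pi.zero_apply, ← this]
      simp only [Matrix.mulVec, dotProduct]
      refine Finset.sum_congr rfl fun k _ => ?_
      rw [RingHom.mapMatrix_apply, Matrix.map_apply, wlM, map_mul]
      split_ifs <;> rfl

theorem wl_relation {K ι : Type*} [Field K] [Fintype ι] (v : ι → K[X]) (N : ℕ)
    (hv : ∀ i, (v i).natDegree < N) (hN : N < Fintype.card ι) :
    ∃ c : ι → K, c ≠ 0 ∧ ∑ i, C (c i) * v i = 0 := by
  let v' : ι → (Fin N → K) := fun i n => (v i).coeff n
  have : ¬ LinearIndependent K v' := by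
    intro h
    have := h.fintype_card_le_finrank
    simp at this
    omega
  rw [Fintype.not_linearIndependent_iff] at this
  obtain ⟨c, hc, i, hi⟩ := this
  refine ⟨c, fun h => hi (by rw [h]; rfl), ?_⟩
  ext n
  rw [finsetSum_coeff, coeff_zero]
  by_cases hn : n < N
  · have := congrFun hc ⟨n, hn⟩
    simp only [Finset.sum_apply, Pi.smul_apply, smul_eq_mul, v', Pi.zero_apply] at this
    simpa using this
  · apply Finset.sum_eq_zero
    intro i _
    rw [coeff_C_mul, coeff_eq_zero_of_natDegree_lt (lt_of_lt_of_le (hv i) (not_lt.1 hn)), mul_zero]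

theorem wl_stepanov {K : Type*} [Field K] [IsAlgClosed K] (p : ℕ) [Fact p.Prime] [CharP K p]
    {d : ℕ} (hd : 2 ≤ d) {ζ : K} (hζ : IsPrimitiveRoot ζ d)
    {g : K[X]} (hg : g.Monic)
    (hm : ∀ l : ℕ, l.Prime → l ∣ d → ∃ α : K, ¬ l ∣ g.rootMultiplicity α)
    {r s n : ℕ} (hrn : r = p ^ n) (hrs : r = d * s + 1) (hgr : g ^ r = expand K r g)
    (hs : 2 * g.natDegree + 1 ≤ s) (a : K) (P : Finset K)
    (hP : ∀ x ∈ P, x ^ (r * r) = x ∧ (g.eval x) ^ (s * (r + 1)) = a) :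
    P.card ≤ r * s + (3 * g.natDegree + 5) * r := by
  set D := g.natDegree with hD
  obtain ⟨B, rfl⟩ : ∃ B, s = B + D := ⟨s - D, by omega⟩
  have hB : D + 1 ≤ B := by omega
  set s := B + D with hsdef
  set h := g ^ s with hh
  have hhD : h.natDegree = s * D := by rw [hh, hg.natDegree_pow]
  set J := s + 2 * D + 4 with hJ
  let ι := Fin d × Fin J × Fin B
  let v : ι → K[X] := fun t => C (a ^ (t.1 : ℕ)) * X ^ (r * (t.2.2 : ℕ) + t.2.1) * h ^ (d - 1 - (t.1 : ℕ))
  obtain ⟨c', hc', hrel⟩ := wl_relation v (r * (B - 1) + (J - 1) + (d - 1) * (s * D) + 1) (by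
    rintro ⟨i, j, l⟩
    rw [Nat.lt_succ_iff]
    refine natDegree_mul_le.trans (add_le_add ?_ ?_)
    · refine (natDegree_C_mul_X_pow_le _ _).trans ?_
      simp only
      have := l.2
      have := j.2
      exact add_le_add (Nat.mul_le_mul_left _ (by omega)) (by omega)
    · refine natDegree_pow_le.trans ?_
      rw [hhD]
      exact Nat.mul_le_mul_right _ (by omega)) (by
    simp only [ι, Fintype.card_prod, Fintype.card_fin]
    obtain ⟨B', rfl⟩ : ∃ B', B = B' + 1 := ⟨B - 1, by omega⟩
    obtain ⟨d', rfl⟩ : ∃ d', d = d' + 2 := ⟨d - 2, by omega⟩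
    have e1 : B' + 1 - 1 = B' := by omega
    have e2 : d' + 2 - 1 = d' + 1 := by omega
    have e3 : J - 1 = B' + 3 * D + 4 := by omega
    have e4 : J = B' + 3 * D + 5 := by omega
    have e5 : s = B' + 1 + D := rfl
    rw [e1, e2, e3, e4, hrs, e5]
    obtain ⟨t, rfl⟩ : ∃ t, B' = D + t := ⟨B' - D, by omega⟩
    ring_nf
    nlinarith [Nat.zero_le (d' * D), Nat.zero_le (t * D), Nat.zero_le (d' * t), Nat.zero_le (d' * t * D), Nat.zero_le (d' * D * D)])
  have hr0 : 0 < r := by omega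
  choose c hc using fun t => IsAlgClosed.exists_pow_nat_eq (c' t) hr0
  let w : Fin d → K[X][X] := fun i => ∑ j : Fin J, ∑ l : Fin B, C (C (c (i, j, l)) * X ^ (j : ℕ)) * X ^ (l : ℕ)
  have hw : w ≠ 0 := by
    intro hw
    apply hc'
    funext ⟨i, j, l⟩
    have h1 := congrArg (fun q : K[X][X] => (q.coeff l).coeff j) (congrFun hw i)
    simp only [w, finsetSum_coeff, coeff_C_mul, coeff_X_pow, Pi.zero_apply, coeff_zero] at h1
    rw [Finset.sum_eq_single j, Finset.sum_eq_single l] at h1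
    · simp at h1
      rw [← hc, h1, zero_pow hr0.ne']; rfl
    · intro b _ hb
      rw [if_neg (fun h => hb (Fin.ext h.symm))]; simp
    · simp
    · intro b _ hb
      apply Finset.sum_eq_zero
      intro l' _
      split_ifs with h5
      · rw [mul_one, coeff_C_mul, coeff_X_pow, if_neg (fun h => hb (Fin.ext h.symm)), mul_zero]
      · simp
    · simp
  have hR := wl_R_ne_zero (by omega) hζ hg hm hw (b := B - 1) (r := r) (by
    intro i
    apply natDegree_sum_le_of_forall_le
    intro j _
    apply natDegree_sum_le_of_forall_le
    intro l _
    refine (natDegree_C_mul_X_pow_le _ _).trans ?_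
    have := l.2; omega) (by
      rw [hrs, Nat.lt_succ_iff]
      exact Nat.mul_le_mul_left _ (by omega)) hgr (h := h) (by
      rw [hh, ← pow_mul, ← pow_succ', hrs, mul_comm])
  set R := ∑ i : Fin d, wlψ K r (w i) * h ^ (i : ℕ) with hRdef
  have hRe : R = ∑ t : ι, C (c t) * X ^ (r * (t.2.1 : ℕ) + t.2.2) * h ^ (t.1 : ℕ) := by
    rw [Fintype.sum_prod_type, hRdef]
    refine Finset.sum_congr rfl fun i _ => ?_
    rw [Fintype.sum_prod_type]
    simp only [w, map_sum, wlψ_mono, Finset.sum_mul]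
    refine Finset.sum_congr rfl fun j _ => Finset.sum_congr rfl fun l _ => ?_
    simp only [map_mul, expand_C, map_pow, expand_X]
    rw [pow_add, pow_mul]; ring
  have hRdeg : R.natDegree ≤ r * (J - 1) + (B - 1) + (d - 1) * (s * D) := by
    rw [hRe]
    apply natDegree_sum_le_of_forall_le
    rintro ⟨i, j, l⟩ _
    refine natDegree_mul_le.trans (add_le_add ?_ ?_)
    · refine (natDegree_C_mul_X_pow_le _ _).trans ?_
      simp only
      have := l.2
      have := j.2
      exact add_le_add (Nat.mul_le_mul_left _ (by omega)) (by omega)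
    · refine natDegree_pow_le.trans ?_
      rw [hhD]
      exact Nat.mul_le_mul_right _ (by have := i.2; simp only; omega)
  have hroot : ∀ x ∈ P, a ≠ 0 → R.eval x = 0 := by
    intro x hx ha
    obtain ⟨h1, h2⟩ := hP x hx
    set hx := h.eval x with hhx
    have h3 : hx ^ r * hx = a := by
      rw [← h2, hhx, hh, eval_pow, ← pow_succ, ← pow_mul]
    have hx0 : hx ≠ 0 := by
      intro h0; rw [h0, mul_zero] at h3; exact ha h3.symm
    have h4 : (R.eval x) ^ r * hx ^ (d - 1) = 0 := by
      have h5 := congrArg (eval x) hrel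
      rw [eval_zero, eval_finsetSum] at h5
      rw [← h5, hRe, eval_finsetSum, hrn, sum_pow_char_pow, ← hrn, Finset.sum_mul]
      refine Finset.sum_congr rfl ?_
      rintro ⟨i, j, l⟩ _
      simp only [v, eval_mul, eval_C, eval_pow, eval_X, ← hhx, ← hc]
      have e1 : (x ^ (r * (j : ℕ) + l)) ^ r = x ^ (r * (l : ℕ) + j) := by
        have : x ^ (r * (j : ℕ) * r) = x ^ (j : ℕ) := by
          rw [show r * (j : ℕ) * r = r * r * j by ring, pow_mul, h1]
        rw [← pow_mul, add_mul, pow_add, this, pow_add, mul_comm (l : ℕ)]; ring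
      have e2 : (hx ^ (i : ℕ)) ^ r * hx ^ (d - 1) = a ^ (i : ℕ) * hx ^ (d - 1 - (i : ℕ)) := by
        have e0 : d - 1 = i + (d - 1 - (i : ℕ)) := by have := i.2; omega
        rw [← h3]
        nth_rewrite 1 [e0]
        rw [pow_add]; ring
      rw [mul_pow, mul_pow, e1, mul_assoc, e2]; ring
    rcases mul_eq_zero.1 h4 with h5 | h5
    · exact pow_eq_zero_iff hr0.ne' |>.1 h5
    · exact absurd h5 (pow_ne_zero _ hx0)
  by_cases ha : a = 0
  · have hsub : P.card ≤ g.natDegree := by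
      apply Polynomial.card_le_degree_of_subset_roots
      intro x hx
      rw [mem_roots hg.ne_zero]
      have := (hP x hx).2
      rw [ha] at this
      exact pow_eq_zero_iff (mul_ne_zero (by omega) (by omega)) |>.1 this
    calc P.card ≤ D := hsub
      _ ≤ (3 * D + 5) * r := by nlinarith
      _ ≤ _ := Nat.le_add_left _ _
  · have hsub : P.card ≤ R.natDegree := by
      apply Polynomial.card_le_degree_of_subset_roots
      intro x hx
      rw [mem_roots hR]
      exact hroot x hx ha
    refine hsub.trans (hRdeg.trans ?_)
    have e3 : J - 1 = s + 2 * D + 3 := by omega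
    have e5 : B - 1 ≤ d * s := by nlinarith [Nat.sub_le B 1]
    have e6 : (d - 1) * (s * D) ≤ (d * s) * D := by
      rw [mul_assoc]; exact Nat.mul_le_mul_right _ (by omega)
    rw [e3]
    have : d * s ≤ r := by omega
    nlinarith

theorem wl_desc {F : Type*} [Field F] [Fintype F] {l : ℕ} : ∀ (n : ℕ) (g : F[X]), g.Monic →
    g.natDegree ≤ n →
    (∀ α : AlgebraicClosure F, l ∣ (g.map (algebraMap F (AlgebraicClosure F))).rootMultiplicity α) →
    ∃ k : F[X], k.Monic ∧ g = k ^ l := by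
  intro n
  induction n with
  | zero =>
    intro g hg hn _
    exact ⟨1, monic_one, by rw [one_pow]; exact hg.natDegree_eq_zero.1 (by omega)⟩
  | succ n ih =>
    intro g hg hn hα
    by_cases hu : g.natDegree = 0
    · exact ⟨1, monic_one, by rw [one_pow]; exact hg.natDegree_eq_zero.1 hu⟩
    have hnu : ¬ IsUnit g := fun h => hu (natDegree_eq_zero_of_isUnit h)
    obtain ⟨P, hPm, hPi, hPd⟩ := exists_monic_irreducible_factor g hnu
    have hfin : FiniteMultiplicity P g := FiniteMultiplicity.of_not_isUnit hPi.not_isUnit hg.ne_zero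
    obtain ⟨u, hu1, hu2⟩ := hfin.exists_eq_pow_mul_and_not_dvd
    set t := multiplicity P g with ht
    have ht0 : t ≠ 0 := by
      intro h0
      rw [h0, pow_zero, one_mul] at hu1
      rw [hu1] at hPd; exact hu2 hPd
    have hum : u.Monic := by
      have h1 := hg
      rw [hu1] at h1
      exact (hPm.pow t).of_mul_monic_left h1
    set i := algebraMap F (AlgebraicClosure F)
    have hg0 : (g.map i) ≠ 0 := (hg.map i).ne_zero
    have hrm : ∀ α, (g.map i).rootMultiplicity α =
        t * (P.map i).rootMultiplicity α + (u.map i).rootMultiplicity α := by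
      intro α
      have e : g.map i = (P.map i) ^ t * u.map i := by
        rw [← Polynomial.map_pow, ← Polynomial.map_mul, ← hu1]
      rw [e, rootMultiplicity_mul (by rw [← e]; exact hg0)]
      congr 1
      rw [← count_roots, roots_pow, Multiset.count_nsmul, count_roots]
    obtain ⟨α, hα0⟩ := IsAlgClosed.exists_aeval_eq_zero (AlgebraicClosure F) P
      (degree_pos_of_irreducible hPi).ne'
    have hP1 : (P.map i).rootMultiplicity α = 1 := by
      apply le_antisymm
      · exact rootMultiplicity_le_one_of_separable
          ((PerfectField.separable_of_irreducible hPi).map) α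
      · rw [Nat.one_le_iff_ne_zero, ← Nat.pos_iff_ne_zero, rootMultiplicity_pos (hPm.map i).ne_zero]
        rw [IsRoot.def, eval_map_algebraMap]; exact hα0
    have hu0 : (u.map i).rootMultiplicity α = 0 := by
      apply rootMultiplicity_eq_zero
      intro hr
      obtain ⟨A, B, hAB⟩ := (hPi.coprime_iff_not_dvd).2 hu2
      rw [IsRoot.def, eval_map_algebraMap] at hr
      have := congrArg (aeval α) hAB
      simp [hr, hα0] at this
    have hlt : l ∣ t := by
      have := hα α
      rwa [hrm, hP1, hu0, mul_one, add_zero] at this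
    obtain ⟨k, hk, hk2⟩ := ih u hum (by
      have h1 : g.natDegree = t * P.natDegree + u.natDegree := by
        conv_lhs => rw [hu1]
        rw [(hPm.pow t).natDegree_mul hum, hPm.natDegree_pow]
      have h2 := hPi.natDegree_pos
      have : 1 ≤ t * P.natDegree := Nat.mul_pos (Nat.pos_of_ne_zero ht0) h2
      omega) (by
      intro β
      have := hα β
      rw [hrm] at this
      exact (Nat.dvd_add_right (hlt.mul_right _)).1 this)
    obtain ⟨v, hv⟩ := hlt
    refine ⟨P ^ v * k, (hPm.pow v).mul hk, ?_⟩
    rw [hu1, mul_pow, ← hk2, ← pow_mul, hv, mul_comm l]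

theorem wl_reduce {F : Type*} [Field F] [Fintype F] {N : ℕ} (hN : 0 < N) {f : F[X]} (hf : f.Monic)
    (hnp : ¬ ∃ g : F[X], f = g ^ N) :
    ∃ (e d : ℕ) (g : F[X]), e * d = N ∧ 2 ≤ d ∧ f = g ^ e ∧ g.Monic ∧
      ∀ l : ℕ, l.Prime → l ∣ d → ∃ α : AlgebraicClosure F,
        ¬ l ∣ (g.map (algebraMap F (AlgebraicClosure F))).rootMultiplicity α := by
  have hex : ∃ d : ℕ, ∃ (e : ℕ) (g : F[X]), e * d = N ∧ f = g ^ e ∧ g.Monic :=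
    ⟨N, 1, f, by simp, by simp, hf⟩
  obtain ⟨e, g, h1, h2, h3⟩ := Nat.find_spec hex
  have hmin : ∀ d' < Nat.find hex, _ := fun d' h => Nat.find_min hex h
  set d := Nat.find hex
  have hd0 : d ≠ 0 := by rintro h; rw [h] at h1; omega
  refine ⟨e, d, g, h1, ?_, h2, h3, ?_⟩
  · by_contra hlt
    have : d = 1 := by omega
    rw [this, mul_one] at h1
    exact hnp ⟨g, h1 ▸ h2⟩
  · intro l hl hld
    by_contra hno
    push Not at hno
    obtain ⟨k, hk, hgk⟩ := wl_desc _ g h3 le_rfl hno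
    obtain ⟨v, hv⟩ := hld
    have hv0 : 0 < v := Nat.pos_of_ne_zero (by rintro rfl; omega)
    refine hmin v ?_ ⟨e * l, k, ?_, ?_, hk⟩
    · rw [hv]; have := hl.two_le; nlinarith
    · rw [← h1, hv]; ring
    · rw [h2, hgk, ← pow_mul, mul_comm]

theorem wl_abs {ι : Type*} (A : Finset ι) (hA : 0 < A.card) (N : ι → ℝ) (ψ : ι → ℂ)
    (h1 : ∀ a ∈ A, ‖ψ a‖ ≤ 1) (h0 : ∑ a ∈ A, ψ a = 0) {Q M D : ℝ} (hM : 0 ≤ M)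
    (hN : ∀ a ∈ A, N a ≤ Q / A.card + M) (hS : Q - D ≤ ∑ a ∈ A, N a) :
    ‖∑ a ∈ A, ψ a * (N a : ℂ)‖ ≤ 2 * A.card * M + D := by
  have hc : (A.card : ℝ) ≠ 0 := by positivity
  have e : ∑ a ∈ A, ψ a * (N a : ℂ) = ∑ a ∈ A, ψ a * ((N a - Q / A.card : ℝ) : ℂ) := by
    push_cast
    simp only [mul_sub, Finset.sum_sub_distrib, ← Finset.sum_mul, h0]
    ring
  rw [e]
  refine (norm_sum_le _ _).trans ?_
  have h2 : ∀ a ∈ A, ‖ψ a * ((N a - Q / A.card : ℝ) : ℂ)‖ ≤ 2 * M - (N a - Q / A.card) := by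
    intro a ha
    rw [norm_mul, Complex.norm_real, Real.norm_eq_abs]
    have h3 := hN a ha
    have h4 : |N a - Q / A.card| ≤ 2 * M - (N a - Q / A.card) := by
      rw [abs_le]; constructor <;> linarith
    calc _ ≤ 1 * |N a - Q / A.card| := by gcongr; exact h1 a ha
      _ ≤ _ := by linarith
  refine (Finset.sum_le_sum h2).trans ?_
  simp only [Finset.sum_sub_distrib, Finset.sum_const, nsmul_eq_mul]
  rw [mul_div_cancel₀ _ hc]
  linarith

noncomputable def wlFix (F : Type*) [Field F] [Fintype F] (n : ℕ) : Finset (AlgebraicClosure F) :=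
  (X ^ (Fintype.card F ^ n) - X : (AlgebraicClosure F)[X]).roots.toFinset

theorem mem_wlFix {F : Type*} [Field F] [Fintype F] {n : ℕ} (hn : n ≠ 0) (x : AlgebraicClosure F) :
    x ∈ wlFix F n ↔ x ^ (Fintype.card F ^ n) = x := by
  rw [wlFix, Multiset.mem_toFinset, mem_roots
    (FiniteField.X_pow_card_pow_sub_X_ne_zero _ hn Fintype.one_lt_card)]
  simp [sub_eq_zero]

theorem card_wlFix {F : Type*} [Field F] [Fintype F] {n : ℕ} (hn : n ≠ 0) :
    (wlFix F n).card = Fintype.card F ^ n := by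
  obtain ⟨p, hp⟩ := CharP.exists F
  obtain ⟨m, hpp, hm⟩ := FiniteField.card F p
  have : CharP (AlgebraicClosure F) p := charP_of_injective_algebraMap (algebraMap F _).injective p
  have hsep : Separable (X ^ (Fintype.card F ^ n) - X : (AlgebraicClosure F)[X]) := by
    apply galois_poly_separable p
    rw [hm]
    exact (dvd_pow_self p m.ne_zero).trans (dvd_pow_self _ hn)
  rw [wlFix, Multiset.toFinset_card_of_nodup (nodup_roots hsep),
    ← (IsAlgClosed.splits _).natDegree_eq_card_roots]
  exact FiniteField.X_pow_card_pow_sub_X_natDegree_eq _ hn Fintype.one_lt_card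

noncomputable def wlExt {F : Type*} [Field F] [Fintype F] (χ : MulChar F ℂ) (y : AlgebraicClosure F) : ℂ :=
  if h : ∃ a : F, algebraMap F (AlgebraicClosure F) a = y then χ h.choose else 0

theorem wlExt_alg {F : Type*} [Field F] [Fintype F] (χ : MulChar F ℂ) (a : F) :
    wlExt χ (algebraMap F (AlgebraicClosure F) a) = χ a := by
  have h : ∃ b : F, algebraMap F (AlgebraicClosure F) b = algebraMap F (AlgebraicClosure F) a := ⟨a, rfl⟩
  rw [wlExt, dif_pos h]
  congr 1
  exact (algebraMap F (AlgebraicClosure F)).injective h.choose_spec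

noncomputable def wlT {F : Type*} [Field F] [Fintype F] (χ : MulChar F ℂ) (f : F[X]) (n : ℕ) : ℂ :=
  ∑ x ∈ wlFix F n, wlExt χ ((aeval x f) ^ (∑ i ∈ range n, Fintype.card F ^ i))

theorem wl_expand {F : Type*} [Field F] [Fintype F] (g : F[X]) (k : ℕ) :
    g ^ (Fintype.card F ^ k) = expand F (Fintype.card F ^ k) g := by
  induction k with
  | zero => simp
  | succ k ih => rw [pow_succ, pow_mul, ih, mul_comm, expand_mul, FiniteField.expand_card]

theorem wl_aeval_pow {F : Type*} [Field F] [Fintype F] (g : F[X]) (k : ℕ) (x : AlgebraicClosure F) :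
    (aeval x g) ^ (Fintype.card F ^ k) = aeval (x ^ (Fintype.card F ^ k)) g := by
  rw [← map_pow, wl_expand, expand_aeval]

theorem wl_prim {F : Type*} [Field F] [Fintype F] {e d : ℕ} (h : e * d = Fintype.card F - 1) :
    ∃ ζ : F, IsPrimitiveRoot ζ d := by
  obtain ⟨u, hu⟩ := IsCyclic.exists_generator (α := Fˣ)
  have h1 : orderOf u = Fintype.card F - 1 := by
    rw [orderOf_eq_card_of_forall_mem_zpowers hu, Nat.card_eq_fintype_card, Fintype.card_units]
  have h2 : IsPrimitiveRoot (u : F) (Fintype.card F - 1) := by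
    rw [IsPrimitiveRoot.coe_units_iff, ← h1]; exact IsPrimitiveRoot.orderOf u
  exact ⟨_, h2.pow (by have := Fintype.one_lt_card (α := F); omega) h.symm⟩

theorem wl_sum_char {F : Type*} [Field F] [Fintype F] {χ : MulChar F ℂ}
    (hord : orderOf χ = Fintype.card F - 1) {e d : ℕ} (h : e * d = Fintype.card F - 1) (hd : 2 ≤ d) :
    ∑ a ∈ nthRootsFinset d (1 : F), χ a = 0 := by
  have hq := Fintype.one_lt_card (α := F)
  have he : 0 < e := Nat.pos_of_ne_zero (by rintro rfl; omega)
  have hne : χ ^ e ≠ 1 := by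
    apply pow_ne_one_of_lt_orderOf he.ne'
    rw [hord, ← h]; nlinarith
  obtain ⟨u, hu⟩ := MulChar.ne_one_iff.1 hne
  have hu1 : (u : F) ^ e ∈ nthRootsFinset d (1 : F) := by
    rw [mem_nthRootsFinset (by omega), ← pow_mul, h]
    exact FiniteField.pow_card_sub_one_eq_one _ u.ne_zero
  have hu2 : χ ((u : F) ^ e) ≠ 1 := by
    rwa [map_pow, ← MulChar.pow_apply_coe]
  set b := (u : F) ^ e
  have hb0 : b ≠ 0 := pow_ne_zero _ u.ne_zero
  have h3 : χ b * ∑ a ∈ nthRootsFinset d (1 : F), χ a = ∑ a ∈ nthRootsFinset d (1 : F), χ a := by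
    rw [Finset.mul_sum]
    refine Finset.sum_bij (fun a _ => b * a) ?_ ?_ ?_ ?_
    · intro a ha
      rw [mem_nthRootsFinset (by omega)] at *
      rw [mul_pow, ha, hu1, one_mul]
    · intro a _ a' _ h
      exact mul_left_cancel₀ hb0 h
    · intro a ha
      refine ⟨b⁻¹ * a, ?_, by field_simp⟩
      rw [mem_nthRootsFinset (by omega)] at *
      rw [mul_pow, ha, inv_pow, hu1]; simp
    · intro a _
      rw [map_mul]
  have h4 : (χ b - 1) * ∑ a ∈ nthRootsFinset d (1 : F), χ a = 0 := by
    rw [sub_mul, h3]; ring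
  rcases mul_eq_zero.1 h4 with h5 | h5
  · exact absurd (sub_eq_zero.1 h5) hu2
  · exact h5

theorem wl_Tbound {F : Type*} [Field F] [Fintype F] {χ : MulChar F ℂ}
    (hord : orderOf χ = Fintype.card F - 1) {f : F[X]} (hf : f.Monic)
    (hnp : ¬ ∃ g : F[X], f = g ^ (Fintype.card F - 1)) :
    ∃ (C : ℝ) (k0 : ℕ), ∀ k ≥ k0, ‖wlT χ f (2 * k)‖ ≤ C * (Fintype.card F : ℝ) ^ k := by
  have hq := Fintype.one_lt_card (α := F)
  set q := Fintype.card F with hqdef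
  obtain ⟨e, d, g, hed, hd, hfg, hg, hm⟩ := wl_reduce (by omega : 0 < q - 1) hf hnp
  obtain ⟨ζ, hζ⟩ := wl_prim hed
  obtain ⟨p, hp⟩ := CharP.exists F
  obtain ⟨m, hpp, hqm⟩ := FiniteField.card F p
  have : Fact p.Prime := ⟨hpp⟩
  have : CharP (AlgebraicClosure F) p := charP_of_injective_algebraMap (algebraMap F _).injective p
  set ι := algebraMap F (AlgebraicClosure F) with hι
  set D := g.natDegree with hD
  have hgD : (g.map ι).natDegree = D := natDegree_map _
  refine ⟨2 * d * (3 * D + 5) + D, d * (2 * D + 1) + 1, ?_⟩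
  intro k hk
  have hk0 : k ≠ 0 := by omega
  set r := q ^ k with hr
  have hkr : k < r := Nat.lt_pow_self hq
  have hdr : d ∣ r - 1 := by
    refine (Dvd.intro_left e hed).trans ?_
    have := Nat.sub_dvd_pow_sub_pow q 1 k
    rwa [one_pow] at this
  obtain ⟨s, hs⟩ := hdr
  have hrs : r = d * s + 1 := by omega
  have hs2 : 2 * D + 1 ≤ s := by
    by_contra hlt
    push Not at hlt
    have : d * s ≤ d * (2 * D + 1) := Nat.mul_le_mul_left _ hlt.le
    omega
  have hQ : q ^ (2 * k) = r * r := by rw [hr, ← pow_add]; congr 1; ring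
  have hgeom : e * ∑ i ∈ range (2 * k), q ^ i = s * (r + 1) := by
    have h1 := Nat.geomSum_eq (by omega : 2 ≤ q) (2 * k)
    have h2 : (∑ i ∈ range (2 * k), q ^ i) * (q - 1) = r * r - 1 := by
      rw [h1, ← hQ]
      apply Nat.div_mul_cancel
      have := Nat.sub_dvd_pow_sub_pow q 1 (2 * k)
      rwa [one_pow] at this
    have h3 : r * r - 1 = (r - 1) * (r + 1) := by
      rw [hrs]; simp; ring_nf; omega
    rw [h3, hs, ← hed] at h2
    apply Nat.eq_of_mul_eq_mul_left (by omega : 0 < d)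
    linarith
  have hk2 : 2 * k ≠ 0 := by omega
  set Z : AlgebraicClosure F → AlgebraicClosure F := fun x => (aeval x g) ^ (s * (r + 1)) with hZ
  have hT : wlT χ f (2 * k) = ∑ x ∈ wlFix F (2 * k), wlExt χ (Z x) := by
    rw [wlT]
    refine Finset.sum_congr rfl fun x _ => ?_
    rw [hfg, map_pow, ← pow_mul, hgeom]
  set A := nthRootsFinset d (1 : F) with hA
  have hAc : A.card = d := hζ.card_nthRootsFinset
  let Pt : F → Finset (AlgebraicClosure F) := fun a => (wlFix F (2 * k)).filter (fun x => Z x = ι a)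
  have hZA : ∀ x ∈ wlFix F (2 * k), aeval x g ≠ 0 → ∃ a ∈ A, Z x = ι a := by
    intro x hx hx0
    have h1 : (Z x) ^ d = 1 := by
      rw [hZ, ← pow_mul]
      have h2 := wl_aeval_pow g (2 * k) x
      rw [(mem_wlFix hk2 x).1 hx, ← hqdef, hQ] at h2
      have h3 : r * r = s * (r + 1) * d + 1 := by rw [hrs]; ring
      rw [h3, pow_succ] at h2
      exact mul_right_cancel₀ hx0 (by rw [h2, one_mul])
    have hζ' := hζ.map_of_injective ι.injective
    have : NeZero d := ⟨by omega⟩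
    obtain ⟨i, _, hi⟩ := hζ'.eq_pow_of_pow_eq_one h1
    refine ⟨ζ ^ i, ?_, by rw [map_pow, hi]⟩
    rw [hA, mem_nthRootsFinset (by omega), ← pow_mul, mul_comm, pow_mul, hζ.pow_eq_one, one_pow]
  have hA0 : ∀ a ∈ A, a ≠ 0 := by
    intro a ha h0
    rw [hA, mem_nthRootsFinset (by omega), h0, zero_pow (by omega)] at ha
    exact zero_ne_one ha
  have hdisj : (A : Set F).PairwiseDisjoint Pt := by
    intro a _ b _ hab
    simp only [Function.onFun]
    rw [Finset.disjoint_left]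
    intro x hx hx'
    have h1 := (Finset.mem_filter.1 hx).2
    have h2 := (Finset.mem_filter.1 hx').2
    exact hab (ι.injective (h1.symm.trans h2))
  have hsub : A.biUnion Pt ⊆ wlFix F (2 * k) := by
    intro x hx
    obtain ⟨a, _, ha⟩ := Finset.mem_biUnion.1 hx
    exact (Finset.mem_filter.1 ha).1
  have hzero : ∀ x ∈ wlFix F (2 * k), x ∉ A.biUnion Pt → aeval x g = 0 := by
    intro x hx hx'
    by_contra h0
    obtain ⟨a, ha, hax⟩ := hZA x hx h0
    exact hx' (Finset.mem_biUnion.2 ⟨a, ha, Finset.mem_filter.2 ⟨hx, hax⟩⟩)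
  have hT2 : wlT χ f (2 * k) = ∑ a ∈ A, χ a * (((Pt a).card : ℝ) : ℂ) := by
    rw [hT, ← Finset.sum_subset hsub, Finset.sum_biUnion hdisj]
    · refine Finset.sum_congr rfl fun a _ => ?_
      have : ∀ x ∈ Pt a, wlExt χ (Z x) = χ a := by
        intro x hx
        rw [(Finset.mem_filter.1 hx).2, wlExt_alg]
      rw [Finset.sum_congr rfl this, Finset.sum_const, nsmul_eq_mul, mul_comm]
      push_cast; rfl
    · intro x hx hx'
      have h0 := hzero x hx hx'
      simp only [hZ]
      rw [h0, zero_pow (mul_ne_zero (by omega) (by omega)), ← map_zero ι, wlExt_alg]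
      exact MulChar.map_zero χ
  have hcnt : q ^ (2 * k) ≤ (∑ a ∈ A, (Pt a).card) + D := by
    rw [← Finset.card_biUnion (fun a ha b hb hab => hdisj ha hb hab), ← card_wlFix hk2,
      ← Finset.card_sdiff_add_card_eq_card hsub, add_comm]
    gcongr
    rw [← hgD]
    apply card_le_degree_of_subset_roots
    intro x hx
    have hx := Finset.mem_sdiff.1 hx
    rw [mem_roots (hg.map ι).ne_zero, IsRoot.def, eval_map_algebraMap]
    exact hzero x hx.1 hx.2
  have hup : ∀ a ∈ A, (Pt a).card ≤ r * s + (3 * D + 5) * r := by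
    intro a ha
    have := wl_stepanov p hd (hζ.map_of_injective ι.injective) (hg.map ι) hm (r := r) (s := s)
      (n := m * k) (by rw [hr, pow_mul, ← hqm]) hrs (by
        rw [← Polynomial.map_pow, wl_expand, map_expand]) (by rw [hgD]; exact hs2) (ι a) (Pt a) (by
        intro x hx
        have hx := Finset.mem_filter.1 hx
        refine ⟨?_, ?_⟩
        · have := (mem_wlFix hk2 x).1 hx.1
          rwa [← hqdef, hQ] at this
        · rw [eval_map_algebraMap]; exact hx.2)
    rwa [hgD] at this
  have hd0 : (0 : ℝ) < d := by exact_mod_cast (by omega : 0 < d)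
  have hrR : ((r : ℕ) : ℝ) = (q : ℝ) ^ k := by rw [hr]; push_cast; rfl
  have hr1 : (1 : ℝ) ≤ r := by exact_mod_cast (by omega : 1 ≤ r)
  have := wl_abs A (by omega) (fun a => ((Pt a).card : ℝ)) (fun a => χ a) (fun a ha => by
      have h1 : χ a ^ (q - 1) = 1 := by
        rw [← map_pow, FiniteField.pow_card_sub_one_eq_one a (hA0 a ha), map_one]
      exact (Complex.norm_eq_one_of_pow_eq_one h1 (by omega)).le)
    (wl_sum_char hord hed hd) (Q := (r : ℝ) * r) (M := (3 * D + 5) * r) (D := D) (by positivity) (by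
      intro a ha
      have h1 : ((Pt a).card : ℝ) ≤ r * s + (3 * D + 5) * r := by exact_mod_cast hup a ha
      refine h1.trans ?_
      gcongr
      rw [hAc, le_div_iff₀ hd0]
      have : (r : ℝ) = d * s + 1 := by exact_mod_cast hrs
      nlinarith) (by
      have h1 : (r : ℝ) * r ≤ (∑ a ∈ A, ((Pt a).card : ℝ)) + D := by
        rw [hQ] at hcnt
        exact_mod_cast hcnt
      linarith)
  rw [hT2]
  refine this.trans ?_
  rw [hAc, ← hrR]
  have : (D : ℝ) ≤ D * r := le_mul_of_one_le_right (by positivity) hr1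
  linarith

theorem wl_range {F : Type*} [Field F] [Fintype F] (a : AlgebraicClosure F) (h : a ^ Fintype.card F = a) :
    ∃ b : F, algebraMap F (AlgebraicClosure F) b = a := by
  have h1 : (univ : Finset F).image (algebraMap F (AlgebraicClosure F)) = wlFix F 1 := by
    apply Finset.eq_of_subset_of_card_le
    · intro x hx
      obtain ⟨b, _, rfl⟩ := Finset.mem_image.1 hx
      rw [mem_wlFix one_ne_zero, pow_one, ← map_pow, FiniteField.pow_card]
    · rw [card_wlFix one_ne_zero, Finset.card_image_of_injective _ (algebraMap F _).injective]
      simp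
  have h2 : a ∈ wlFix F 1 := by rw [mem_wlFix one_ne_zero, pow_one, h]
  rw [← h1] at h2
  obtain ⟨b, _, hb⟩ := Finset.mem_image.1 h2
  exact ⟨b, hb⟩

noncomputable def wlFrob (F : Type*) [Field F] [Fintype F] : AlgebraicClosure F →+* AlgebraicClosure F :=
  (FiniteField.frobeniusAlgHom F (AlgebraicClosure F)).toRingHom

theorem wlFrob_apply {F : Type*} [Field F] [Fintype F] (x : AlgebraicClosure F) :
    wlFrob F x = x ^ Fintype.card F := rfl

theorem wlFrob_map {F : Type*} [Field F] [Fintype F] (h : F[X]) :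
    (h.map (algebraMap F (AlgebraicClosure F))).map (wlFrob F) = h.map (algebraMap F (AlgebraicClosure F)) := by
  rw [Polynomial.map_map]
  congr 1
  exact (FiniteField.frobeniusAlgHom F (AlgebraicClosure F)).comp_algebraMap

theorem wlFrob_iter {F : Type*} [Field F] [Fintype F] (x : AlgebraicClosure F) (i : ℕ) :
    (wlFrob F)^[i] x = x ^ (Fintype.card F ^ i) := by
  induction i with
  | zero => simp
  | succ i ih => rw [Function.iterate_succ_apply', ih, wlFrob_apply, ← pow_mul, pow_succ]

noncomputable def wlP {F : Type*} [Field F] [Fintype F] (n : ℕ) (x : AlgebraicClosure F) :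
    (AlgebraicClosure F)[X] :=
  ∏ i ∈ range n, (X - C (x ^ (Fintype.card F ^ i)))

theorem wlP_lift {F : Type*} [Field F] [Fintype F] {n : ℕ} (x : AlgebraicClosure F)
    (hx : x ^ (Fintype.card F ^ n) = x) :
    ∃ g : F[X], g.map (algebraMap F (AlgebraicClosure F)) = wlP n x := by
  have h1 : (wlP n x).map (wlFrob F) = wlP n x := by
    rw [wlP, Polynomial.map_prod]
    rcases n with _ | n
    · simp
    rw [Finset.prod_range_succ, Finset.prod_range_succ']
    congr 1
    · refine Finset.prod_congr rfl fun i _ => ?_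
      simp only [Polynomial.map_sub, map_X, map_C, wlFrob_apply, ← pow_mul, ← pow_succ]
    · simp only [Polynomial.map_sub, map_X, map_C, wlFrob_apply, ← pow_mul]
      rw [← pow_succ, hx]; simp
  rw [← mem_lifts, lifts_iff_coeff_lifts]
  intro k
  apply wl_range
  conv_rhs => rw [← h1]
  rw [coeff_map, wlFrob_apply]

noncomputable def wlPhi {F : Type*} [Field F] [Fintype F] (n : ℕ) (x : AlgebraicClosure F) : F[X] :=
  if h : ∃ g : F[X], g.map (algebraMap F (AlgebraicClosure F)) = wlP n x then h.choose else 1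

theorem wlPhi_map {F : Type*} [Field F] [Fintype F] {n : ℕ} (x : AlgebraicClosure F)
    (hx : x ^ (Fintype.card F ^ n) = x) :
    (wlPhi n x).map (algebraMap F (AlgebraicClosure F)) = wlP n x := by
  rw [wlPhi, dif_pos (wlP_lift x hx)]
  exact (wlP_lift x hx).choose_spec

theorem wlP_monic {F : Type*} [Field F] [Fintype F] (n : ℕ) (x : AlgebraicClosure F) :
    (wlP n x).Monic := monic_prod_of_monic _ _ fun _ _ => monic_X_sub_C _

theorem wlP_natDegree {F : Type*} [Field F] [Fintype F] (n : ℕ) (x : AlgebraicClosure F) :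
    (wlP n x).natDegree = n := by
  rw [wlP, natDegree_prod_of_monic _ _ fun _ _ => monic_X_sub_C _]
  simp only [natDegree_X_sub_C]; simp

theorem wlPhi_monic {F : Type*} [Field F] [Fintype F] {n : ℕ} (x : AlgebraicClosure F)
    (hx : x ^ (Fintype.card F ^ n) = x) : (wlPhi n x).Monic := by
  apply monic_of_injective (algebraMap F (AlgebraicClosure F)).injective
  rw [wlPhi_map x hx]; exact wlP_monic n x

theorem wlPhi_natDegree {F : Type*} [Field F] [Fintype F] {n : ℕ} (x : AlgebraicClosure F)
    (hx : x ^ (Fintype.card F ^ n) = x) : (wlPhi n x).natDegree = n := by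
  rw [← natDegree_map (algebraMap F (AlgebraicClosure F)), wlPhi_map x hx, wlP_natDegree]

theorem wl_periodic {F : Type*} [Field F] [Fintype F] (x : AlgebraicClosure F) :
    0 < Function.minimalPeriod (wlFrob F) x := by
  have hint : IsIntegral F x := Algebra.IsIntegral.isIntegral x
  have : FiniteDimensional F (IntermediateField.adjoin F {x}) :=
    IntermediateField.adjoin.finiteDimensional hint
  have : Finite (IntermediateField.adjoin F {x}) := Module.finite_of_finite F
  have := Fintype.ofFinite (IntermediateField.adjoin F {x})
  have hc := Module.card_eq_pow_finrank (K := F) (V := IntermediateField.adjoin F {x})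
  have hp := FiniteField.pow_card (⟨x, IntermediateField.mem_adjoin_simple_self F x⟩ : IntermediateField.adjoin F {x})
  rw [hc] at hp
  have hp' := congrArg Subtype.val hp
  simp only [SubmonoidClass.mk_pow] at hp'
  apply Function.minimalPeriod_pos_of_mem_periodicPts
  apply Function.mk_mem_periodicPts (n := Module.finrank F (IntermediateField.adjoin F {x})) Module.finrank_pos
  rw [Function.IsPeriodicPt, Function.IsFixedPt, wlFrob_iter, hp']

theorem wlP_mul {F : Type*} [Field F] [Fintype F] (n t : ℕ) (x : AlgebraicClosure F)
    (hx : x ^ (Fintype.card F ^ n) = x) : wlP (t * n) x = (wlP n x) ^ t := by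
  induction t with
  | zero => simp [wlP]
  | succ t ih =>
    have h1 : (x ^ (Fintype.card F ^ (t * n))) = x := by
      clear ih
      induction t with
      | zero => simp
      | succ t ih => rw [add_mul, pow_add, pow_mul, ih, one_mul, hx]
    rw [pow_succ, ← ih, wlP, wlP, wlP, add_mul, one_mul, Finset.prod_range_add]
    congr 1
    refine Finset.prod_congr rfl fun i _ => ?_
    rw [pow_add, pow_mul, h1]

theorem wl_dvd_iter {F : Type*} [Field F] [Fintype F] (h : F[X]) (x : AlgebraicClosure F) (t i : ℕ)
    (hd : (X - C x) ^ t ∣ h.map (algebraMap F (AlgebraicClosure F))) :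
    (X - C (x ^ (Fintype.card F ^ i))) ^ t ∣ h.map (algebraMap F (AlgebraicClosure F)) := by
  induction i with
  | zero => simpa using hd
  | succ i ih =>
    have := Polynomial.map_dvd (wlFrob F) ih
    rw [wlFrob_map] at this
    simpa only [Polynomial.map_pow, Polynomial.map_sub, map_X, map_C, wlFrob_apply, ← pow_mul, ← pow_succ] using this

theorem wlP_dvd_iff {F : Type*} [Field F] [Fintype F] (h : F[X]) (x : AlgebraicClosure F) (t : ℕ) :
    (wlP (Function.minimalPeriod (wlFrob F) x) x) ^ t ∣ h.map (algebraMap F (AlgebraicClosure F)) ↔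
      (X - C x) ^ t ∣ h.map (algebraMap F (AlgebraicClosure F)) := by
  have hn := wl_periodic x
  constructor
  · intro hd
    refine dvd_trans (pow_dvd_pow_of_dvd ?_ t) hd
    have := Finset.dvd_prod_of_mem (fun i => (X - C (x ^ (Fintype.card F ^ i)))) (Finset.mem_range.2 hn)
    simpa [wlP] using this
  · intro hd
    rw [wlP, ← Finset.prod_pow]
    apply Finset.prod_dvd_of_coprime
    · intro i hi j hj hij
      apply IsCoprime.pow
      apply isCoprime_X_sub_C_of_isUnit_sub
      rw [isUnit_iff_ne_zero, sub_ne_zero]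
      intro he
      rw [← wlFrob_iter, ← wlFrob_iter] at he
      exact hij (Function.iterate_injOn_Iio_minimalPeriod (by simpa using hi) (by simpa using hj) he)
    · intro i _
      exact wl_dvd_iter h x t i hd

theorem wl_count {F : Type*} [Field F] [Fintype F] {h : F[X]} (hh : h.Monic) (x : AlgebraicClosure F) :
    ((Finset.Icc 1 h.natDegree).filter
      (fun j => x ^ (Fintype.card F ^ j) = x ∧ wlPhi j x ∣ h)).card =
      (h.map (algebraMap F (AlgebraicClosure F))).rootMultiplicity x := by
  set ι := algebraMap F (AlgebraicClosure F)
  set n := Function.minimalPeriod (wlFrob F) x with hn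
  have hn0 : 0 < n := wl_periodic x
  have hper : ∀ j, x ^ (Fintype.card F ^ j) = x ↔ n ∣ j := by
    intro j
    rw [← Function.isPeriodicPt_iff_minimalPeriod_dvd, Function.IsPeriodicPt, Function.IsFixedPt, wlFrob_iter]
  have hH : h.map ι ≠ 0 := (hh.map ι).ne_zero
  have hkey : ∀ t, wlPhi (t * n) x ∣ h ↔ t ≤ (h.map ι).rootMultiplicity x := by
    intro t
    rw [le_rootMultiplicity_iff hH, ← wlP_dvd_iff, ← wlP_mul _ _ _ ((hper n).2 dvd_rfl),
      ← wlPhi_map x ((hper _).2 (dvd_mul_left n t)), Polynomial.map_dvd_map']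
  have : (Finset.Icc 1 h.natDegree).filter
      (fun j => x ^ (Fintype.card F ^ j) = x ∧ wlPhi j x ∣ h) =
      (Finset.Icc 1 ((h.map ι).rootMultiplicity x)).image (fun t => t * n) := by
    ext j
    simp only [Finset.mem_filter, Finset.mem_Icc, Finset.mem_image]
    constructor
    · rintro ⟨⟨h1, h2⟩, h3, h4⟩
      obtain ⟨t, rfl⟩ := (hper j).1 h3
      rw [mul_comm] at h4
      refine ⟨t, ⟨?_, (hkey t).1 h4⟩, mul_comm _ _⟩
      exact Nat.pos_of_ne_zero (by rintro rfl; simp at h1)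
    · rintro ⟨t, ⟨h1, h2⟩, rfl⟩
      have h3 := (hkey t).2 h2
      have h4 := (hper _).2 (dvd_mul_left n t)
      refine ⟨⟨Nat.mul_pos h1 hn0, ?_⟩, h4, h3⟩
      have := natDegree_le_of_dvd h3 hh.ne_zero
      rwa [wlPhi_natDegree x h4] at this
  rw [this, Finset.card_image_of_injective _ (fun a b hab => Nat.eq_of_mul_eq_mul_right hn0 hab)]
  simp

theorem wl_finLT (F : Type*) [Field F] [Fintype F] (n : ℕ) : {h : F[X] | h.degree < n}.Finite := by
  have : Finite (degreeLT F n) := Finite.of_equiv _ (degreeLTEquiv F n).symm.toEquiv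
  refine (Set.toFinite (degreeLT F n : Set F[X])).subset ?_
  intro h hh
  exact mem_degreeLT.2 hh

noncomputable def wlLT (F : Type*) [Field F] [Fintype F] (n : ℕ) : Finset F[X] := (wl_finLT F n).toFinset

theorem mem_wlLT {F : Type*} [Field F] [Fintype F] {n : ℕ} {h : F[X]} : h ∈ wlLT F n ↔ h.degree < n := by
  simp [wlLT]

noncomputable def wlA (F : Type*) [Field F] [Fintype F] (n : ℕ) : Finset F[X] :=
  (wlLT F (n + 1)).filter (fun h => h.Monic ∧ h.natDegree = n)

theorem mem_wlA {F : Type*} [Field F] [Fintype F] {n : ℕ} {h : F[X]} :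
    h ∈ wlA F n ↔ h.Monic ∧ h.natDegree = n := by
  rw [wlA, Finset.mem_filter, mem_wlLT]
  constructor
  · exact fun h => h.2
  · intro hh
    refine ⟨?_, hh⟩
    rw [degree_eq_natDegree hh.1.ne_zero, hh.2]
    exact_mod_cast Nat.lt_succ_self n

theorem wl_count_total {F : Type*} [Field F] [Fintype F] {h : F[X]} (hh : h.Monic) :
    ∑ j ∈ Finset.Icc 1 h.natDegree, ((wlFix F j).filter (fun x => wlPhi j x ∣ h)).card = h.natDegree := by
  set ι := algebraMap F (AlgebraicClosure F)
  have hH : h.map ι ≠ 0 := (hh.map ι).ne_zero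
  have h1 : ∀ j ∈ Finset.Icc 1 h.natDegree, ((wlFix F j).filter (fun x => wlPhi j x ∣ h)).card =
      ∑ x ∈ (h.map ι).roots.toFinset, if (x ^ (Fintype.card F ^ j) = x ∧ wlPhi j x ∣ h) then 1 else 0 := by
    intro j hj
    have hj0 : 1 ≤ j := (Finset.mem_Icc.1 hj).1
    rw [Finset.sum_boole, Nat.cast_id]
    congr 1
    ext x
    simp only [Finset.mem_filter, Multiset.mem_toFinset, mem_roots hH, mem_wlFix (by omega : j ≠ 0)]
    constructor
    · rintro ⟨h1, h2⟩
      refine ⟨?_, h1, h2⟩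
      have h3 := Polynomial.map_dvd ι h2
      rw [wlPhi_map x h1] at h3
      rw [← dvd_iff_isRoot]
      refine dvd_trans ?_ h3
      have := Finset.dvd_prod_of_mem (fun i => (X - C (x ^ (Fintype.card F ^ i)))) (Finset.mem_range.2 hj0)
      simpa [wlP] using this
    · rintro ⟨_, h1, h2⟩
      exact ⟨h1, h2⟩
  rw [Finset.sum_congr rfl h1, Finset.sum_comm]
  have h2 : ∀ x ∈ (h.map ι).roots.toFinset, (∑ j ∈ Finset.Icc 1 h.natDegree,
      if (x ^ (Fintype.card F ^ j) = x ∧ wlPhi j x ∣ h) then 1 else 0) = (h.map ι).roots.count x := by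
    intro x _
    rw [Finset.sum_boole, Nat.cast_id, count_roots]
    exact wl_count hh x
  rw [Finset.sum_congr rfl h2, Multiset.toFinset_sum_count_eq,
    ← (IsAlgClosed.splits _).natDegree_eq_card_roots, natDegree_map]

theorem wl_Lident {F : Type*} [Field F] [Fintype F] (lam : F[X] →* ℂ) (k : ℕ) :
    (k : ℂ) * ∑ h ∈ wlA F k, lam h =
      ∑ j ∈ Finset.Icc 1 k, (∑ x ∈ wlFix F j, lam (wlPhi j x)) * ∑ h ∈ wlA F (k - j), lam h := by
  have h1 : ∀ j ∈ Finset.Icc 1 k, (∑ x ∈ wlFix F j, lam (wlPhi j x)) * ∑ h ∈ wlA F (k - j), lam h =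
      ∑ h ∈ wlA F k, lam h * (((wlFix F j).filter (fun x => wlPhi j x ∣ h)).card : ℂ) := by
    intro j hj
    obtain ⟨hj1, hjk⟩ := Finset.mem_Icc.1 hj
    rw [Finset.sum_mul]
    have h2 : ∀ x ∈ wlFix F j, lam (wlPhi j x) * ∑ h ∈ wlA F (k - j), lam h =
        ∑ h ∈ wlA F k, if wlPhi j x ∣ h then lam h else 0 := by
      intro x hx
      rw [mem_wlFix (by omega)] at hx
      have hmon := wlPhi_monic x hx
      have hdeg := wlPhi_natDegree x hx
      rw [Finset.mul_sum, ← Finset.sum_filter]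
      refine Finset.sum_bij (fun h _ => wlPhi j x * h) ?_ ?_ ?_ ?_
      · intro h hh
        rw [mem_wlA] at hh
        rw [Finset.mem_filter, mem_wlA]
        refine ⟨⟨hmon.mul hh.1, ?_⟩, dvd_mul_right _ _⟩
        rw [hmon.natDegree_mul hh.1, hdeg, hh.2]; omega
      · intro h _ h' _ he
        exact mul_left_cancel₀ hmon.ne_zero he
      · intro h hh
        rw [Finset.mem_filter, mem_wlA] at hh
        obtain ⟨⟨h3, h4⟩, h', rfl⟩ := hh
        have h5 : h'.Monic := hmon.of_mul_monic_left h3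
        refine ⟨h', ?_, rfl⟩
        rw [mem_wlA]
        refine ⟨h5, ?_⟩
        rw [hmon.natDegree_mul h5, hdeg] at h4; omega
      · intro h _
        rw [map_mul]
    rw [Finset.sum_congr rfl h2, Finset.sum_comm]
    refine Finset.sum_congr rfl fun h _ => ?_
    rw [← Finset.sum_filter, Finset.sum_const, nsmul_eq_mul, mul_comm]
  rw [Finset.sum_congr rfl h1, Finset.sum_comm, Finset.mul_sum]
  refine Finset.sum_congr rfl fun h hh => ?_
  rw [← Finset.mul_sum, mul_comm]
  congr 1
  have hh := mem_wlA.1 hh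
  have := wl_count_total hh.1
  rw [hh.2] at this
  exact_mod_cast this.symm

noncomputable def wlRho {F : Type*} [Field F] (f h : F[X]) : F :=
  resultant f h f.natDegree h.natDegree

theorem wlRho_spec {F : Type*} [Field F] {f : F[X]} (hf : f.Monic) (h : F[X]) :
    algebraMap F (AlgebraicClosure F) (wlRho f h) =
      ((f.map (algebraMap F (AlgebraicClosure F))).roots.map (fun α => aeval α h)).prod := by
  rw [wlRho, ← resultant_map_map]
  have := resultant_eq_prod_eval (f.map (algebraMap F (AlgebraicClosure F)))
    (h.map (algebraMap F (AlgebraicClosure F))) h.natDegree (natDegree_map_le) (IsAlgClosed.splits _)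
  rw [natDegree_map, (hf.map _).leadingCoeff, one_pow, one_mul] at this
  rw [this]
  simp only [eval_map_algebraMap]

noncomputable def wlLam {F : Type*} [Field F] (χ : MulChar F ℂ) {f : F[X]} (hf : f.Monic) : F[X] →* ℂ where
  toFun h := χ (wlRho f h)
  map_one' := by
    have : wlRho f 1 = 1 := by
      apply (algebraMap F (AlgebraicClosure F)).injective
      rw [wlRho_spec hf]; simp
    rw [this, map_one]
  map_mul' a b := by
    have : wlRho f (a * b) = wlRho f a * wlRho f b := by
      apply (algebraMap F (AlgebraicClosure F)).injective
      rw [map_mul, wlRho_spec hf, wlRho_spec hf, wlRho_spec hf, ← Multiset.prod_map_mul]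
      simp only [map_mul]
    rw [this, map_mul]

theorem wlLam_apply {F : Type*} [Field F] (χ : MulChar F ℂ) {f : F[X]} (hf : f.Monic) (h : F[X]) :
    wlLam χ hf h = χ (wlRho f h) := rfl

theorem wl_char_ne {F : Type*} [Field F] (χ : MulChar F ℂ) {a : F} (ha : a ≠ 0) : χ a ≠ 0 :=
  ((isUnit_iff_ne_zero.2 ha).map χ).ne_zero

theorem wl_prod_roots {F : Type*} [Field F] {f : F[X]} (hf : f.Monic) (y : AlgebraicClosure F) :
    ((f.map (algebraMap F (AlgebraicClosure F))).roots.map (fun α => α - y)).prod =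
      (-1) ^ f.natDegree * aeval y f := by
  have hs := IsAlgClosed.splits (f.map (algebraMap F (AlgebraicClosure F)))
  have h1 := hs.eval_eq_prod_roots_of_monic (hf.map _) y
  have h2 := hs.natDegree_eq_card_roots
  rw [natDegree_map] at h2
  rw [← eval_map_algebraMap, h1, h2]
  have h3 : ∀ s : Multiset (AlgebraicClosure F), (s.map (fun α => α - y)).prod =
      (-1) ^ s.card * (s.map (fun α => y - α)).prod := by
    intro s
    induction s using Multiset.induction_on with
    | empty => simp
    | cons a s ih => simp only [Multiset.map_cons, Multiset.prod_cons, Multiset.card_cons, ih]; ring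
  exact h3 _

theorem wl_rho_phi {F : Type*} [Field F] [Fintype F] {f : F[X]} (hf : f.Monic) {n : ℕ}
    (x : AlgebraicClosure F) (hx : x ^ (Fintype.card F ^ n) = x) :
    (aeval x f) ^ (∑ i ∈ range n, Fintype.card F ^ i) =
      algebraMap F (AlgebraicClosure F) ((-1) ^ (n * f.natDegree) * wlRho f (wlPhi n x)) := by
  rw [map_mul, wlRho_spec hf]
  have h1 : ∀ α : AlgebraicClosure F, aeval α (wlPhi n x) = ∏ i ∈ range n, (α - x ^ (Fintype.card F ^ i)) := by
    intro α
    rw [← eval_map_algebraMap, wlPhi_map x hx, wlP, eval_prod]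
    simp
  have h2 : ((f.map (algebraMap F (AlgebraicClosure F))).roots.map (fun α => aeval α (wlPhi n x))).prod =
      ∏ i ∈ range n, ((-1) ^ f.natDegree * (aeval x f) ^ (Fintype.card F ^ i)) := by
    simp only [h1]
    rw [Multiset.prod_map_prod]
    refine Finset.prod_congr rfl fun i _ => ?_
    rw [wl_prod_roots hf, wl_aeval_pow]
  rw [h2, Finset.prod_mul_distrib, Finset.prod_const, Finset.card_range, Finset.prod_pow_eq_pow_sum,
    ← mul_assoc]
  have h3 : algebraMap F (AlgebraicClosure F) ((-1) ^ (n * f.natDegree)) * ((-1) ^ f.natDegree) ^ n = 1 := by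
    rw [map_pow, map_neg, map_one, ← pow_mul, mul_comm n, ← mul_pow]; simp
  rw [h3, one_mul]

noncomputable def wlS {F : Type*} [Field F] [Fintype F] (χ : MulChar F ℂ) {f : F[X]} (hf : f.Monic) (n : ℕ) : ℂ :=
  ∑ x ∈ wlFix F n, wlLam χ hf (wlPhi n x)

theorem wlT_eq {F : Type*} [Field F] [Fintype F] (χ : MulChar F ℂ) {f : F[X]} (hf : f.Monic) {n : ℕ}
    (hn : n ≠ 0) : wlT χ f n = χ (-1) ^ (n * f.natDegree) * wlS χ hf n := by
  rw [wlT, wlS, Finset.mul_sum]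
  refine Finset.sum_congr rfl fun x hx => ?_
  rw [wl_rho_phi hf x ((mem_wlFix hn x).1 hx), wlExt_alg, map_mul, map_pow, wlLam_apply]

theorem wlT_norm {F : Type*} [Field F] [Fintype F] (χ : MulChar F ℂ) {f : F[X]} (hf : f.Monic) {n : ℕ}
    (hn : n ≠ 0) : ‖wlT χ f n‖ = ‖wlS χ hf n‖ := by
  rw [wlT_eq χ hf hn, norm_mul, norm_pow]
  have h1 : χ (-1) ^ 2 = 1 := by rw [← map_pow]; simp
  rw [Complex.norm_eq_one_of_pow_eq_one h1 two_ne_zero, one_pow, one_mul]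

theorem wl_exists_u {F : Type*} [Field F] [Fintype F] {χ : MulChar F ℂ}
    (hord : orderOf χ = Fintype.card F - 1) {f : F[X]} (hf : f.Monic)
    (hnp : ¬ ∃ g : F[X], f = g ^ (Fintype.card F - 1)) :
    ∃ u : F[X], wlLam χ hf u ≠ 0 ∧ wlLam χ hf u ≠ 1 := by
  by_contra hcon
  push Not at hcon
  obtain ⟨C, k0, hC⟩ := wl_Tbound hord hf hnp
  have hq := Fintype.one_lt_card (α := F)
  set q := Fintype.card F with hqdef
  obtain ⟨k1, hk1⟩ := exists_nat_gt (|C| + f.natDegree)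
  set k := max k0 (max k1 1) with hk
  have hkk0 : k0 ≤ k := le_max_left _ _
  have hkk1 : k1 ≤ k := (le_max_left _ _).trans (le_max_right _ _)
  have hk1' : 1 ≤ k := (le_max_right _ _).trans (le_max_right _ _)
  have hk2 : 2 * k ≠ 0 := by omega
  have hb := hC k hkk0
  rw [wlT_norm χ hf hk2] at hb
  have hS : wlS χ hf (2 * k) = (((wlFix F (2 * k)).filter (fun x => aeval x f ≠ 0)).card : ℂ) := by
    rw [wlS, ← Finset.sum_boole]
    refine Finset.sum_congr rfl fun x hx => ?_
    have hxx := (mem_wlFix hk2 x).1 hx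
    have h1 := wl_rho_phi hf x hxx
    by_cases h0 : aeval x f = 0
    · rw [if_neg (by simpa using h0), wlLam_apply]
      rw [h0, zero_pow, eq_comm, map_eq_zero] at h1
      · have : wlRho f (wlPhi (2 * k) x) = 0 := by
          rcases mul_eq_zero.1 h1 with h | h
          · exact absurd h (pow_ne_zero _ (by simp))
          · exact h
        rw [this]; exact MulChar.map_zero χ
      · have : ∑ i ∈ range (2 * k), q ^ i ≠ 0 := by
          have : q ^ 0 ≤ ∑ i ∈ range (2 * k), q ^ i :=
            Finset.single_le_sum (f := fun i => q ^ i) (fun _ _ => Nat.zero_le _) (Finset.mem_range.2 (by omega))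
          simp at this; omega
        exact this
    · rw [if_pos h0]
      apply hcon
      rw [wlLam_apply]
      apply wl_char_ne
      intro h2
      rw [h2, mul_zero, map_zero] at h1
      exact pow_ne_zero _ h0 h1
  have hcard : q ^ (2 * k) ≤ ((wlFix F (2 * k)).filter (fun x => aeval x f ≠ 0)).card + f.natDegree := by
    rw [← card_wlFix hk2, ← Finset.card_filter_add_card_filter_not (s := wlFix F (2 * k)) (fun x => aeval x f ≠ 0)]
    gcongr
    rw [← natDegree_map (algebraMap F (AlgebraicClosure F))]
    apply card_le_degree_of_subset_roots
    intro x hx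
    have hx := (Finset.mem_filter.1 hx).2
    rw [mem_roots (hf.map _).ne_zero, IsRoot.def, eval_map_algebraMap]
    simpa using hx
  rw [hS, Complex.norm_natCast] at hb
  have hcardR : ((q : ℝ) ^ k) * (q : ℝ) ^ k ≤
      (((wlFix F (2 * k)).filter (fun x => aeval x f ≠ 0)).card : ℝ) + f.natDegree := by
    rw [← pow_add, ← two_mul]; exact_mod_cast hcard
  have hkr : (k : ℝ) < (q : ℝ) ^ k := by exact_mod_cast Nat.lt_pow_self hq
  have hkk : (k1 : ℝ) ≤ k := by exact_mod_cast hkk1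
  have hr1 : (1 : ℝ) ≤ (q : ℝ) ^ k := one_le_pow₀ (by exact_mod_cast hq.le)
  have h5 : C * (q : ℝ) ^ k ≤ |C| * (q : ℝ) ^ k := by gcongr; exact le_abs_self C
  have h6 : (f.natDegree : ℝ) ≤ f.natDegree * (q : ℝ) ^ k := le_mul_of_one_le_right (by positivity) hr1
  nlinarith

theorem wl_rad {F : Type*} [Field F] [Fintype F] (f : F[X]) :
    ∃ R : F[X], R.map (algebraMap F (AlgebraicClosure F)) =
      ∏ α ∈ (f.map (algebraMap F (AlgebraicClosure F))).roots.toFinset, (X - C α) := by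
  set Z := (f.map (algebraMap F (AlgebraicClosure F))).roots.toFinset with hZ
  have hinj : Function.Injective (wlFrob F) := (wlFrob F).injective
  have himg : Z.image (wlFrob F) = Z := by
    apply Finset.eq_of_subset_of_card_le
    · intro y hy
      obtain ⟨x, hx, rfl⟩ := Finset.mem_image.1 hy
      rw [hZ, Multiset.mem_toFinset, mem_roots'] at hx ⊢
      refine ⟨hx.1, ?_⟩
      rw [IsRoot.def, ← wlFrob_map, eval_map_apply, hx.2.eq_zero, map_zero]
    · rw [Finset.card_image_of_injective _ hinj]
  have h1 : (∏ α ∈ Z, (X - C α)).map (wlFrob F) = ∏ α ∈ Z, (X - C α) := by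
    rw [Polynomial.map_prod]
    conv_rhs => rw [← himg, Finset.prod_image (fun a _ b _ h => hinj h)]
    simp
  rw [← mem_lifts, lifts_iff_coeff_lifts]
  intro k
  apply wl_range
  conv_rhs => rw [← h1]
  rw [coeff_map, wlFrob_apply]

theorem wl_ck_zero {F : Type*} [Field F] [Fintype F] (χ : MulChar F ℂ) {f : F[X]} (hf : f.Monic)
    {u : F[X]} (hu0 : wlLam χ hf u ≠ 0) (hu1 : wlLam χ hf u ≠ 1) {k : ℕ}
    (hk : (f.map (algebraMap F (AlgebraicClosure F))).roots.toFinset.card ≤ k) :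
    ∑ h ∈ wlA F k, wlLam χ hf h = 0 := by
  set ι := algebraMap F (AlgebraicClosure F)
  obtain ⟨R, hR⟩ := wl_rad f
  set Z := (f.map ι).roots.toFinset with hZ
  have hRm : R.Monic := by
    apply monic_of_injective ι.injective
    rw [hR]; exact monic_prod_of_monic _ _ fun _ _ => monic_X_sub_C _
  have hRd : R.natDegree = Z.card := by
    rw [← natDegree_map ι, hR, natDegree_prod_of_monic _ _ fun _ _ => monic_X_sub_C _]
    simp
  have hRz : ∀ α ∈ Z, aeval α R = 0 := by
    intro α hα
    rw [← eval_map_algebraMap, hR, eval_prod]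
    exact Finset.prod_eq_zero hα (by simp)
  have hmod : ∀ h : F[X], ∀ α ∈ Z, aeval α (h %ₘ R) = aeval α h := by
    intro h α hα
    conv_rhs => rw [← modByMonic_add_div h R]
    rw [map_add, map_mul, hRz α hα]; simp
  have hdeg : ∀ h : F[X], (h %ₘ R).degree < R.degree := fun h => degree_modByMonic_lt h hRm
  have hlam : ∀ h h' : F[X], (∀ α ∈ Z, aeval α h = aeval α h') → wlLam χ hf h = wlLam χ hf h' := by
    intro h h' hh
    rw [wlLam_apply, wlLam_apply]
    congr 1
    apply ι.injective
    rw [wlRho_spec hf, wlRho_spec hf]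
    congr 1
    apply Multiset.map_congr rfl
    intro α hα
    exact hh α (Multiset.mem_toFinset.2 hα)
  have hune : ∀ α ∈ Z, aeval α u ≠ 0 := by
    intro α hα h0
    apply hu0
    have : ι (wlRho f u) = 0 := by
      rw [wlRho_spec hf]
      apply Multiset.prod_eq_zero
      rw [Multiset.mem_map]
      exact ⟨α, Multiset.mem_toFinset.1 hα, h0⟩
    rw [wlLam_apply, (map_eq_zero ι).1 this]
    exact MulChar.map_zero χ
  have hmodeq : ∀ h h' : F[X], (∀ α ∈ Z, aeval α h = aeval α h') → h %ₘ R = h' %ₘ R := by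
    intro h h' hh
    rw [← sub_eq_zero, ← Polynomial.map_eq_zero ι]
    apply eq_zero_of_degree_lt_of_eval_finset_eq_zero Z
    · rw [degree_map]
      refine lt_of_lt_of_eq (lt_of_le_of_lt (degree_sub_le _ _) (max_lt (hdeg h) (hdeg h'))) ?_
      rw [degree_eq_natDegree hRm.ne_zero, hRd]
    · intro α hα
      rw [eval_map_algebraMap, map_sub, hmod h α hα, hmod h' α hα, hh α hα, sub_self]
  let G : F[X] → F[X] := fun h => h + ((u * h) %ₘ R - h %ₘ R)
  have hGe : ∀ h, ∀ α ∈ Z, aeval α (G h) = aeval α (u * h) := by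
    intro h α hα
    simp only [G]
    rw [map_add, map_sub, hmod _ α hα, hmod _ α hα]; ring
  have hGinj : Function.Injective G := by
    intro h h' hh
    have h1 : ∀ α ∈ Z, aeval α h = aeval α h' := by
      intro α hα
      have h2 := hGe h α hα
      rw [hh, hGe h' α hα, map_mul, map_mul] at h2
      exact (mul_left_cancel₀ (hune α hα) h2).symm
    have h3 := hmodeq h h' h1
    have h4 := hmodeq (u * h) (u * h') (by intro α hα; rw [map_mul, map_mul, h1 α hα])
    simp only [G] at hh
    rw [h3, h4] at hh
    exact add_right_cancel hh
  have hGA : ∀ h ∈ wlA F k, G h ∈ wlA F k := by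
    intro h hh
    rw [mem_wlA] at *
    have h1 : ((u * h) %ₘ R - h %ₘ R).degree < h.degree := by
      refine lt_of_lt_of_le (lt_of_le_of_lt (degree_sub_le _ _) (max_lt (hdeg _) (hdeg _))) ?_
      rw [degree_eq_natDegree hRm.ne_zero, degree_eq_natDegree hh.1.ne_zero, hRd, hh.2]
      exact_mod_cast hk
    exact ⟨hh.1.add_of_left h1, by rw [← hh.2]; exact natDegree_add_eq_left_of_degree_lt h1⟩
  have himg : (wlA F k).image G = wlA F k := by
    apply Finset.eq_of_subset_of_card_le
    · intro y hy
      obtain ⟨x, hx, rfl⟩ := Finset.mem_image.1 hy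
      exact hGA x hx
    · rw [Finset.card_image_of_injective _ hGinj]
  have h1 : wlLam χ hf u * ∑ h ∈ wlA F k, wlLam χ hf h = ∑ h ∈ wlA F k, wlLam χ hf h := by
    conv_rhs => rw [← himg, Finset.sum_image (fun a _ b _ h => hGinj h)]
    rw [Finset.mul_sum]
    refine Finset.sum_congr rfl fun h _ => ?_
    rw [← map_mul]
    exact (hlam _ _ (hGe h)).symm
  have h4 : (wlLam χ hf u - 1) * ∑ h ∈ wlA F k, wlLam χ hf h = 0 := by
    rw [sub_mul, h1]; ring
  rcases mul_eq_zero.1 h4 with h5 | h5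
  · exact absurd (sub_eq_zero.1 h5) hu1
  · exact h5

theorem wl_c0 {F : Type*} [Field F] [Fintype F] (χ : MulChar F ℂ) {f : F[X]} (hf : f.Monic) :
    ∑ h ∈ wlA F 0, wlLam χ hf h = 1 := by
  have : wlA F 0 = {1} := by
    ext h
    rw [mem_wlA, Finset.mem_singleton]
    constructor
    · rintro ⟨h1, h2⟩; exact h1.natDegree_eq_zero.1 h2
    · rintro rfl; exact ⟨monic_one, natDegree_one⟩
  rw [this]; simp

theorem wlT_one {F : Type*} [Field F] [Fintype F] (χ : MulChar F ℂ) (f : F[X]) :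
    wlT χ f 1 = ∑ x : F, χ (f.eval x) := by
  have h1 : (univ : Finset F).image (algebraMap F (AlgebraicClosure F)) = wlFix F 1 := by
    apply Finset.eq_of_subset_of_card_le
    · intro x hx
      obtain ⟨b, _, rfl⟩ := Finset.mem_image.1 hx
      rw [mem_wlFix one_ne_zero, pow_one, ← map_pow, FiniteField.pow_card]
    · rw [card_wlFix one_ne_zero, Finset.card_image_of_injective _ (algebraMap F _).injective]
      simp
  rw [wlT, ← h1, Finset.sum_image (fun a _ b _ h => (algebraMap F _).injective h)]
  refine Finset.sum_congr rfl fun x _ => ?_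
  simp only [Finset.sum_range_one, pow_zero, pow_one]
  rw [aeval_algebraMap_apply, wlExt_alg]; simp

theorem wl_growth (b : Multiset ℂ) {C : ℝ} {k0 : ℕ}
    (h : ∀ k ≥ k0, ‖(b.map (fun z => z ^ k)).sum‖ ≤ C) : ∀ z ∈ b, ‖z‖ ≤ 1 := by
  intro z hz
  by_contra hlt
  push Not at hlt
  set B := b.toFinset with hB
  have hzB : z ∈ B := Multiset.mem_toFinset.2 hz
  set G : ℂ[X] := ∏ w ∈ B.erase z, (X - Polynomial.C w) with hG
  have hGz : G.eval z ≠ 0 := by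
    rw [hG, eval_prod, Finset.prod_ne_zero_iff]
    intro w hw
    simp only [eval_sub, eval_X, eval_C]
    exact sub_ne_zero.2 (Finset.ne_of_mem_erase hw).symm
  have hG0 : ∀ w ∈ B, w ≠ z → G.eval w = 0 := by
    intro w hw hwz
    rw [hG, eval_prod]
    exact Finset.prod_eq_zero (Finset.mem_erase.2 ⟨hwz, hw⟩) (by simp)
  have hu : ∀ k, (b.map (fun z => z ^ k)).sum = ∑ w ∈ B, (b.count w : ℂ) * w ^ k := by
    intro k
    rw [Finset.sum_multiset_map_count]; simp [hB]
  have key : ∀ k, ∑ t ∈ range (G.natDegree + 1), G.coeff t * (b.map (fun z => z ^ (k + t))).sum =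
      (b.count z : ℂ) * G.eval z * z ^ k := by
    intro k
    calc _ = ∑ t ∈ range (G.natDegree + 1), ∑ w ∈ B, (b.count w : ℂ) * w ^ k * (G.coeff t * w ^ t) := by
          refine Finset.sum_congr rfl fun t _ => ?_
          rw [hu, Finset.mul_sum]
          refine Finset.sum_congr rfl fun w _ => ?_
          rw [pow_add]; ring
      _ = ∑ w ∈ B, (b.count w : ℂ) * w ^ k * G.eval w := by
          rw [Finset.sum_comm]
          refine Finset.sum_congr rfl fun w _ => ?_
          rw [← Finset.mul_sum, ← eval_eq_sum_range]
      _ = (b.count z : ℂ) * z ^ k * G.eval z := by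
          apply Finset.sum_eq_single_of_mem z hzB
          intro w hw hwz
          rw [hG0 w hw hwz, mul_zero]
      _ = _ := by ring
  set M := ∑ t ∈ range (G.natDegree + 1), ‖G.coeff t‖ * C with hM
  set a := ‖(b.count z : ℂ) * G.eval z‖ with ha
  have ha0 : 0 < a := by
    rw [ha, norm_pos_iff]
    refine mul_ne_zero ?_ hGz
    exact_mod_cast (Multiset.count_pos.2 hz).ne'
  have hbd : ∀ k ≥ k0, a * ‖z‖ ^ k ≤ M := by
    intro k hk
    rw [ha, ← norm_pow, ← norm_mul, ← key k]
    refine (norm_sum_le _ _).trans (Finset.sum_le_sum fun t _ => ?_)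
    rw [norm_mul]
    gcongr
    exact h _ (by omega)
  obtain ⟨n, hn⟩ := pow_unbounded_of_one_lt (M / a) hlt
  have h1 := hbd (max n k0) (le_max_right _ _)
  have h2 : ‖z‖ ^ n ≤ ‖z‖ ^ (max n k0) := pow_le_pow_right₀ hlt.le (le_max_left _ _)
  rw [div_lt_iff₀ ha0] at hn
  nlinarith

theorem wl_newton (s : Multiset ℂ) (k : ℕ) :
    (k : ℂ) * ((-1) ^ k * s.esymm k) =
      - ∑ j ∈ Finset.Icc 1 k, (s.map (fun z => z ^ j)).sum * ((-1) ^ (k - j) * s.esymm (k - j)) := by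
  have h := congrArg (MvPolynomial.aeval (fun x : s.ToType => (x.1 : ℂ)))
    (MvPolynomial.mul_esymm_eq_sum s.ToType ℂ k)
  have he : ∀ n, MvPolynomial.aeval (fun x : s.ToType => (x.1 : ℂ)) (MvPolynomial.esymm s.ToType ℂ n) = s.esymm n := by
    intro n
    rw [MvPolynomial.aeval_esymm_eq_multiset_esymm]
    congr 1
    exact Multiset.map_univ_coe s
  have hp : ∀ n, MvPolynomial.aeval (fun x : s.ToType => (x.1 : ℂ)) (MvPolynomial.psum s.ToType ℂ n) =
      (s.map (fun z => z ^ n)).sum := by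
    intro n
    simp only [MvPolynomial.psum, map_sum, map_pow, MvPolynomial.aeval_X]
    conv_rhs => rw [← Multiset.map_univ_coe s, Multiset.map_map]
    rfl
  simp only [map_mul, map_natCast, map_pow, map_neg, map_one, map_sum, he, hp] at h
  have h2 : (k : ℂ) * ((-1) ^ k * s.esymm k) = (-1) ^ k * (k * s.esymm k) := by ring
  rw [h2, h, ← mul_assoc, ← pow_add]
  have h3 : ((-1 : ℂ)) ^ (k + (k + 1)) = -1 := by
    rw [← add_assoc, pow_succ, ← two_mul, pow_mul]; simp
  rw [h3, neg_one_mul]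
  congr 1
  refine Finset.sum_bij (fun a _ => a.2) ?_ ?_ ?_ ?_
  · intro a ha
    rw [Finset.mem_filter, Finset.HasAntidiagonal.mem_antidiagonal] at ha
    rw [Finset.mem_Icc]; omega
  · rintro ⟨a1, a2⟩ ha ⟨b1, b2⟩ hb hab
    rw [Finset.mem_filter, Finset.HasAntidiagonal.mem_antidiagonal] at ha hb
    simp only at ha hb hab
    rw [Prod.mk.injEq]; omega
  · intro j hj
    rw [Finset.mem_Icc] at hj
    refine ⟨(k - j, j), ?_, rfl⟩
    rw [Finset.mem_filter, Finset.HasAntidiagonal.mem_antidiagonal]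
    simp only; omega
  · rintro ⟨a1, a2⟩ ha
    rw [Finset.mem_filter, Finset.HasAntidiagonal.mem_antidiagonal] at ha
    simp only at ha ⊢
    rw [show k - a2 = a1 by omega]; ring

theorem wl_final (c S : ℕ → ℂ) {n : ℕ} (hc0 : c 0 = 1) (hcz : ∀ k, n < k → c k = 0)
    (hrec : ∀ k : ℕ, (k : ℂ) * c k = ∑ j ∈ Finset.Icc 1 k, S j * c (k - j))
    {q : ℝ} (hq : 0 < q) {C : ℝ} {k0 : ℕ} (hS : ∀ k ≥ k0, ‖S (2 * k)‖ ≤ C * q ^ k) :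
    ‖S 1‖ ≤ n * Real.sqrt q := by
  set Q : ℂ[X] := ∑ k ∈ range (n + 1), Polynomial.C (c k) * X ^ (n - k) with hQ
  have hcoeff : ∀ k ≤ n, Q.coeff (n - k) = c k := by
    intro k hk
    rw [hQ, finsetSum_coeff, Finset.sum_eq_single_of_mem k (Finset.mem_range.2 (by omega))]
    · simp
    · intro j hj hjk
      rw [Finset.mem_range] at hj
      rw [coeff_C_mul, coeff_X_pow, if_neg (by omega), mul_zero]
  have hdeg : Q.natDegree ≤ n := by
    rw [hQ]
    apply natDegree_sum_le_of_forall_le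
    intro j _
    exact (natDegree_C_mul_X_pow_le _ _).trans (Nat.sub_le _ _)
  have hlc : Q.coeff n = 1 := by have := hcoeff 0 (Nat.zero_le _); rwa [Nat.sub_zero, hc0] at this
  have hQm : Q.Monic := monic_of_natDegree_le_of_coeff_eq_one n hdeg hlc
  have hnd : Q.natDegree = n := le_antisymm hdeg (le_natDegree_of_ne_zero (by rw [hlc]; exact one_ne_zero))
  set s := Q.roots with hs
  have hcard : s.card = n := by rw [hs, ← (IsAlgClosed.splits Q).natDegree_eq_card_roots, hnd]
  have hce : ∀ k, c k = (-1) ^ k * s.esymm k := by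
    intro k
    rcases le_or_gt k n with hk | hk
    · rw [← hcoeff k hk, coeff_eq_esymm_roots_of_card (by rw [← hs, hcard, hnd]) (by omega), hQm.leadingCoeff, hnd,
        show n - (n - k) = k by omega, one_mul]
    · rw [hcz k hk, Multiset.esymm, Multiset.powersetCard_eq_empty _ (by omega)]; simp
  have hSp : ∀ k, 1 ≤ k → S k = - (s.map (fun z => z ^ k)).sum := by
    intro k
    induction k using Nat.strong_induction_on with
    | _ k ih =>
      intro hk
      have h1 := hrec k
      have h2 := wl_newton s k
      rw [← hce] at h2
      simp only [← hce] at h2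
      rw [h1, ← Finset.sum_neg_distrib] at h2
      obtain ⟨k', rfl⟩ : ∃ k', k = k' + 1 := ⟨k - 1, by omega⟩
      rw [Finset.sum_Icc_succ_top (by omega), Finset.sum_Icc_succ_top (by omega)] at h2
      have h3 : ∑ j ∈ Finset.Icc 1 k', S j * c (k' + 1 - j) =
          ∑ j ∈ Finset.Icc 1 k', -((s.map (fun z => z ^ j)).sum * c (k' + 1 - j)) := by
        refine Finset.sum_congr rfl fun j hj => ?_
        rw [Finset.mem_Icc] at hj
        rw [ih j (by omega) hj.1]; ring
      rw [h3] at h2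
      have h4 := add_left_cancel h2
      simpa [hc0] using h4
  have hroot : ∀ z ∈ s, ‖z‖ ≤ Real.sqrt q := by
    intro z hz
    have hg := wl_growth (s.map (fun z => z ^ 2 / (q : ℂ))) (C := C) (k0 := max k0 1) (by
      intro k hk
      have hk1 : k0 ≤ k := (le_max_left _ _).trans hk
      have hk2 : 1 ≤ k := (le_max_right _ _).trans hk
      have h1 := hS k hk1
      rw [hSp (2 * k) (by omega), norm_neg] at h1
      have h2 : ((s.map (fun z => z ^ 2 / (q : ℂ))).map (fun z => z ^ k)).sum =
          (s.map (fun z => z ^ (2 * k))).sum * ((q : ℂ) ^ k)⁻¹ := by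
        rw [Multiset.map_map, ← Multiset.sum_map_mul_right]
        congr 1
        apply Multiset.map_congr rfl
        intro w _
        simp only [Function.comp]
        rw [div_pow, ← pow_mul, div_eq_mul_inv]
      rw [h2, norm_mul, norm_inv, norm_pow, Complex.norm_real, Real.norm_of_nonneg hq.le,
        ← div_eq_mul_inv, div_le_iff₀ (by positivity)]
      exact h1) (z ^ 2 / (q : ℂ)) (Multiset.mem_map_of_mem _ hz)
    rw [norm_div, norm_pow, Complex.norm_real, Real.norm_of_nonneg hq.le, div_le_one hq] at hg
    exact Real.le_sqrt_of_sq_le hg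
  rw [hSp 1 le_rfl, norm_neg]
  simp only [pow_one, Multiset.map_id']
  have hms : ∀ t : Multiset ℂ, (∀ z ∈ t, ‖z‖ ≤ Real.sqrt q) → ‖t.sum‖ ≤ t.card * Real.sqrt q := by
    intro t
    induction t using Multiset.induction_on with
    | empty => simp
    | cons a t ih =>
      intro h
      rw [Multiset.sum_cons, Multiset.card_cons]
      have h1 := ih fun z hz => h z (Multiset.mem_cons_of_mem hz)
      have h2 := h a (Multiset.mem_cons_self a t)
      have h3 := norm_add_le a t.sum
      push_cast
      linarith
  have := hms s hroot
  rwa [hcard] at this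

/-- Weil bound: Let F be a finite field with q elements, χ a multiplicative
character of F of order d = q-1 (extended by χ(0)=0), and f ∈ F[x] a monic polynomial
with m distinct roots in the algebraic closure which is not a d-th power in F[x]. Then
|∑_{x∈F} χ(f(x))| ≤ (m-1)·√q. -/
theorem stmt_7 {F : Type*} [Field F] [Fintype F]
    (χ : MulChar F ℂ) (hord : orderOf χ = Fintype.card F - 1)
    (f : Polynomial F) (hmonic : f.Monic) (m : ℕ)
    (hroots : ((f.map (algebraMap F (AlgebraicClosure F))).roots.toFinset.card = m))
    (hnotpow : ¬ ∃ g : Polynomial F, f = g ^ (Fintype.card F - 1)) :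
    ‖∑ x : F, χ (f.eval x)‖ ≤ ((m : ℝ) - 1) * Real.sqrt (Fintype.card F) := by
  obtain ⟨u, hu0, hu1⟩ := wl_exists_u hord hmonic hnotpow
  obtain ⟨C, k0, hC⟩ := wl_Tbound hord hmonic hnotpow
  have hm1 : 1 ≤ m := by
    by_contra h
    have h0 : m = 0 := by omega
    have h1 := wl_ck_zero χ hmonic hu0 hu1 (k := 0) (by rw [hroots, h0])
    rw [wl_c0] at h1
    exact one_ne_zero h1
  have hq : (0 : ℝ) < Fintype.card F := by exact_mod_cast Fintype.card_pos
  have h := wl_final (fun k => ∑ h ∈ wlA F k, wlLam χ hmonic h) (wlS χ hmonic) (n := m - 1)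
    (wl_c0 χ hmonic) (fun k hk => wl_ck_zero χ hmonic hu0 hu1 (by rw [hroots]; omega))
    (fun k => wl_Lident (wlLam χ hmonic) k) hq (C := C) (k0 := max k0 1) (by
      intro k hk
      have hk1 : k0 ≤ k := (le_max_left _ _).trans hk
      have hk2 : 1 ≤ k := (le_max_right _ _).trans hk
      rw [← wlT_norm χ hmonic (by omega)]
      exact hC k hk1)
  rw [← wlT_norm χ hmonic one_ne_zero, wlT_one, Nat.cast_sub hm1, Nat.cast_one] at h
  exact h
end

section
/- Let F = F_q be a finite field, χ a multiplicative character of order d = q-1, and χ_a = χ^a, χ_b = χ^b with 0 < a < q-1 and 0 ≤ b < q-1. Let S be a non-empty subset of F and A : F → F any function with A(y) ≠ y for all y ∈ F. Then Σ_{y∈F} |Σ_{s∈S} χ_a(s+y)χ_b(s+A(y))| ≤ 11^{1/4} · q^{5/4} · |S|^{1/2}. -/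
open Finset

open Polynomial in
theorem kummer_irred {K : Type*} [Field K] {d : ℕ} (hd : 0 < d) {ζ : K}
    (hζ : IsPrimitiveRoot ζ d) {θ : K} (hθ : θ ≠ 0)
    (h : ∀ n, n ∣ d → 1 < n → ∀ b : K, b ^ n ≠ θ) : Irreducible (X ^ d - C θ) := by
  obtain ⟨w, hw⟩ := IsAlgClosed.exists_pow_nat_eq (algebraMap K (AlgebraicClosure K) θ) hd
  have hint : IsIntegral K w := ⟨X ^ d - C θ, monic_X_pow_sub_C θ hd.ne', by simp [hw]⟩
  have hw0 : w ≠ 0 := by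
    rintro rfl
    rw [zero_pow hd.ne'] at hw
    exact hθ (by simpa using hw.symm)
  have hdvd : minpoly K w ∣ X ^ d - C θ := minpoly.dvd _ _ (by simp [hw])
  set r := (minpoly K w).natDegree with hr
  have hN : ∃ k : K, algebraMap K (AlgebraicClosure K) k = w ^ r := by
    let L := IntermediateField.adjoin K {w}
    let g : L := IntermediateField.AdjoinSimple.gen K w
    have hg : (algebraMap L (AlgebraicClosure K)) g = w := IntermediateField.AdjoinSimple.algebraMap_gen K w
    have hgd : g ^ d = algebraMap K L θ := by
      apply (algebraMap L (AlgebraicClosure K)).injective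
      rw [map_pow, hg, hw]
      rfl
    have : FiniteDimensional K L := IntermediateField.adjoin.finiteDimensional hint
    have hfr : Module.finrank K L = r := IntermediateField.adjoin.finrank hint
    have h1 : (Algebra.norm K g) ^ d = θ ^ r := by
      rw [← map_pow, hgd, Algebra.norm_algebraMap, hfr]
    set k := Algebra.norm K g
    have hk0 : k ≠ 0 := by
      intro h0
      rw [h0, zero_pow hd.ne'] at h1
      exact pow_ne_zero _ hθ h1.symm
    have hk0' : algebraMap K (AlgebraicClosure K) k ≠ 0 := by simpa using hk0
    have h2 : (w ^ r / algebraMap K (AlgebraicClosure K) k) ^ d = 1 := by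
      rw [div_pow, ← map_pow, h1, ← pow_mul, mul_comm r d, pow_mul, hw, ← map_pow]
      exact div_self (by simpa using pow_ne_zero _ hθ)
    have : NeZero d := ⟨hd.ne'⟩
    obtain ⟨i, _, hi⟩ := (hζ.map_of_injective (algebraMap K (AlgebraicClosure K)).injective).eq_pow_of_pow_eq_one h2
    refine ⟨ζ ^ i * k, ?_⟩
    rw [map_mul, map_pow, hi, div_mul_cancel₀ _ hk0']
  have hG : ∃ b : K, algebraMap K (AlgebraicClosure K) b = w ^ (Nat.gcd r d) := by
    obtain ⟨k, hk⟩ := hN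
    refine ⟨k ^ (Nat.gcdA r d) * θ ^ (Nat.gcdB r d), ?_⟩
    rw [map_mul, map_zpow₀, map_zpow₀, hk, ← hw, ← zpow_natCast, ← zpow_natCast, ← zpow_natCast,
      ← zpow_mul, ← zpow_mul, ← zpow_add₀ hw0, ← Nat.gcd_eq_gcd_ab]
  have hrd : r = d := by
    obtain ⟨b, hb⟩ := hG
    have hgd : Nat.gcd r d ∣ d := Nat.gcd_dvd_right _ _
    have hbp : b ^ (d / Nat.gcd r d) = θ := by
      apply (algebraMap K (AlgebraicClosure K)).injective
      rw [map_pow, hb, ← pow_mul, Nat.mul_div_cancel' hgd, hw]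
    have h1 : ¬ 1 < d / Nat.gcd r d := fun h1 => h _ (Nat.div_dvd_of_dvd hgd) h1 b hbp
    have hrle : r ≤ d := by
      have := natDegree_le_of_dvd hdvd (monic_X_pow_sub_C θ hd.ne').ne_zero
      rwa [natDegree_X_pow_sub_C] at this
    have h2 : d ≤ Nat.gcd r d := by
      have := Nat.div_mul_cancel hgd
      have h3 : d / Nat.gcd r d ≤ 1 := by omega
      nlinarith
    have h4 : Nat.gcd r d ≤ r := Nat.gcd_le_left _ (minpoly.natDegree_pos hint)
    omega
  have : minpoly K w = X ^ d - C θ := by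
    refine (eq_of_monic_of_dvd_of_natDegree_le (minpoly.monic hint) (monic_X_pow_sub_C θ hd.ne') hdvd ?_).symm
    rw [natDegree_X_pow_sub_C, ← hr, hrd]
  exact this ▸ minpoly.irreducible hint

open Polynomial in
theorem not_pow_aux {F : Type*} [Field F] {Kf : Type*} [Field Kf] [Algebra F[X][X] Kf]
    [IsFractionRing F[X][X] Kf] (g : F[X]) (hg : g ≠ 0) (d : ℕ)
    (hgcd : ∀ n, n ∣ d → 1 < n → ∃ c : F, ¬ n ∣ g.rootMultiplicity c)
    (n : ℕ) (hn : n ∣ d) (hn1 : 1 < n) (b : Kf) :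
    b ^ n ≠ algebraMap F[X][X] Kf (C g) / algebraMap F[X][X] Kf (g.map C) := by
  classical
  intro hb
  have hgz : (C g : F[X][X]) ≠ 0 := C_ne_zero.mpr hg
  have hgx : (g.map C : F[X][X]) ≠ 0 := by
    rwa [Ne, Polynomial.map_eq_zero_iff (C_injective)]
  have hinj := IsFractionRing.injective F[X][X] Kf
  have hgz' : algebraMap F[X][X] Kf (C g) ≠ 0 :=
    (map_ne_zero_iff _ hinj).mpr hgz
  have hgx' : algebraMap F[X][X] Kf (g.map C) ≠ 0 :=
    (map_ne_zero_iff _ hinj).mpr hgx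
  have hb0 : b ≠ 0 := by
    rintro rfl
    rw [zero_pow (by omega)] at hb
    exact div_ne_zero hgz' hgx' hb.symm
  have h1 : (algebraMap F[X][X] Kf (C g) / b) ^ n = algebraMap F[X][X] Kf (g.map C * (C g) ^ (n - 1)) := by
    rw [div_pow, hb, map_mul, map_pow]
    obtain ⟨m, rfl⟩ : ∃ m, n = m + 1 := ⟨n - 1, by omega⟩
    simp only [Nat.add_sub_cancel]
    field_simp
    ring
  obtain ⟨β, hβ⟩ := IsIntegrallyClosed.exists_algebraMap_eq_of_isIntegral_pow (R := F[X][X]) (n := n) (by omega)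
    (x := algebraMap F[X][X] Kf (C g) / b) (by rw [h1]; exact isIntegral_algebraMap)
  rw [← hβ, ← map_pow] at h1
  have h2 : β ^ n = g.map C * (C g) ^ (n - 1) := hinj h1
  obtain ⟨c, hc⟩ := hgcd n hn hn1
  apply hc
  have h3 := congrArg (fun f => Multiset.count (C c) (roots f)) h2
  rw [roots_mul (mul_ne_zero hgx (pow_ne_zero _ hgz)), roots_pow, ← C_pow, roots_C, add_zero, Multiset.count_nsmul, count_roots, count_roots] at h3
  rw [eq_rootMultiplicity_map (C_injective) c, ← h3]
  exact dvd_mul_right _ _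

open Polynomial in
/-- the specialization `z ↦ X ^ R`, `x ↦ X`. -/
noncomputable def spec {F : Type*} [Field F] (R : ℕ) : F[X][X] →+* F[X] :=
  eval₂RingHom (expand F R).toRingHom X

open Polynomial in
theorem spec_inj {F : Type*} [Field F] (R : ℕ) (Φ : F[X][X]) (hΦ : Φ.natDegree < R)
    (h : spec R Φ = 0) : Φ = 0 := by
  have hR : 0 < R := by omega
  ext j i
  by_cases hj : j < R
  · have h1 := congrArg (fun f => coeff f (i * R + j)) h
    simp only [spec, coe_eval₂RingHom, coeff_zero] at h1
    rw [eval₂_eq_sum_range' _ hΦ, finsetSum_coeff, Finset.sum_eq_single j] at h1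
    · simpa [coeff_mul_X_pow', coeff_expand hR, hR] using h1
    · intro k hk hkj
      have hk : k < R := Finset.mem_range.mp hk
      simp only [AlgHom.toRingHom_eq_coe, RingHom.coe_coe, coeff_mul_X_pow', coeff_expand hR]
      split_ifs with h2 h3
      · exfalso
        apply hkj
        have h4 : (i * R + j) ≡ k [MOD R] := ((Nat.modEq_iff_dvd' h2).mpr h3).symm
        have h5 : j ≡ k [MOD R] := by
          have : i * R + j ≡ j [MOD R] := by simp [Nat.ModEq]
          exact this.symm.trans h4
        rw [Nat.ModEq, Nat.mod_eq_of_lt hj, Nat.mod_eq_of_lt hk] at h5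
        exact h5.symm
      · rfl
      · rfl
    · intro h2
      exact absurd (Finset.mem_range.mpr hj) h2
  · rw [coeff_eq_zero_of_natDegree_lt (lt_of_lt_of_le hΦ (not_lt.mp hj))]
    simp

theorem cyc_mul {S : Type*} [CommRing S] {d : ℕ} [NeZero d] (x z w : S) (hw : x * w ^ d = z)
    (h : Fin d → S) (j : Fin d) :
    ∑ l : Fin d, (if j ≤ l then x else z) * h (l - j) * w ^ (l : ℕ) =
      x * w ^ (j : ℕ) * ∑ k : Fin d, h k * w ^ (k : ℕ) := by
  rw [Finset.mul_sum]
  refine Fintype.sum_equiv (Equiv.subRight j) _ _ fun l => ?_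
  obtain ⟨k, rfl⟩ : ∃ k, l = k + j := ⟨l - j, by simp⟩
  have hkj : (Equiv.subRight j) (k + j) = k := by simp
  rw [hkj, add_sub_cancel_right]
  have hk := k.isLt
  have hj := j.isLt
  by_cases hlt : (k : ℕ) + j < d
  · have h1 : ((k + j : Fin d) : ℕ) = k + j := Fin.val_add_eq_of_add_lt hlt
    have h2 : j ≤ k + j := by rw [Fin.le_def, h1]; omega
    rw [if_pos h2, h1, pow_add]
    ring
  · have h1 : ((k + j : Fin d) : ℕ) = k + j - d := by
      rw [Fin.val_add, Nat.mod_eq_sub_mod (by omega), Nat.mod_eq_of_lt (by omega)]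
    have h2 : ¬ j ≤ k + j := by rw [Fin.le_def, h1]; omega
    rw [if_neg h2, h1, ← hw]
    have h3 : w ^ (j : ℕ) * w ^ (k : ℕ) = w ^ d * w ^ ((k : ℕ) + j - d) := by
      rw [← pow_add, ← pow_add]; congr 1; omega
    linear_combination (-x * h k) * h3

theorem cyc_kernel {Kf E : Type*} [Field Kf] [Field E] {d : ℕ} [NeZero d] (ι : Kf →+* E)
    (x z : Kf) (w : E) (hw : ι x * w ^ d = ι z) (hx : x ≠ 0)
    (hlin : ∀ u : Fin d → Kf, ∑ k : Fin d, ι (u k) * w ^ (k : ℕ) = 0 → u = 0)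
    (h : Fin d → Kf)
    (hdet : (Matrix.of fun j l : Fin d => (if j ≤ l then x else z) * h (l - j)).det = 0) :
    h = 0 := by
  obtain ⟨u, hu0, hu⟩ := Matrix.exists_vecMul_eq_zero_iff.mpr hdet
  have key : (∑ j : Fin d, ι (u j) * w ^ (j : ℕ)) * ι x *
      (∑ k : Fin d, ι (h k) * w ^ (k : ℕ)) = 0 := by
    have h1 : ∑ j : Fin d, ι (u j) * ∑ l : Fin d, ι ((if j ≤ l then x else z) * h (l - j)) * w ^ (l : ℕ) = 0 := by
      simp_rw [Finset.mul_sum]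
      rw [Finset.sum_comm]
      refine Finset.sum_eq_zero fun l _ => ?_
      have h2 := congrArg ι (congrFun hu l)
      simp only [Matrix.vecMul, dotProduct, Matrix.of_apply, Pi.zero_apply,
        map_zero, map_sum] at h2
      rw [← zero_mul (w ^ (l : ℕ)), ← h2, Finset.sum_mul]
      refine Finset.sum_congr rfl fun j _ => by rw [map_mul ι (u j)]; ring
    rw [Finset.sum_mul, Finset.sum_mul, ← h1]
    refine Finset.sum_congr rfl fun j _ => ?_
    have h3 := cyc_mul (ι x) (ι z) w hw (fun k => ι (h k)) j
    rw [mul_assoc, mul_assoc, mul_left_comm (w ^ (j : ℕ)), ← mul_assoc (ι x), ← h3]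
    congr 1
    refine Finset.sum_congr rfl fun l _ => ?_
    rw [map_mul]
    split_ifs <;> rfl
  rcases mul_eq_zero.mp key with h1 | h1
  · rcases mul_eq_zero.mp h1 with h1 | h1
    · exact absurd (hlin u h1) hu0
    · exact absurd ((map_eq_zero ι).mp h1) hx
  · exact hlin h h1

open Polynomial in
theorem cyc_kernel' {Kf : Type*} [Field Kf] {d : ℕ} [NeZero d]
    (x z : Kf) (hx : x ≠ 0) (hirr : Irreducible (X ^ d - C (z / x))) (h : Fin d → Kf)
    (hdet : (Matrix.of fun j l : Fin d => (if j ≤ l then x else z) * h (l - j)).det = 0) :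
    h = 0 := by
  have hd : 0 < d := Nat.pos_of_ne_zero (NeZero.ne d)
  generalize hθ : z / x = θ at hirr
  have : Fact (Irreducible (X ^ d - C θ)) := ⟨hirr⟩
  have hwd : (AdjoinRoot.root (X ^ d - C θ)) ^ d = AdjoinRoot.of (X ^ d - C θ) θ := by
    have h1 : AdjoinRoot.mk (X ^ d - C θ) (X ^ d - C θ) = 0 := AdjoinRoot.mk_self
    rw [map_sub, map_pow, AdjoinRoot.mk_X, AdjoinRoot.mk_C, sub_eq_zero] at h1
    exact h1
  refine cyc_kernel (AdjoinRoot.of (X ^ d - C θ)) x z (AdjoinRoot.root (X ^ d - C θ)) ?_ hx ?_ h hdet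
  · have hz : x * θ = z := by rw [← hθ, mul_div_cancel₀ _ hx]
    rw [hwd, ← map_mul, hz]
  · intro u hu
    have h1 : AdjoinRoot.mk (X ^ d - C θ) (∑ k : Fin d, C (u k) * X ^ (k : ℕ)) = 0 := by
      simp only [map_sum, map_mul, map_pow, AdjoinRoot.mk_X, AdjoinRoot.mk_C]
      exact hu
    rw [AdjoinRoot.mk_eq_zero] at h1
    have h2 : (∑ k : Fin d, C (u k) * X ^ (k : ℕ)) = 0 := by
      apply eq_zero_of_dvd_of_degree_lt h1
      rw [degree_X_pow_sub_C hd]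
      exact degree_sum_fin_lt u
    ext k
    have h3 := congrArg (fun f => coeff f (k : ℕ)) h2
    simp only [finsetSum_coeff, coeff_C_mul, coeff_X_pow, coeff_zero] at h3
    rw [Finset.sum_eq_single k] at h3
    · simpa using h3
    · intro b _ hb
      rw [if_neg (fun h => hb (Fin.ext h.symm)), mul_zero]
    · simp

open Polynomial in
theorem cyc_det_ne {F Kf : Type*} [Field F] [Field Kf] [Algebra F[X][X] Kf]
    [IsFractionRing F[X][X] Kf] (g : F[X]) (hg : g ≠ 0) (d : ℕ) [NeZero d]
    {ζ : F} (hζ : IsPrimitiveRoot ζ d)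
    (hgcd : ∀ n, n ∣ d → 1 < n → ∃ c : F, ¬ n ∣ g.rootMultiplicity c)
    (h : Fin d → F[X][X])
    (hdet : (Matrix.of fun j l : Fin d => (if j ≤ l then g.map C else C g) * h (l - j)).det = 0) :
    ∀ k, h k = 0 := by
  have hd : 0 < d := Nat.pos_of_ne_zero (NeZero.ne d)
  have hinj : Function.Injective (algebraMap F[X][X] Kf) := IsFractionRing.injective F[X][X] Kf
  have hgz : algebraMap F[X][X] Kf (C g) ≠ 0 := (map_ne_zero_iff _ hinj).mpr (C_ne_zero.mpr hg)
  have hgx : algebraMap F[X][X] Kf (g.map C) ≠ 0 := (map_ne_zero_iff _ hinj).mpr (by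
    rwa [Ne, Polynomial.map_eq_zero_iff (C_injective)])
  have hζ' : IsPrimitiveRoot (algebraMap F[X][X] Kf (C (C ζ))) d :=
    hζ.map_of_injective (f := (algebraMap F[X][X] Kf).comp ((C : F[X] →+* F[X][X]).comp C))
      (hinj.comp (C_injective.comp C_injective))
  have hirr : Irreducible (X ^ d - C (algebraMap F[X][X] Kf (C g) / algebraMap F[X][X] Kf (g.map C))) :=
    kummer_irred hd hζ' (div_ne_zero hgz hgx) (fun n hn hn1 b => not_pow_aux g hg d hgcd n hn hn1 b)
  have h2 := cyc_kernel' _ _ hgx hirr (fun k => algebraMap F[X][X] Kf (h k)) (by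
    rw [← map_zero (algebraMap F[X][X] Kf), ← hdet, RingHom.map_det]
    congr 1
    ext j l
    simp only [Matrix.of_apply, RingHom.mapMatrix_apply, Matrix.map_apply, map_mul]
    split_ifs <;> rfl)
  exact fun k => (map_eq_zero_iff _ hinj).mp (congrFun h2 k)

open Polynomial in
theorem nonvanish {F : Type*} [Field F] (g : F[X]) (hg : g ≠ 0) (d R c N : ℕ) [NeZero d]
    (hR : R = d * c + 1) (hgR : expand F R g = g ^ R) {ζ : F} (hζ : IsPrimitiveRoot ζ d)
    (hgcd : ∀ n, n ∣ d → 1 < n → ∃ c : F, ¬ n ∣ g.rootMultiplicity c)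
    (h : Fin d → F[X][X]) (hN : ∀ k, (h k).natDegree ≤ N) (hdeg : d * (N + g.natDegree) < R)
    (hne : ∃ k, h k ≠ 0) :
    ∑ k : Fin d, spec R (h k) * g ^ ((k : ℕ) * c) ≠ 0 := by
  classical
  intro h0
  have hd : 0 < d := Nat.pos_of_ne_zero (NeZero.ne d)
  have hdet : (Matrix.of fun j l : Fin d => (if j ≤ l then g.map C else C g) * h (l - j)).det = 0 := by
    apply spec_inj R
    · refine lt_of_le_of_lt ?_ hdeg
      rw [Matrix.det_apply]
      refine natDegree_sum_le_of_forall_le _ _ fun σ _ => ?_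
      refine (natDegree_smul_le _ _).trans ?_
      refine (natDegree_prod_le _ _).trans ?_
      refine (Finset.sum_le_card_nsmul _ _ (N + g.natDegree) fun i _ => ?_).trans (by simp)
      rw [Matrix.of_apply]
      refine natDegree_mul_le.trans ?_
      rw [add_comm]
      refine add_le_add (hN _) ?_
      split_ifs
      · exact natDegree_map_le
      · simp
    · rw [RingHom.map_det]
      rw [← Matrix.exists_mulVec_eq_zero_iff]
      refine ⟨fun l => (g ^ c) ^ (l : ℕ), ?_, ?_⟩
      · intro h1
        have := congrFun h1 0
        simp at this
      · ext1 j
        have hx : spec R (g.map C) = g := by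
          simp only [spec, coe_eval₂RingHom, eval₂_map]
          have : ((expand F R).toRingHom.comp C) = (C : F →+* F[X]) := by
            ext x; simp
          rw [this, eval₂_C_X]
        have hz : spec R (C g) = g ^ R := by
          simp [spec, hgR]
        have := cyc_mul (g) (g ^ R) (g ^ c) (by rw [hR]; ring) (fun k => spec R (h k)) j
        have h2 : ∑ k : Fin d, spec R (h k) * (g ^ c) ^ (k : ℕ) = 0 := by
          rw [← h0]
          refine Finset.sum_congr rfl fun k _ => ?_
          rw [← pow_mul, mul_comm c]
        rw [h2, mul_zero] at this
        simp only [Pi.zero_apply]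
        rw [← this]
        simp only [Matrix.mulVec, dotProduct, RingHom.mapMatrix_apply, Matrix.map_apply, Matrix.of_apply, map_mul]
        refine Finset.sum_congr rfl fun l _ => ?_
        split_ifs
        · rw [hx]
        · rw [hz]
  obtain ⟨k, hk⟩ := hne
  exact hk (cyc_det_ne (Kf := FractionRing F[X][X]) g hg d hζ hgcd h hdet k)

theorem arith_aux (A d m : ℕ) (hd : 2 ≤ d) (hA : 3 * m + 8 ≤ A)
    (h : (A + m + (4 * m + 8)) * (d * A) ≤ (A + m) * (d * (A + m) + 1) + (A + m) + (4 * m + 8)) : False := by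
  have h1 : m * m ≤ 3 * m * A := by nlinarith
  obtain ⟨D, hD⟩ : ∃ D, 3 * m * A = m * m + D := ⟨3 * m * A - m * m, by omega⟩
  have h3 : d * (D + 8 * A) ≤ 2 * A + 6 * m + 8 := by nlinarith
  have h4 : 2 * (D + 8 * A) ≤ d * (D + 8 * A) := Nat.mul_le_mul_right _ hd
  omega

open Polynomial in
theorem expand_card_pow {F : Type*} [Field F] [Fintype F] (k : ℕ) (f : F[X]) :
    expand F (Fintype.card F ^ k) f = f ^ (Fintype.card F ^ k) := by
  induction k with
  | zero => simp
  | succ k ih => rw [pow_succ', ← expand_expand, ih, FiniteField.expand_card, ← pow_mul, mul_comm]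

open Polynomial in
theorem stepanov {F : Type*} [Field F] [Fintype F] (g : F[X]) (hg : g ≠ 0) (d c k t : ℕ) [NeZero d]
    (hd : 2 ≤ d) (hR : Fintype.card F ^ k = d * c + 1) {ζ₀ : F} (hζ₀ : IsPrimitiveRoot ζ₀ d)
    (hgcd : ∀ n, n ∣ d → 1 < n → ∃ c : F, ¬ n ∣ g.rootMultiplicity c)
    (ht : t = 4 * g.natDegree + 8) (hct : t ≤ c)
    {Ω : Type*} [Field Ω] [Algebra F Ω] (ζ : F) (hζ : ζ ≠ 0) (T : Finset Ω)
    (hT : ∀ x ∈ T, x ^ ((Fintype.card F ^ k) ^ 2) = x ∧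
      (aeval x g) ^ (c * (Fintype.card F ^ k + 1)) = algebraMap F Ω ζ) :
    T.card ≤ c * Fintype.card F ^ k + (1 + g.natDegree + t) * Fintype.card F ^ k := by
  classical
  have hexp := fun f : F[X] => expand_card_pow k f
  set R := Fintype.card F ^ k with hRdef
  set m := g.natDegree with hm
  obtain ⟨A, hA⟩ : ∃ A, c = A + m := ⟨c - m, by omega⟩
  let B := c + t
  let D := c * R + c + t
  have hkc : ∀ k : Fin d, (k : ℕ) * c ≤ (d - 1) * c := fun k => Nat.mul_le_mul_right _ (by omega)
  have hdc : (d - 1) * c ≤ R := by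
    rw [hR]; exact (Nat.mul_le_mul_right c (Nat.sub_le d 1)).trans (Nat.le_succ _)
  let v : Fin B × Fin d × Fin A → degreeLT F D := fun i =>
    ⟨C (ζ ^ (i.2.1 : ℕ)) * (X ^ ((i.2.2 : ℕ) * R) * (g ^ ((d - 1 - (i.2.1 : ℕ)) * c) * X ^ (i.1 : ℕ))), by
      rw [mem_degreeLT]
      have hi := i.1.isLt
      have hs := i.2.2.isLt
      refine lt_of_le_of_lt (b := ((((i.2.2 : ℕ) * R + ((d - 1) * c * m + (i.1 : ℕ))) : ℕ) : WithBot ℕ)) ?_ ?_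
      · refine degree_le_of_natDegree_le ?_
        refine natDegree_C_mul_le _ _ |>.trans ?_
        refine natDegree_mul_le.trans (add_le_add (natDegree_X_pow_le _) ?_)
        refine natDegree_mul_le.trans (add_le_add ?_ (natDegree_X_pow_le _))
        refine natDegree_pow_le.trans ?_
        exact Nat.mul_le_mul_right _ (Nat.mul_le_mul_right _ (Nat.sub_le _ _))
      · rw [Nat.cast_lt]
        have h1 : ((i.2.2 : ℕ) + 1) * R ≤ A * R := Nat.mul_le_mul_right _ hs
        have h2 : (d - 1) * c * m ≤ R * m := Nat.mul_le_mul_right _ hdc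
        have h3 : c * R = A * R + R * m := by rw [hA]; ring
        have h4 : (i.1 : ℕ) < c + t := hi
        have h5 : ((i.2.2 : ℕ) + 1) * R = (i.2.2 : ℕ) * R + R := by ring
        show _ < c * R + c + t
        omega⟩
  have hnli : ¬ LinearIndependent F v := by
    intro hli
    have h1 := hli.fintype_card_le_finrank
    rw [(degreeLTEquiv F D).finrank_eq] at h1
    simp only [Fintype.card_prod, Fintype.card_fin, Module.finrank_fintype_fun_eq_card] at h1
    have h2 : (c + t) * (d * A) ≤ c * R + c + t := h1
    rw [hR, hA] at h2
    have h3 : 4 * m + 8 ≤ A + m := by omega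
    rw [ht] at h2
    exact arith_aux A d m hd (by omega) h2
  rw [Fintype.not_linearIndependent_iff] at hnli
  obtain ⟨a, ha, ⟨i₀, hi₀⟩⟩ := hnli
  have hΦ : ∑ i : Fin B × Fin d × Fin A, C (a i) * (C (ζ ^ (i.2.1 : ℕ)) * (X ^ ((i.2.2 : ℕ) * R) *
      (g ^ ((d - 1 - (i.2.1 : ℕ)) * c) * X ^ (i.1 : ℕ)))) = 0 := by
    have := congrArg (Subtype.val) ha
    simpa [v, smul_eq_C_mul] using this
  let h : Fin d → F[X][X] := fun k => ∑ i : Fin B, ∑ s : Fin A, monomial (s : ℕ) (monomial (i : ℕ) (a (i, k, s)))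
  have hH := nonvanish g hg d R c A hR (hexp g) hζ₀ hgcd h (fun k => by
      refine natDegree_sum_le_of_forall_le _ _ fun i _ => ?_
      refine natDegree_sum_le_of_forall_le _ _ fun s _ => ?_
      exact (natDegree_monomial_le _).trans s.isLt.le) (by rw [hR, ← hm, ← hA]; omega)
    ⟨i₀.2.1, by
      intro h0
      have h1 := congrArg (fun f => coeff (coeff f (i₀.2.2 : ℕ)) (i₀.1 : ℕ)) h0
      simp only [h, finsetSum_coeff, coeff_zero, coeff_monomial] at h1
      rw [Finset.sum_eq_single i₀.1, Finset.sum_eq_single i₀.2.2] at h1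
      · simp at h1
        exact hi₀ h1
      · intro s _ hs
        rw [if_neg (fun h => hs (Fin.ext h)), coeff_zero]
      · simp
      · intro i _ hi
        refine Finset.sum_eq_zero fun s _ => ?_
        split_ifs
        · rw [coeff_monomial, if_neg (fun h => hi (Fin.ext h))]
        · simp
      · simp⟩
  have hHeq : ∑ k : Fin d, spec R (h k) * g ^ ((k : ℕ) * c) =
      ∑ i : Fin B × Fin d × Fin A, C (a i) * (X ^ ((i.1 : ℕ) * R + (i.2.2 : ℕ)) * g ^ ((i.2.1 : ℕ) * c)) := by
    rw [Fintype.sum_prod_type]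
    simp_rw [Fintype.sum_prod_type]
    rw [Finset.sum_comm]
    refine Finset.sum_congr rfl fun k _ => ?_
    simp only [h, map_sum, Finset.sum_mul]
    refine Finset.sum_congr rfl fun i _ => ?_
    refine Finset.sum_congr rfl fun s _ => ?_
    rw [spec, coe_eval₂RingHom, eval₂_monomial]
    simp only [AlgHom.toRingHom_eq_coe, RingHom.coe_coe, expand_monomial]
    rw [← C_mul_X_pow_eq_monomial]
    ring
  rw [hHeq] at hH
  set H := ∑ i : Fin B × Fin d × Fin A, C (a i) * (X ^ ((i.1 : ℕ) * R + (i.2.2 : ℕ)) * g ^ ((i.2.1 : ℕ) * c)) with hHdef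
  have hdegH : H.natDegree ≤ c * R + (1 + m + t) * R := by
    refine natDegree_sum_le_of_forall_le _ _ fun i _ => ?_
    refine (natDegree_C_mul_le _ _).trans ?_
    refine natDegree_mul_le.trans ?_
    have h1 : (g ^ ((i.2.1 : ℕ) * c)).natDegree ≤ R * m :=
      natDegree_pow_le.trans (Nat.mul_le_mul_right _ ((hkc _).trans hdc))
    have h2 : (X ^ ((i.1 : ℕ) * R + (i.2.2 : ℕ)) : F[X]).natDegree ≤ (c + t) * R + R := by
      refine (natDegree_X_pow_le _).trans ?_
      have h3 : (i.1 : ℕ) * R ≤ (c + t) * R := Nat.mul_le_mul_right _ i.1.isLt.le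
      have h4 := i.2.2.isLt
      have h5 : c ≤ d * c := Nat.le_mul_of_pos_left _ (by omega)
      omega
    calc _ ≤ (c + t) * R + R + R * m := add_le_add h2 h1
      _ = _ := by ring
  have hroot : ∀ x ∈ T, aeval x H = 0 := by
    intro x hx
    obtain ⟨hx1, hx2⟩ := hT x hx
    have hc0 : 0 < c := by omega
    have hG0 : aeval x g ≠ 0 := by
      intro h0
      rw [h0, zero_pow (by positivity)] at hx2
      exact hζ (by simpa using hx2.symm)
    have h1 : (aeval x g) ^ ((d - 1) * c) * (aeval x H) ^ R = 0 := by
      have h0 : (aeval x H) ^ R = aeval (x ^ R) H := by rw [← map_pow, ← hexp H, expand_aeval]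
      rw [h0, hHdef]
      have h2 := congrArg (aeval x) hΦ
      rw [map_zero] at h2
      rw [← h2]
      simp only [map_sum, map_mul, map_pow, aeval_C, aeval_X]
      rw [Finset.mul_sum]
      refine Finset.sum_congr rfl fun i _ => ?_
      have h3 : aeval (x ^ R) g = (aeval x g) ^ R := by
        rw [← expand_aeval, hexp, map_pow]
      rw [h3, ← hx2]
      have h4 : (x ^ R) ^ ((i.1 : ℕ) * R + (i.2.2 : ℕ)) = x ^ (i.1 : ℕ) * x ^ ((i.2.2 : ℕ) * R) := by
        rw [pow_add, ← pow_mul, ← pow_mul, mul_comm R (i.2.2 : ℕ)]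
        congr 1
        rw [show R * ((i.1 : ℕ) * R) = R ^ 2 * (i.1 : ℕ) by ring, pow_mul, hx1]
      have h5 : ((aeval x g) ^ (c * (R + 1))) ^ (i.2.1 : ℕ) * (aeval x g) ^ ((d - 1 - (i.2.1 : ℕ)) * c) =
          (aeval x g) ^ ((d - 1) * c) * ((aeval x g) ^ R) ^ ((i.2.1 : ℕ) * c) := by
        rw [← pow_mul, ← pow_mul, ← pow_add, ← pow_add]
        congr 1
        obtain ⟨e, he⟩ : ∃ e, d - 1 = e + (i.2.1 : ℕ) := ⟨d - 1 - (i.2.1 : ℕ), by omega⟩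
        rw [he, Nat.add_sub_cancel]
        ring
      rw [h4]
      linear_combination (-(algebraMap F Ω (a i)) * x ^ (i.1 : ℕ) * x ^ ((i.2.2 : ℕ) * R)) * h5
    rcases mul_eq_zero.mp h1 with h2 | h2
    · exact absurd h2 (pow_ne_zero _ hG0)
    · exact eq_zero_of_pow_eq_zero h2
  have hsub : T ⊆ (H.map (algebraMap F Ω)).roots.toFinset := by
    intro x hx
    rw [Multiset.mem_toFinset, mem_roots (by rwa [Ne, Polynomial.map_eq_zero]), IsRoot, eval_map_algebraMap]
    exact hroot x hx
  refine (Finset.card_le_card hsub).trans ?_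
  refine (Multiset.toFinset_card_le _).trans ?_
  refine (card_roots' _).trans ?_
  rw [natDegree_map]
  exact hdegH

open Polynomial in
theorem norm_sub_gen {F K : Type*} [Field F] [Field K] [Algebra F K] (pb : PowerBasis F K) (p : F) :
    Algebra.norm F (algebraMap F K p - pb.gen) = (minpoly F pb.gen).eval p := by
  rw [← charpoly_leftMulMatrix, Matrix.eval_charpoly, Algebra.norm_eq_matrix_det pb.basis, map_sub,
    AlgHom.commutes]
  rfl

open Polynomial in
theorem eval_minpoly_eq {F Ω : Type*} [Field F] [Fintype F] [Field Ω] [Algebra F Ω] (x : Ω)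
    (hx : IsIntegral F x) (p : F) :
    algebraMap F Ω ((minpoly F x).eval p) =
      (algebraMap F Ω p - x) ^ (∑ i ∈ range (minpoly F x).natDegree, Fintype.card F ^ i) := by
  have hfd := IntermediateField.adjoin.finiteDimensional hx
  have : Finite (IntermediateField.adjoin F {x}) := Module.finite_of_finite F
  have h1 := norm_sub_gen (IntermediateField.adjoin.powerBasis hx) p
  rw [IntermediateField.adjoin.powerBasis_gen, IntermediateField.minpoly_gen] at h1
  have h2 := FiniteField.algebraMap_norm_eq_pow_sum F (IntermediateField.adjoin F {x})
    (algebraMap F _ p - IntermediateField.AdjoinSimple.gen F x)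
  rw [h1, IntermediateField.adjoin.finrank hx, Nat.card_eq_fintype_card] at h2
  have h3 := congrArg (algebraMap (IntermediateField.adjoin F {x}) Ω) h2
  rw [← IsScalarTower.algebraMap_apply, map_pow, map_sub, ← IsScalarTower.algebraMap_apply] at h3
  exact h3

theorem geom_mul (q e r : ℕ) : ∑ i ∈ range (e * r), q ^ i =
    ∑ j ∈ range r, (∑ i ∈ range e, q ^ i) * q ^ (e * j) := by
  induction r with
  | zero => simp
  | succ r ih =>
    rw [Nat.mul_succ, sum_range_add, ih, sum_range_succ, sum_mul]
    congr 1
    exact sum_congr rfl fun i _ => by rw [pow_add, mul_comm]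

open Polynomial in
theorem eval_minpoly_pow {F Ω : Type*} [Field F] [Fintype F] [Field Ω] [Algebra F Ω] (x : Ω)
    (hx : IsIntegral F x) (p : F) (n : ℕ) (hn : (minpoly F x).natDegree ∣ n) :
    algebraMap F Ω ((minpoly F x).eval p ^ (n / (minpoly F x).natDegree)) =
      (algebraMap F Ω p - x) ^ (∑ i ∈ range n, Fintype.card F ^ i) := by
  obtain ⟨r, rfl⟩ := hn
  have h0 : 0 < (minpoly F x).natDegree := minpoly.natDegree_pos hx
  rw [Nat.mul_div_cancel_left _ h0, geom_mul, ← prod_pow_eq_pow_sum]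
  simp_rw [pow_mul, ← eval_minpoly_eq x hx p, ← map_pow, ← map_prod]
  congr 1
  simp_rw [← pow_mul, FiniteField.pow_card_pow]
  simp

open Polynomial in
theorem mem_Rn_iff {F Ω : Type*} [Field F] [Fintype F] [Field Ω] [Algebra F Ω] (x : Ω)
    (hx : IsIntegral F x) (n : ℕ) :
    x ^ (Fintype.card F ^ n) = x ↔ (minpoly F x).natDegree ∣ n := by
  rw [(minpoly.irreducible hx).natDegree_dvd_iff_dvd_X_pow_card_pow_sub_X, Nat.card_eq_fintype_card,
    minpoly.dvd_iff]
  simp [sub_eq_zero]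

open Polynomial in
noncomputable def Lam {F : Type*} [Field F] (χ : MulChar F ℂ) (s : Finset F) (e : F → ℕ) (f : F[X]) : ℂ :=
  ∏ p ∈ s, χ (f.eval p) ^ (e p)

open Polynomial in
open Classical in
noncomputable def Rn (F Ω : Type*) [Field F] [Fintype F] [Field Ω] (n : ℕ) : Finset Ω :=
  (X ^ (Fintype.card F ^ n) - X : Polynomial Ω).roots.toFinset

noncomputable def Sn {F : Type*} (Ω : Type*) [Field F] [Fintype F] [Field Ω] [Algebra F Ω]
    (χ : MulChar F ℂ) (s : Finset F) (e : F → ℕ) (n : ℕ) : ℂ :=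
  ∑ x ∈ Rn F Ω n, Lam χ s e (minpoly F x) ^ (n / (minpoly F x).natDegree)

theorem chi_inj {F : Type*} [Field F] [Fintype F]
    (χ : MulChar F ℂ) (hord : orderOf χ = Fintype.card F - 1) (x : F) (hx : χ x = 1) : x = 1 := by
  classical
  obtain ⟨u, hu⟩ := IsCyclic.exists_generator (α := Fˣ)
  have hx0 : x ≠ 0 := by
    rintro rfl
    rw [MulChar.map_zero] at hx
    exact zero_ne_one hx
  obtain ⟨i, hi⟩ := mem_powers_iff_mem_zpowers.mpr (hu (Units.mk0 x hx0))
  have hi' : (u : F) ^ i = x := by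
    have := congrArg Units.val hi
    simpa using this
  rw [← hi', map_pow] at hx
  have h1 : χ ^ i = 1 := by
    rw [MulChar.eq_iff hu, MulChar.pow_apply_coe, hx, MulChar.one_apply_coe]
  have h2 := orderOf_dvd_of_pow_eq_one h1
  rw [hord, ← Fintype.card_units] at h2
  obtain ⟨j, rfl⟩ := h2
  rw [← hi', pow_mul, ← Units.val_pow_eq_pow_val, pow_card_eq_one]
  simp

open Polynomial in
theorem sum_chi_roots {F : Type*} [Field F] [Fintype F]
    (χ : MulChar F ℂ) (hord : orderOf χ = Fintype.card F - 1) (d : ℕ) (hd : 2 ≤ d) {ζ₀ : F}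
    (hζ₀ : IsPrimitiveRoot ζ₀ d) : ∑ ζ ∈ nthRootsFinset d (1 : F), χ ζ = 0 := by
  have h1 : χ ζ₀ ≠ 1 := fun h => hζ₀.ne_one (by omega) (chi_inj χ hord _ h)
  have h0 : ζ₀ ≠ 0 := hζ₀.ne_zero (by omega)
  have h2 : χ ζ₀ * ∑ ζ ∈ nthRootsFinset d (1 : F), χ ζ = ∑ ζ ∈ nthRootsFinset d (1 : F), χ ζ := by
    rw [mul_sum]
    refine sum_bij (fun ζ _ => ζ₀ * ζ) ?_ ?_ ?_ ?_
    · intro ζ h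
      rw [mem_nthRootsFinset (by omega)] at h ⊢
      rw [mul_pow, h, hζ₀.pow_eq_one, mul_one]
    · intro a _ b _ h
      exact mul_left_cancel₀ h0 h
    · intro b hb
      refine ⟨ζ₀⁻¹ * b, ?_, ?_⟩
      · rw [mem_nthRootsFinset (by omega)] at hb ⊢
        rw [mul_pow, hb, inv_pow, hζ₀.pow_eq_one, inv_one, mul_one]
      · rw [mul_inv_cancel_left₀ h0]
    · intro a _
      rw [map_mul]
  have h3 : (χ ζ₀ - 1) * ∑ ζ ∈ nthRootsFinset d (1 : F), χ ζ = 0 := by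
    rw [sub_mul, h2, one_mul, sub_self]
  exact (mul_eq_zero.mp h3).resolve_left (sub_ne_zero.mpr h1)

open Polynomial in
theorem char_count {F : Type*} [Field F] [Fintype F] {Ω : Type*}
    (χ : MulChar F ℂ) (hord : orderOf χ = Fintype.card F - 1) (d : ℕ) (hd : 2 ≤ d) {ζ₀ : F}
    (hζ₀ : IsPrimitiveRoot ζ₀ d) (T : Finset Ω) (z : Ω → F) (hz : ∀ x ∈ T, z x ≠ 0 → z x ^ d = 1)
    [DecidableEq F] (M N : ℕ)
    (hM : ∀ ζ : F, ζ ≠ 0 → #{x ∈ T | z x = ζ} ≤ M) (hN : #{x ∈ T | z x = 0} ≤ N) :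
    ‖∑ x ∈ T, χ (z x)‖ ≤ d * M + N - #T := by
  classical
  set μ := nthRootsFinset d (1 : F) with hμ
  have hμ0 : ∀ ζ ∈ μ, ζ ≠ 0 := by
    rintro ζ h rfl
    rw [hμ, mem_nthRootsFinset (by omega), zero_pow (by omega)] at h
    exact zero_ne_one h
  have hcard : #μ = d := hζ₀.card_nthRootsFinset
  have h1 : ∑ x ∈ T, χ (z x) = ∑ ζ ∈ μ, χ ζ * #{x ∈ T | z x = ζ} := by
    have : ∑ x ∈ T, χ (z x) = ∑ x ∈ T with z x ∈ μ, χ (z x) := by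
      rw [sum_filter]
      refine sum_congr rfl fun x hx => ?_
      split_ifs with h
      · rfl
      · by_cases h0 : z x = 0
        · rw [h0, MulChar.map_zero]
        · exact absurd ((mem_nthRootsFinset (by omega) _).mpr (hz x hx h0)) h
    rw [this, ← sum_fiberwise_of_maps_to (g := z) (t := μ) (by simp)]
    refine sum_congr rfl fun ζ hζ => ?_
    rw [sum_congr rfl (g := fun _ => χ ζ) (fun x hx => by rw [(mem_filter.mp hx).2]), sum_const,
      nsmul_eq_mul, mul_comm, filter_filter]
    congr 4
    ext x
    constructor
    · exact fun h => h.2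
    · exact fun h => ⟨h ▸ hζ, h⟩
  have h2 : ∑ x ∈ T, χ (z x) = ∑ ζ ∈ μ, χ ζ * ((#{x ∈ T | z x = ζ} : ℂ) - M) := by
    simp_rw [mul_sub]
    rw [sum_sub_distrib, ← sum_mul, sum_chi_roots χ hord d hd hζ₀, h1]
    simp
  have h3 : #T ≤ (∑ ζ ∈ μ, #{x ∈ T | z x = ζ}) + N := by
    have := card_filter_add_card_filter_not (s := T) (fun x => z x = 0)
    have h4 : #{x ∈ T | ¬ z x = 0} = ∑ ζ ∈ μ, #{x ∈ T | z x = ζ} := by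
      rw [card_eq_sum_card_fiberwise (f := z) (t := μ)]
      · refine sum_congr rfl fun ζ hζ => ?_
        rw [filter_filter]
        congr 1
        ext x
        constructor
        · exact fun h => by simp at h ⊢; exact ⟨h.1, h.2.2⟩
        · exact fun h => by simp at h ⊢; exact ⟨h.1, by rw [h.2]; exact hμ0 ζ hζ, h.2⟩
      · intro x hx
        simp at hx
        exact (mem_nthRootsFinset (by omega) _).mpr (hz x hx.1 hx.2)
    omega
  rw [h2]
  refine (norm_sum_le _ _).trans ?_
  have h5 : ∀ ζ ∈ μ, ‖χ ζ * ((#{x ∈ T | z x = ζ} : ℂ) - M)‖ ≤ M - #{x ∈ T | z x = ζ} := by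
    intro ζ hζ
    rw [norm_mul]
    have h6 : ‖χ ζ‖ ≤ 1 := by
      rw [hμ, mem_nthRootsFinset (by omega)] at hζ
      have : (χ ζ) ^ d = 1 := by rw [← map_pow, hζ, map_one]
      exact (Complex.norm_eq_one_of_pow_eq_one this (by omega)).le
    have h7 : ‖(#{x ∈ T | z x = ζ} : ℂ) - M‖ = M - #{x ∈ T | z x = ζ} := by
      have h8 : ((#{x ∈ T | z x = ζ} : ℂ) - M) = -(((M - #{x ∈ T | z x = ζ} : ℕ) : ℂ)) := by
        rw [Nat.cast_sub (hM ζ (hμ0 ζ hζ))]; ring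
      rw [h8, norm_neg, Complex.norm_natCast, Nat.cast_sub (hM ζ (hμ0 ζ hζ))]
    rw [h7]
    have h8 : (0 : ℝ) ≤ M - #{x ∈ T | z x = ζ} := sub_nonneg.mpr (by exact_mod_cast hM ζ (hμ0 ζ hζ))
    nlinarith
  refine (sum_le_sum h5).trans ?_
  rw [sum_sub_distrib, sum_const, hcard, nsmul_eq_mul]
  have h9 : (#T : ℝ) ≤ (∑ ζ ∈ μ, (#{x ∈ T | z x = ζ} : ℝ)) + N := by exact_mod_cast h3
  linarith

open Polynomial in
theorem mem_Rn {F Ω : Type*} [Field F] [Fintype F] [Field Ω] (n : ℕ) (hn : n ≠ 0) (x : Ω) :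
    x ∈ Rn F Ω n ↔ x ^ (Fintype.card F ^ n) = x := by
  classical
  rw [Rn, Multiset.mem_toFinset, mem_roots]
  · simp [sub_eq_zero]
  · exact FiniteField.X_pow_card_pow_sub_X_ne_zero _ hn Fintype.one_lt_card

open Polynomial in
theorem card_Rn {F Ω : Type*} [Field F] [Fintype F] [Field Ω] [Algebra F Ω] [IsAlgClosed Ω] (n : ℕ)
    (hn : n ≠ 0) : #(Rn F Ω n) = Fintype.card F ^ n := by
  classical
  rw [Rn]
  obtain ⟨p, hp⟩ := CharP.exists F
  have : CharP Ω p := charP_of_injective_algebraMap (algebraMap F Ω).injective p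
  have hsep : (X ^ (Fintype.card F ^ n) - X : Polynomial Ω).Separable := by
    refine galois_poly_separable p _ ?_
    refine dvd_pow ?_ hn
    exact (CharP.cast_eq_zero_iff F p _).mp (Nat.cast_card_eq_zero F)
  rw [Multiset.toFinset_card_of_nodup (nodup_roots hsep), IsAlgClosed.card_roots_eq_natDegree]
  exact FiniteField.X_pow_card_pow_sub_X_natDegree_eq _ hn Fintype.one_lt_card

theorem Lam_pow {F : Type*} [Field F] (χ : MulChar F ℂ) (s : Finset F) (e : F → ℕ)
    (f : Polynomial F) (n : ℕ) : Lam χ s e f ^ n = χ (∏ p ∈ s, ((f.eval p) ^ n) ^ (e p)) := by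
  rw [Lam, map_prod, ← prod_pow]
  refine prod_congr rfl fun p _ => ?_
  rw [map_pow, map_pow, ← pow_mul, ← pow_mul, mul_comm]

open Polynomial in
theorem rootMult_prod {F : Type*} [Field F] (s : Finset F) (e : F → ℕ) (c : F) (hc : c ∈ s) :
    (∏ p ∈ s, (C p - X) ^ (e p)).rootMultiplicity c = e c := by
  classical
  have h0 : ∀ p : F, (C p - X : F[X]) ≠ 0 := fun p => by
    rw [← neg_sub, neg_ne_zero]; exact X_sub_C_ne_zero p
  have hne : ∏ p ∈ s, (C p - X : F[X]) ^ (e p) ≠ 0 := prod_ne_zero_iff.mpr fun p _ => pow_ne_zero _ (h0 p)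
  rw [← mul_prod_erase s _ hc] at hne ⊢
  rw [rootMultiplicity_mul hne]
  have h1 : (∏ p ∈ s.erase c, (C p - X : F[X]) ^ (e p)).rootMultiplicity c = 0 := by
    refine rootMultiplicity_eq_zero ?_
    rw [IsRoot, eval_prod]
    refine prod_ne_zero_iff.mpr fun p hp => ?_
    rw [eval_pow, eval_sub, eval_C, eval_X]
    exact pow_ne_zero _ (sub_ne_zero.mpr (ne_of_mem_erase hp))
  have h2 : (C c - X : F[X]) ^ e c = C ((-1) ^ e c) * (X - C c) ^ e c := by
    rw [← neg_sub, neg_pow]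
    simp
  rw [h1, add_zero, h2, rootMultiplicity_mul (by rw [← h2]; exact pow_ne_zero _ (h0 c)),
    rootMultiplicity_C, rootMultiplicity_X_sub_C_pow, zero_add]

open Polynomial in
theorem S_bound {F : Type*} [Field F] [Fintype F] {Ω : Type*} [Field Ω] [Algebra F Ω] [IsAlgClosed Ω]
    [Algebra.IsAlgebraic F Ω] (χ : MulChar F ℂ) (hord : orderOf χ = Fintype.card F - 1)
    (s : Finset F) (e : F → ℕ) (he : ∃ p ∈ s, ¬ (Fintype.card F - 1) ∣ e p) :
    ∃ C : ℝ, ∃ k₀ : ℕ, ∀ k, k₀ ≤ k → ‖Sn Ω χ s e (2 * k)‖ ≤ C * (Fintype.card F : ℝ) ^ k := by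
  classical
  set q := Fintype.card F with hq
  have hq1 : 1 < q := Fintype.one_lt_card
  set δ := (q - 1).gcd (s.gcd e) with hδ
  have hδ0 : 0 < δ := Nat.gcd_pos_of_pos_left _ (by omega)
  obtain ⟨d, hd⟩ : δ ∣ q - 1 := Nat.gcd_dvd_left _ _
  have hδe : ∀ p ∈ s, δ ∣ e p := fun p hp => (Nat.gcd_dvd_right _ _).trans (Finset.gcd_dvd hp)
  have hd0 : d ≠ 0 := by rintro rfl; omega
  have hd1 : d ≠ 1 := by
    rintro rfl
    obtain ⟨p, hp, hpe⟩ := he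
    rw [hd, mul_one] at hpe
    exact hpe (hδe p hp)
  have hd2 : 2 ≤ d := by omega
  have : NeZero d := ⟨hd0⟩
  obtain ⟨ζ₀, hζ₀⟩ : ∃ ζ₀ : F, IsPrimitiveRoot ζ₀ d := by
    obtain ⟨u, hu⟩ := IsCyclic.exists_generator (α := Fˣ)
    have h1 : orderOf u = q - 1 := by
      rw [orderOf_eq_card_of_forall_mem_zpowers hu, Nat.card_eq_fintype_card, Fintype.card_units]
    have h2 : IsPrimitiveRoot (u : F) (q - 1) := by
      rw [IsPrimitiveRoot.coe_units_iff, ← h1]; exact IsPrimitiveRoot.orderOf u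
    exact ⟨_, h2.pow (by omega) hd⟩
  let e' : F → ℕ := fun p => e p / δ
  have he' : ∀ p ∈ s, e p = δ * e' p := fun p hp => (Nat.mul_div_cancel' (hδe p hp)).symm
  let g : F[X] := ∏ p ∈ s, (C p - X) ^ (e' p)
  have hg0 : g ≠ 0 := prod_ne_zero_iff.mpr fun p _ => pow_ne_zero _ (by
    rw [← neg_sub, neg_ne_zero]; exact X_sub_C_ne_zero p)
  have hgcd : ∀ n, n ∣ d → 1 < n → ∃ c : F, ¬ n ∣ g.rootMultiplicity c := by
    intro n hn h1
    by_contra! hcon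
    have h2 : δ * n ∣ δ := by
      refine Nat.dvd_gcd (hd ▸ Nat.mul_dvd_mul_left _ hn) (Finset.dvd_gcd fun p hp => ?_)
      rw [he' p hp]
      refine Nat.mul_dvd_mul_left _ ?_
      rw [← rootMult_prod s e' p hp]
      exact hcon p
    have := Nat.le_of_dvd hδ0 h2
    nlinarith
  set m := g.natDegree with hm
  set t := 4 * m + 8 with ht
  refine ⟨d * (1 + m + t) + #s, d * t + 1, fun k hk => ?_⟩
  have hkpos : k ≠ 0 := by omega
  have h2k : 2 * k ≠ 0 := by omega
  have hdvd : d ∣ q ^ k - 1 := by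
    have h1 : q - 1 ∣ q ^ k - 1 := by simpa using Nat.sub_dvd_pow_sub_pow q 1 k
    exact (Dvd.intro_left _ hd.symm).trans h1
  obtain ⟨c, hc⟩ := hdvd
  have hqk : k < q ^ k := Nat.lt_pow_self hq1
  have hR : q ^ k = d * c + 1 := by omega
  have htc : t ≤ c := by
    have : d * t < d * c + 1 := by omega
    exact Nat.le_of_mul_le_mul_left (by omega) (Nat.pos_of_ne_zero hd0)
  have hint : ∀ x : Ω, IsIntegral F x := fun x => Algebra.IsIntegral.isIntegral x
  let z : Ω → F := fun x => ∏ p ∈ s, ((minpoly F x).eval p ^ (2 * k / (minpoly F x).natDegree)) ^ (e p)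
  have hexpo : (∑ i ∈ range (2 * k), q ^ i) * δ = c * (q ^ k + 1) := by
    have h1 := Nat.geomSum_eq (show 2 ≤ q by omega) (2 * k)
    have h2 : (q - 1) * (∑ i ∈ range (2 * k), q ^ i) = q ^ (2 * k) - 1 := by
      rw [mul_comm, ← Nat.pred_eq_sub_one]
      have := geom_sum_mul_of_one_le (x := q) (by omega) (2 * k)
      exact this
    have h3 : q ^ (2 * k) - 1 = d * (c * (q ^ k + 1)) := by
      have : q ^ (2 * k) = d * (c * (q ^ k + 1)) + 1 := by
        rw [two_mul, pow_add, hR]; ring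
      omega
    rw [h3, hd] at h2
    refine Nat.eq_of_mul_eq_mul_left (Nat.pos_of_ne_zero hd0) ?_
    rw [← h2]; ring
  have hzalg : ∀ x ∈ Rn F Ω (2 * k), algebraMap F Ω (z x) = (aeval x g) ^ (c * (q ^ k + 1)) := by
    intro x hx
    rw [mem_Rn _ h2k, mem_Rn_iff x (hint x)] at hx
    simp only [z, g, map_prod]
    rw [← prod_pow]
    refine prod_congr rfl fun p hp => ?_
    rw [map_pow, eval_minpoly_pow x (hint x) p _ hx, map_pow, map_sub, aeval_C, aeval_X,
      ← pow_mul, ← pow_mul, ← hexpo, he' p hp]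
    congr 1
    ring
  have hS : Sn Ω χ s e (2 * k) = ∑ x ∈ Rn F Ω (2 * k), χ (z x) := by
    rw [Sn]
    exact sum_congr rfl fun x _ => Lam_pow _ _ _ _ _
  have hxQ : ∀ x ∈ Rn F Ω (2 * k), x ^ ((q ^ k) ^ 2) = x := by
    intro x hx
    rw [mem_Rn _ h2k] at hx
    rwa [← pow_mul, mul_comm k]
  have hinj := (algebraMap F Ω).injective
  rw [hS]
  have hcp : 0 < c * (q ^ k + 1) := Nat.mul_pos (by omega) (by omega)
  have key := char_count χ hord d hd2 hζ₀ (Rn F Ω (2 * k)) z (by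
      intro x hx hz
      apply hinj
      have hne : aeval x g ≠ 0 := by
        intro h0
        apply hz
        apply hinj
        rw [hzalg x hx, h0, zero_pow hcp.ne', map_zero]
      rw [map_pow, hzalg x hx, map_one, ← pow_mul]
      have h1 : (aeval x g) ^ ((q ^ k) ^ 2) = aeval x g := by
        rw [← pow_mul, ← map_pow, ← expand_card_pow, expand_aeval, pow_mul, hxQ x hx]
      have h2 : (q ^ k) ^ 2 = c * (q ^ k + 1) * d + 1 := by rw [hR]; ring
      rw [h2, pow_succ] at h1
      exact mul_right_cancel₀ hne (by rw [h1, one_mul]))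
    (c * q ^ k + (1 + m + t) * q ^ k) (#s) (by
      intro ζ hζ
      refine stepanov g hg0 d c k t hd2 hR hζ₀ hgcd ht htc ζ hζ _ ?_
      intro x hx
      rw [mem_filter] at hx
      exact ⟨hxQ x hx.1, by rw [← hx.2]; exact (hzalg x hx.1).symm⟩) (by
      have hsub : {x ∈ Rn F Ω (2 * k) | z x = 0} ⊆ s.image (algebraMap F Ω) := by
        intro x hx
        rw [mem_filter] at hx
        have h1 := hzalg x hx.1
        rw [hx.2, map_zero] at h1
        have h2 := eq_zero_of_pow_eq_zero h1.symm
        simp only [g, map_prod] at h2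
        obtain ⟨p, hp, h3⟩ := prod_eq_zero_iff.mp h2
        rw [map_pow] at h3
        have h4 := eq_zero_of_pow_eq_zero h3
        rw [map_sub, aeval_C, aeval_X, sub_eq_zero] at h4
        exact mem_image.mpr ⟨p, hp, h4⟩
      exact (card_le_card hsub).trans card_image_le)
  refine key.trans ?_
  rw [card_Rn _ h2k]
  have hRr : (q : ℝ) ^ k = d * c + 1 := by exact_mod_cast hR
  have h1 : (1 : ℝ) ≤ (q : ℝ) ^ k := one_le_pow₀ (by exact_mod_cast hq1.le)
  push_cast
  rw [two_mul, pow_add]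
  set Rr := (q : ℝ) ^ k
  have hs0 : (0 : ℝ) ≤ #s := Nat.cast_nonneg _
  nlinarith [mul_le_mul_of_nonneg_left h1 hs0]

theorem Lam_mul {F : Type*} [Field F] (χ : MulChar F ℂ) (s : Finset F) (e : F → ℕ)
    (f g : Polynomial F) : Lam χ s e (f * g) = Lam χ s e f * Lam χ s e g := by
  simp only [Lam, Polynomial.eval_mul, map_mul, mul_pow, prod_mul_distrib]

theorem Lam_pow' {F : Type*} [Field F] (χ : MulChar F ℂ) (s : Finset F) (e : F → ℕ)
    (f : Polynomial F) (n : ℕ) : Lam χ s e (f ^ n) = Lam χ s e f ^ n := by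
  rw [Lam_pow, Lam, map_prod]
  simp only [Polynomial.eval_pow, map_pow]

open Polynomial in
theorem Mon_finite (F : Type*) [Field F] [Fintype F] (n : ℕ) :
    {f : F[X] | f.Monic ∧ f.natDegree = n}.Finite := by
  refine Set.Finite.subset (Set.finite_range
    (fun a : Fin n → F => (X ^ n + ((degreeLTEquiv F n).symm a : F[X])))) ?_
  rintro f ⟨hf, hn⟩
  have h1 : f - X ^ n ∈ degreeLT F n := by
    rw [mem_degreeLT]
    rcases eq_or_ne n 0 with rfl | hn0
    · have : f = 1 := hf.natDegree_eq_zero.mp hn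
      simp [this]
    · have := degree_sub_lt_left (p := f) (q := X ^ n) (by rw [degree_X_pow, degree_eq_natDegree hf.ne_zero, hn]) hf.ne_zero
        (by rw [hf, (monic_X_pow n).leadingCoeff])
      rwa [degree_eq_natDegree hf.ne_zero, hn] at this
  refine ⟨degreeLTEquiv F n ⟨_, h1⟩, ?_⟩
  simp

open Polynomial in
noncomputable def Mon (F : Type*) [Field F] [Fintype F] (n : ℕ) : Finset F[X] := (Mon_finite F n).toFinset

theorem mem_Mon {F : Type*} [Field F] [Fintype F] (n : ℕ) (f : Polynomial F) :
    f ∈ Mon F n ↔ f.Monic ∧ f.natDegree = n := by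
  simp [Mon]

noncomputable def Ln {F : Type*} [Field F] [Fintype F]
    (χ : MulChar F ℂ) (s : Finset F) (e : F → ℕ) (n : ℕ) : ℂ := ∑ f ∈ Mon F n, Lam χ s e f

theorem Ln_zero {F : Type*} [Field F] [Fintype F]
    (χ : MulChar F ℂ) (s : Finset F) (e : F → ℕ) : Ln χ s e 0 = 1 := by
  have : Mon F 0 = {1} := by
    ext f
    rw [mem_Mon, mem_singleton]
    constructor
    · exact fun h => h.1.natDegree_eq_zero.mp h.2
    · rintro rfl; simp
  rw [Ln, this, sum_singleton]
  simp [Lam]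

open Polynomial in
theorem Ln_one {F : Type*} [Field F] [Fintype F]
    (χ : MulChar F ℂ) (s : Finset F) (e : F → ℕ) :
    Ln χ s e 1 = ∑ x : F, ∏ p ∈ s, χ (p - x) ^ (e p) := by
  classical
  have : Mon F 1 = univ.image (fun x : F => X - C x) := by
    ext f
    rw [mem_Mon, mem_image]
    constructor
    · rintro ⟨h1, h2⟩
      refine ⟨- f.coeff 0, mem_univ _, ?_⟩
      have := h1.eq_X_add_C h2
      rw [map_neg, sub_neg_eq_add]
      exact this.symm
    · rintro ⟨x, -, rfl⟩
      exact ⟨monic_X_sub_C x, natDegree_X_sub_C x⟩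
  rw [Ln, this, sum_image]
  · simp [Lam]
  · intro x _ y _ h
    simpa using h

theorem sum_char_affine {F : Type*} [Field F] [Fintype F]
    (χ : MulChar F ℂ) (hord : orderOf χ = Fintype.card F - 1) (n : ℕ) (hn : ¬ (Fintype.card F - 1) ∣ n)
    (u v : F) (hv : v ≠ 0) : ∑ a : F, χ (u + a * v) ^ n = 0 := by
  have hn0 : n ≠ 0 := by rintro rfl; exact hn (dvd_zero _)
  have h1 : χ ^ n ≠ 1 := fun h => hn (hord ▸ orderOf_dvd_of_pow_eq_one h)
  rw [← MulChar.sum_eq_zero_of_ne_one h1]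
  simp_rw [MulChar.pow_apply' χ hn0]
  exact Fintype.sum_equiv ((Equiv.mulRight₀ v hv).trans (Equiv.addLeft u)) _ _ (fun a => by simp)

open Polynomial in
theorem Ln_vanish {F : Type*} [Field F] [Fintype F]
    (χ : MulChar F ℂ) (hord : orderOf χ = Fintype.card F - 1)
    (s : Finset F) (e : F → ℕ) (he : ∃ p ∈ s, ¬ (Fintype.card F - 1) ∣ e p) (n : ℕ) (hn : #s ≤ n) :
    Ln χ s e n = 0 := by
  classical
  obtain ⟨c, hc, hce⟩ := he
  let h : F[X] := ∏ p ∈ s.erase c, (X - C p)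
  have hh : h.natDegree < n := by
    have h1 : h.natDegree = #(s.erase c) := natDegree_finsetProd_X_sub_C_eq_card _ _
    rw [h1, card_erase_of_mem hc]
    have := card_pos.mpr ⟨c, hc⟩
    omega
  have hhc : h.eval c ≠ 0 := by
    simp only [h, eval_prod]
    refine prod_ne_zero_iff.mpr fun p hp => ?_
    simpa [sub_eq_zero] using (ne_of_mem_erase hp).symm
  have hhp : ∀ p ∈ s.erase c, h.eval p = 0 := by
    intro p hp
    simp only [h, eval_prod]
    exact prod_eq_zero hp (by simp)
  have hmem : ∀ (a : F) (f : F[X]), f ∈ Mon F n → f + C a * h ∈ Mon F n := by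
    intro a f hf
    rw [mem_Mon] at hf ⊢
    have hlt : (C a * h).degree < f.degree := by
      rw [degree_eq_natDegree hf.1.ne_zero, hf.2]
      exact lt_of_le_of_lt degree_le_natDegree (Nat.cast_lt.mpr ((natDegree_C_mul_le _ _).trans_lt hh))
    exact ⟨hf.1.add_of_left hlt, by rw [natDegree_add_eq_left_of_degree_lt hlt, hf.2]⟩
  have htr : ∀ a : F, Ln χ s e n = ∑ f ∈ Mon F n, Lam χ s e (f + C a * h) := by
    intro a
    symm
    refine sum_bij (fun f _ => f + C a * h) (fun f hf => hmem a f hf) ?_ ?_ ?_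
    · intro f _ g _ hfg
      exact add_right_cancel hfg
    · intro f hf
      refine ⟨f + C (-a) * h, hmem _ _ hf, ?_⟩
      rw [map_neg]; ring
    · intro f _; rfl
  have h1 : (Fintype.card F : ℂ) * Ln χ s e n = 0 := by
    have h2 : ∑ a : F, Ln χ s e n = 0 := by
      rw [sum_congr rfl (fun a _ => htr a), sum_comm]
      refine sum_eq_zero fun f _ => ?_
      have h3 : ∀ a : F, Lam χ s e (f + C a * h) =
          (∏ p ∈ s.erase c, χ (f.eval p) ^ (e p)) * χ (f.eval c + a * h.eval c) ^ (e c) := by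
        intro a
        rw [Lam, ← mul_prod_erase s _ hc, mul_comm]
        congr 1
        · refine prod_congr rfl fun p hp => ?_
          rw [eval_add, eval_mul, hhp p hp, mul_zero, add_zero]
        · simp
      simp_rw [h3]
      rw [← mul_sum, sum_char_affine χ hord _ hce _ _ hhc, mul_zero]
    rw [sum_const, card_univ, nsmul_eq_mul] at h2
    exact h2
  exact (mul_eq_zero.mp h1).resolve_left (by simp)

open Polynomial in
theorem minpoly_pow_dvd_iff {F Ω : Type*} [Field F] [Fintype F] [Field Ω] [Algebra F Ω] (x : Ω)
    (hx : IsIntegral F x) (f : F[X]) (hf : f ≠ 0) (i : ℕ) :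
    minpoly F x ^ i ∣ f ↔ i ≤ (f.map (algebraMap F Ω)).rootMultiplicity x := by
  classical
  have hirr := minpoly.irreducible hx
  have hfm : f.map (algebraMap F Ω) ≠ 0 := (Polynomial.map_ne_zero_iff (algebraMap F Ω).injective).mpr hf
  have hfin : FiniteMultiplicity (minpoly F x) f :=
    FiniteMultiplicity.of_not_isUnit hirr.not_isUnit hf
  obtain ⟨h, hfh, hnd⟩ := hfin.exists_eq_pow_mul_and_not_dvd
  set k := multiplicity (minpoly F x) f with hk
  have hsep : ((minpoly F x).map (algebraMap F Ω)).Separable :=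
    (PerfectField.separable_of_irreducible hirr).map
  have h1 : ((minpoly F x).map (algebraMap F Ω)).rootMultiplicity x = 1 := by
    refine le_antisymm (rootMultiplicity_le_one_of_separable hsep x) ?_
    rw [Nat.one_le_iff_ne_zero, ← Nat.pos_iff_ne_zero, rootMultiplicity_pos hsep.ne_zero, IsRoot, eval_map_algebraMap]
    exact minpoly.aeval F x
  have h2 : (h.map (algebraMap F Ω)).rootMultiplicity x = 0 := by
    refine rootMultiplicity_eq_zero ?_
    rw [IsRoot, eval_map_algebraMap]
    exact fun h0 => hnd (minpoly.dvd F x h0)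
  have h3 : (f.map (algebraMap F Ω)).rootMultiplicity x = k := by
    rw [hfh, Polynomial.map_mul, Polynomial.map_pow] at hfm
    rw [hfh, Polynomial.map_mul, Polynomial.map_pow, rootMultiplicity_mul hfm, h2,
      ← count_roots, roots_pow, Multiset.count_nsmul, count_roots, h1]
    simp
  rw [h3]
  exact hfin.pow_dvd_iff_le_multiplicity

open Polynomial in
open Classical in
theorem count_pairs {F Ω : Type*} [Field F] [Fintype F] [Field Ω] [Algebra F Ω] [IsAlgClosed Ω]
    [Algebra.IsAlgebraic F Ω] (f : F[X]) (n : ℕ) (hf : f.Monic) (hn : f.natDegree = n) :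
    ∑ j ∈ Icc 1 n, #{x ∈ Rn F Ω j | minpoly F x ^ (j / (minpoly F x).natDegree) ∣ f} = n := by
  have hint : ∀ x : Ω, IsIntegral F x := fun x => Algebra.IsIntegral.isIntegral x
  have hpos : ∀ x : Ω, 0 < (minpoly F x).natDegree := fun x => minpoly.natDegree_pos (hint x)
  set W := (f.map (algebraMap F Ω)).roots.toFinset with hW
  have hfm : f.map (algebraMap F Ω) ≠ 0 := (hf.map _).ne_zero
  have h1 : ∀ j ∈ Icc 1 n, #{x ∈ Rn F Ω j | minpoly F x ^ (j / (minpoly F x).natDegree) ∣ f} =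
      ∑ x ∈ W, if (minpoly F x).natDegree ∣ j ∧ minpoly F x ^ (j / (minpoly F x).natDegree) ∣ f then 1 else 0 := by
    intro j hj
    rw [mem_Icc] at hj
    rw [← card_filter]
    congr 1
    ext x
    rw [mem_filter, mem_filter, mem_Rn j (by omega), mem_Rn_iff x (hint x)]
    constructor
    · rintro ⟨h2, h3⟩
      refine ⟨?_, h2, h3⟩
      rw [minpoly_pow_dvd_iff x (hint x) f hf.ne_zero] at h3
      have h4 : 0 < j / (minpoly F x).natDegree := Nat.div_pos (Nat.le_of_dvd (by omega) h2) (hpos x)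
      rw [hW, Multiset.mem_toFinset, ← Multiset.count_pos, count_roots]
      omega
    · exact fun h => h.2
  rw [sum_congr rfl h1, sum_comm]
  have h2 : ∀ x ∈ W, (∑ j ∈ Icc 1 n, if (minpoly F x).natDegree ∣ j ∧
      minpoly F x ^ (j / (minpoly F x).natDegree) ∣ f then 1 else 0) =
      (f.map (algebraMap F Ω)).roots.count x := by
    intro x _
    rw [← card_filter, count_roots]
    set r := (f.map (algebraMap F Ω)).rootMultiplicity x with hr
    have h3 : {j ∈ Icc 1 n | (minpoly F x).natDegree ∣ j ∧
      minpoly F x ^ (j / (minpoly F x).natDegree) ∣ f} = (Icc 1 r).image (fun i => (minpoly F x).natDegree * i) := by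
      ext j
      rw [mem_filter, mem_image, mem_Icc]
      constructor
      · rintro ⟨h4, ⟨i, rfl⟩, h6⟩
        rw [Nat.mul_div_cancel_left _ (hpos x), minpoly_pow_dvd_iff x (hint x) f hf.ne_zero] at h6
        refine ⟨i, mem_Icc.mpr ⟨?_, h6⟩, rfl⟩
        exact Nat.pos_of_ne_zero (by rintro rfl; omega)
      · rintro ⟨i, hi, rfl⟩
        rw [mem_Icc] at hi
        have h7 := (minpoly_pow_dvd_iff x (hint x) f hf.ne_zero i).mpr hi.2
        rw [Nat.mul_div_cancel_left _ (hpos x)]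
        refine ⟨⟨Nat.mul_pos (hpos x) hi.1, ?_⟩, dvd_mul_right _ _, h7⟩
        have := natDegree_le_of_dvd h7 hf.ne_zero
        rw [natDegree_pow, hn] at this
        rwa [mul_comm]
    rw [h3, card_image_of_injective _ (fun a b h => Nat.eq_of_mul_eq_mul_left (hpos x) h)]
    simp
  rw [sum_congr rfl h2, Multiset.toFinset_sum_count_eq, IsAlgClosed.card_roots_eq_natDegree,
    natDegree_map, hn]

open Polynomial in
theorem Ln_rec {F Ω : Type*} [Field F] [Fintype F] [Field Ω] [Algebra F Ω] [IsAlgClosed Ω]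
    [Algebra.IsAlgebraic F Ω] (χ : MulChar F ℂ) (s : Finset F) (e : F → ℕ) (n : ℕ) :
    (n : ℂ) * Ln χ s e n = ∑ j ∈ Icc 1 n, Sn Ω χ s e j * Ln χ s e (n - j) := by
  classical
  have hint : ∀ x : Ω, IsIntegral F x := fun x => Algebra.IsIntegral.isIntegral x
  have hpos : ∀ x : Ω, 0 < (minpoly F x).natDegree := fun x => minpoly.natDegree_pos (hint x)
  have h1 : ∀ j ∈ Icc 1 n, Sn Ω χ s e j * Ln χ s e (n - j) =
      ∑ f ∈ Mon F n, (#{x ∈ Rn F Ω j | minpoly F x ^ (j / (minpoly F x).natDegree) ∣ f} : ℂ) * Lam χ s e f := by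
    intro j hj
    rw [mem_Icc] at hj
    have h2 : ∀ f ∈ Mon F n, (#{x ∈ Rn F Ω j | minpoly F x ^ (j / (minpoly F x).natDegree) ∣ f} : ℂ) * Lam χ s e f =
        ∑ x ∈ Rn F Ω j, if minpoly F x ^ (j / (minpoly F x).natDegree) ∣ f then Lam χ s e f else 0 := by
      intro f _
      rw [← sum_filter, sum_const, nsmul_eq_mul]
    rw [sum_congr rfl h2, sum_comm, Sn, sum_mul]
    refine sum_congr rfl fun x hx => ?_
    rw [mem_Rn j (by omega), mem_Rn_iff x (hint x)] at hx
    set i := j / (minpoly F x).natDegree with hi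
    have hij : i * (minpoly F x).natDegree = j := Nat.div_mul_cancel hx
    have hmon := minpoly.monic (hint x)
    have hdeg : (minpoly F x ^ i).natDegree = j := by rw [natDegree_pow, hij]
    rw [← sum_filter, Ln, mul_sum]
    refine sum_bij (fun h _ => minpoly F x ^ i * h) ?_ ?_ ?_ ?_
    · intro h hh
      rw [mem_Mon] at hh
      rw [mem_filter, mem_Mon]
      refine ⟨⟨(hmon.pow i).mul hh.1, ?_⟩, dvd_mul_right _ _⟩
      rw [(hmon.pow i).natDegree_mul hh.1, hdeg, hh.2]; omega
    · intro a _ b _ hab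
      exact mul_left_cancel₀ (hmon.pow i).ne_zero hab
    · intro f hf
      rw [mem_filter, mem_Mon] at hf
      obtain ⟨⟨hf1, hf2⟩, h, rfl⟩ := hf
      have hh : h.Monic := (hmon.pow i).of_mul_monic_left hf1
      refine ⟨h, ?_, rfl⟩
      rw [mem_Mon]
      refine ⟨hh, ?_⟩
      rw [(hmon.pow i).natDegree_mul hh, hdeg] at hf2
      omega
    · intro h _
      rw [Lam_mul, Lam_pow']
  rw [sum_congr rfl h1, sum_comm, Ln, mul_sum]
  refine sum_congr rfl fun f hf => ?_
  rw [mem_Mon] at hf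
  rw [← sum_mul]
  congr 1
  have := count_pairs (Ω := Ω) f n hf.1 hf.2
  exact_mod_cast this.symm

open Polynomial in
theorem growth (Y : Multiset ℂ) (q : ℝ) (hq : 0 < q) (K : ℝ) (k₀ : ℕ)
    (h : ∀ k, k₀ ≤ k → ‖(Y.map (fun y => y ^ k)).sum‖ ≤ K * q ^ k) : ∀ y ∈ Y, ‖y‖ ≤ q := by
  classical
  intro y₁ hy₁
  by_contra! hlt
  have hs : ∀ k, (Y.map (fun y => y ^ k)).sum = ∑ y ∈ Y.toFinset, (Y.count y : ℂ) * y ^ k := by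
    intro k
    rw [Finset.sum_multiset_map_count]
    simp
  let G : ℂ[X] := ∏ y ∈ Y.toFinset.erase y₁, (X - C y)
  have hG1 : G.eval y₁ ≠ 0 := by
    simp only [G, eval_prod]
    refine prod_ne_zero_iff.mpr fun p hp => ?_
    simpa [sub_eq_zero] using (ne_of_mem_erase hp).symm
  have hG0 : ∀ y ∈ Y.toFinset, y ≠ y₁ → G.eval y = 0 := by
    intro y hy hne
    simp only [G, eval_prod]
    exact prod_eq_zero (mem_erase.mpr ⟨hne, hy⟩) (by simp)
  have hy1F : y₁ ∈ Y.toFinset := Multiset.mem_toFinset.mpr hy₁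
  set v : ℂ := (Y.count y₁ : ℂ) * G.eval y₁ with hv
  have hv0 : v ≠ 0 := mul_ne_zero (by
    have := Multiset.count_pos.mpr hy₁
    exact_mod_cast this.ne') hG1
  have hid : ∀ k, ∑ l ∈ range (G.natDegree + 1), G.coeff l * (Y.map (fun y => y ^ (k + l))).sum = v * y₁ ^ k := by
    intro k
    simp_rw [hs, mul_sum]
    rw [sum_comm]
    have h1 : ∀ y ∈ Y.toFinset, ∑ l ∈ range (G.natDegree + 1), G.coeff l * ((Y.count y : ℂ) * y ^ (k + l)) =
        (Y.count y : ℂ) * G.eval y * y ^ k := by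
      intro y _
      rw [eval_eq_sum_range, mul_sum, sum_mul]
      refine sum_congr rfl fun l _ => ?_
      rw [pow_add]; ring
    rw [sum_congr rfl h1, sum_eq_single_of_mem y₁ hy1F]
    intro y hy hne
    rw [hG0 y hy hne]; simp
  set M : ℝ := ∑ l ∈ range (G.natDegree + 1), ‖G.coeff l‖ * (K * q ^ l) with hM
  have hb : ∀ k, k₀ ≤ k → ‖v‖ * ‖y₁‖ ^ k ≤ M * q ^ k := by
    intro k hk
    rw [← norm_pow, ← norm_mul, ← hid k, hM, sum_mul]
    refine (norm_sum_le _ _).trans (sum_le_sum fun l _ => ?_)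
    rw [norm_mul, mul_assoc]
    refine mul_le_mul_of_nonneg_left ((h (k + l) (by omega)).trans (le_of_eq ?_)) (norm_nonneg _)
    rw [pow_add]; ring
  have hr : 1 < ‖y₁‖ / q := (one_lt_div hq).mpr hlt
  have hv1 : 0 < ‖v‖ := norm_pos_iff.mpr hv0
  obtain ⟨k, hk⟩ := ((tendsto_pow_atTop_atTop_of_one_lt hr).eventually_gt_atTop (M / ‖v‖)).and
    (Filter.eventually_ge_atTop k₀) |>.exists
  have h1 := hb k hk.2
  have h2 := hk.1
  rw [div_pow, div_lt_div_iff₀ hv1 (by positivity)] at h2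
  linarith [mul_comm ‖v‖ (‖y₁‖ ^ k)]

open PowerSeries in
theorem logderiv_prod (ω : Multiset ℂ) :
    d⁄dX ℂ ((ω.map (fun w => (1 - C w * X : ℂ⟦X⟧))).prod) =
      (ω.map (fun w => (1 - C w * X : ℂ⟦X⟧))).prod * PowerSeries.mk (fun n => -(ω.map (fun w => w ^ (n + 1))).sum) := by
  induction ω using Multiset.induction with
  | empty =>
    ext n
    simp
  | cons a ω ih =>
    have h1 : (1 - C a * X : ℂ⟦X⟧) * PowerSeries.mk (fun n => a ^ (n + 1)) = C a := by
      ext n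
      rw [sub_mul, one_mul, map_sub, mul_assoc, coeff_C_mul]
      cases n with
      | zero => simp
      | succ n =>
        rw [coeff_succ_X_mul, coeff_mk, coeff_mk, coeff_C, if_neg (by omega)]
        ring
    have h2 : PowerSeries.mk (fun n => -((a ::ₘ ω).map (fun w => w ^ (n + 1))).sum) =
        PowerSeries.mk (fun n => -(ω.map (fun w => w ^ (n + 1))).sum) - PowerSeries.mk (fun n => a ^ (n + 1)) := by
      ext n
      simp
      ring
    have h3 : d⁄dX ℂ (1 - C a * X : ℂ⟦X⟧) = - C a := by
      ext n
      simp [coeff_C]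
    rw [h2, Multiset.map_cons, Multiset.prod_cons, Derivation.leibniz, ih, h3]
    simp only [smul_eq_mul]
    linear_combination ((ω.map (fun w => (1 - C w * X : ℂ⟦X⟧))).prod) * h1

open Polynomial in
theorem factor_one (P : ℂ[X]) (hP : P.coeff 0 = 1) :
    ∃ ω : Multiset ℂ, Multiset.card ω = P.natDegree ∧ P = (ω.map (fun w => (1 - C w * X : ℂ[X]))).prod := by
  have h0 : P ≠ 0 := by rintro rfl; simp at hP
  refine ⟨P.roots.map (fun a => a⁻¹), ?_, ?_⟩
  · rw [Multiset.card_map, IsAlgClosed.card_roots_eq_natDegree]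
  · have h1 := (IsAlgClosed.splits P).eq_prod_roots
    have hr0 : ∀ a ∈ P.roots, a ≠ 0 := by
      rintro a ha rfl
      rw [mem_roots h0, IsRoot, ← coeff_zero_eq_eval_zero, hP] at ha
      exact one_ne_zero ha
    have h2 : (P.roots.map (fun a => X - C a)).prod =
        C (P.roots.map (fun a => -a)).prod * ((P.roots.map (fun a => a⁻¹)).map (fun w => (1 - C w * X : ℂ[X]))).prod := by
      rw [map_multiset_prod, Multiset.map_map, Multiset.map_map, ← Multiset.prod_map_mul]
      congr 1
      refine Multiset.map_congr rfl fun a ha => ?_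
      simp only [Function.comp]
      have h3 : C a * C a⁻¹ = (1 : ℂ[X]) := by rw [← C_mul, mul_inv_cancel₀ (hr0 a ha), C_1]
      rw [C_neg]
      linear_combination (-X : ℂ[X]) * h3
    rw [h2, ← mul_assoc, ← C_mul] at h1
    set u := P.leadingCoeff * (P.roots.map (fun a => -a)).prod
    have h4 : u = 1 := by
      have h5 := congrArg (fun f => f.eval 0) h1
      simp only [eval_mul, eval_C, eval_multiset_prod, Multiset.map_map, ← coeff_zero_eq_eval_zero, hP] at h5
      simpa using h5.symm
    rw [h4, C_1, one_mul] at h1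
    exact h1

open Polynomial in
theorem rh_deduce (L S : ℕ → ℂ) (m : ℕ) (hm : 1 ≤ m) (h0 : L 0 = 1) (hL : ∀ n, m ≤ n → L n = 0)
    (hrec : ∀ n : ℕ, (n : ℂ) * L n = ∑ j ∈ Icc 1 n, S j * L (n - j)) (q : ℝ) (hq : 0 < q) (K : ℝ) (k₀ : ℕ)
    (hS : ∀ k, k₀ ≤ k → ‖S (2 * k)‖ ≤ K * q ^ k) : ‖L 1‖ ≤ (m - 1) * Real.sqrt q := by
  let P : ℂ[X] := ∑ i ∈ range m, monomial i (L i)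
  have hcoeff : ∀ n, P.coeff n = L n := by
    intro n
    simp only [P, finsetSum_coeff, coeff_monomial]
    rw [sum_ite_eq' (range m) n]
    split_ifs with h
    · rfl
    · rw [hL n (by simpa using h)]
  obtain ⟨ω, hω, hPω⟩ := factor_one P (by rw [hcoeff, h0])
  have hdeg : P.natDegree ≤ m - 1 := by
    refine natDegree_sum_le_of_forall_le _ _ fun i hi => (natDegree_monomial_le _).trans ?_
    have := mem_range.mp hi
    omega
  have hps : (P : PowerSeries ℂ) = (ω.map (fun w => (1 - PowerSeries.C w * PowerSeries.X : PowerSeries ℂ))).prod := by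
    rw [hPω, ← Polynomial.coeToPowerSeries.ringHom_apply, map_multiset_prod, Multiset.map_map]
    congr 1
    refine Multiset.map_congr rfl fun a _ => ?_
    simp [Polynomial.coeToPowerSeries.ringHom_apply]
  have h1 := logderiv_prod ω
  rw [← hps] at h1
  have h2 : PowerSeries.derivative ℂ (P : PowerSeries ℂ) = (P : PowerSeries ℂ) * PowerSeries.mk (fun n => S (n + 1)) := by
    ext n
    rw [PowerSeries.coeff_derivative, mul_comm (P : PowerSeries ℂ), PowerSeries.coeff_mul,
      Finset.Nat.sum_antidiagonal_eq_sum_range_succ_mk, Polynomial.coeff_coe, hcoeff]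
    have h3 := hrec (n + 1)
    push_cast at h3
    rw [mul_comm, h3, ← Finset.Ico_add_one_right_eq_Icc, Finset.sum_Ico_eq_sum_range]
    refine sum_congr (by simp) fun i hi => ?_
    rw [PowerSeries.coeff_mk, Polynomial.coeff_coe, hcoeff, add_comm 1 i]
    congr 2
    omega
  have hP0 : (P : PowerSeries ℂ) ≠ 0 := by
    intro h
    have h3 := congrArg (PowerSeries.coeff 0) h
    rw [Polynomial.coeff_coe, hcoeff, h0, map_zero] at h3
    exact one_ne_zero h3
  rw [h2] at h1
  have h4 := mul_left_cancel₀ hP0 h1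
  have hSω : ∀ n, S (n + 1) = -(ω.map (fun w => w ^ (n + 1))).sum := by
    intro n
    have h5 := congrArg (PowerSeries.coeff n) h4
    simpa using h5
  have hgr := growth (ω.map (fun w => w ^ 2)) q hq K (k₀ + 1) (by
    intro k hk
    have h6 := hS k (by omega)
    obtain ⟨j, hj⟩ : ∃ j, 2 * k = j + 1 := ⟨2 * k - 1, by omega⟩
    rw [hj, hSω j, ← hj, norm_neg] at h6
    rw [Multiset.map_map]
    simpa only [Function.comp, ← pow_mul] using h6)
  have hw : ∀ w ∈ ω, ‖w‖ ≤ Real.sqrt q := by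
    intro w hw
    refine Real.le_sqrt_of_sq_le ?_
    rw [← norm_pow]
    exact hgr _ (Multiset.mem_map.mpr ⟨w, hw, rfl⟩)
  have hL1 : L 1 = -(ω.map (fun w => w)).sum := by
    have h7 := hrec 1
    rw [Icc_self, sum_singleton] at h7
    simp only [Nat.cast_one, one_mul, Nat.sub_self, h0, mul_one] at h7
    rw [h7, hSω 0]
    simp
  rw [hL1, norm_neg]
  calc ‖(ω.map (fun w => w)).sum‖ ≤ (ω.map (fun w => ‖w‖)).sum := by
        have := norm_multiset_sum_le (ω.map (fun w => w))
        rwa [Multiset.map_map] at this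
    _ ≤ Multiset.card (ω.map (fun w => ‖w‖)) • Real.sqrt q := Multiset.sum_le_card_nsmul _ _ (by
        intro x hx
        obtain ⟨w, h8, rfl⟩ := Multiset.mem_map.mp hx
        exact hw w h8)
    _ ≤ (m - 1) * Real.sqrt q := by
        rw [Multiset.card_map, hω, nsmul_eq_mul]
        refine mul_le_mul_of_nonneg_right ?_ (Real.sqrt_nonneg _)
        have : (P.natDegree : ℝ) ≤ ((m - 1 : ℕ) : ℝ) := by exact_mod_cast hdeg
        rwa [Nat.cast_sub hm, Nat.cast_one] at this

theorem weil {F : Type*} [Field F] [Fintype F] (χ : MulChar F ℂ) (hord : orderOf χ = Fintype.card F - 1)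
    (s : Finset F) (e : F → ℕ) (he : ∃ p ∈ s, ¬ (Fintype.card F - 1) ∣ e p) :
    ‖∑ x : F, ∏ p ∈ s, χ (p - x) ^ (e p)‖ ≤ (#s - 1) * Real.sqrt (Fintype.card F) := by
  obtain ⟨K, k₀, hK⟩ := S_bound (Ω := AlgebraicClosure F) χ hord s e he
  rw [← Ln_one]
  refine rh_deduce (Ln χ s e) (Sn (AlgebraicClosure F) χ s e) #s ?_ (Ln_zero χ s e)
    (Ln_vanish χ hord s e he) (Ln_rec χ s e) _ (by exact_mod_cast Fintype.card_pos) K k₀ hK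
  obtain ⟨p, hp, _⟩ := he
  exact card_pos.mpr ⟨p, hp⟩

theorem chi_norm_le {F : Type*} [Field F] [Fintype F] (χ : MulChar F ℂ) (x : F) : ‖χ x‖ ≤ 1 := by
  by_cases hx : x = 0
  · rw [hx, MulChar.map_zero]; simp
  · have h1 : (χ x) ^ (Fintype.card F - 1) = 1 := by
      rw [← map_pow, FiniteField.pow_card_sub_one_eq_one x hx, map_one]
    have h2 : 1 < Fintype.card F := Fintype.one_lt_card
    exact (Complex.norm_eq_one_of_pow_eq_one h1 (by omega)).le

theorem chi_conj {F : Type*} [Field F] [Fintype F] (χ : MulChar F ℂ) (n : ℕ) (hn : n < Fintype.card F - 1)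
    (x : F) : (starRingEnd ℂ) (χ x ^ n) = χ x ^ (if n = 0 then 0 else Fintype.card F - 1 - n) := by
  split_ifs with h0
  · simp [h0]
  · by_cases hx : x = 0
    · rw [hx, MulChar.map_zero, zero_pow h0, zero_pow (by omega), map_zero]
    · have h1 : (χ x) ^ (Fintype.card F - 1) = 1 := by
        rw [← map_pow, FiniteField.pow_card_sub_one_eq_one x hx, map_one]
      have h2 : ‖χ x ^ n‖ = 1 := by
        rw [norm_pow, Complex.norm_eq_one_of_pow_eq_one h1 (by omega), one_pow]
      rw [← Complex.inv_eq_conj h2]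
      refine inv_eq_of_mul_eq_one_right ?_
      rw [← pow_add, Nat.add_sub_cancel' hn.le, h1]

theorem K_bound {F : Type*} [Field F] [Fintype F] (χ : MulChar F ℂ)
    (hord : orderOf χ = Fintype.card F - 1)
    (a b : ℕ) (ha : 0 < a) (ha' : a < Fintype.card F - 1) (hb : b < Fintype.card F - 1)
    (A : F → F) (hA : ∀ y, A y ≠ y) (y z : F) (hyz : y ≠ z) (hbad : ¬ (A y = z ∧ A z = y)) :
    ‖∑ s : F, (χ (s + y) ^ a * χ (s + A y) ^ b) * (starRingEnd ℂ) (χ (s + z) ^ a * χ (s + A z) ^ b)‖ ≤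
      3 * Real.sqrt (Fintype.card F) := by
  classical
  set a' := if a = 0 then 0 else Fintype.card F - 1 - a with ha'def
  set b' := if b = 0 then 0 else Fintype.card F - 1 - b with hb'def
  let P : Finset F := {y, A y, z, A z}
  let e : F → ℕ := fun p => (if p = y then a else 0) + (if p = A y then b else 0) +
    (if p = z then a' else 0) + (if p = A z then b' else 0)
  have hae : a' = Fintype.card F - 1 - a := if_neg ha.ne'
  have he : ∃ p ∈ P, ¬ (Fintype.card F - 1) ∣ e p := by
    by_cases h1 : A z = y
    · have h2 : A y ≠ z := fun h => hbad ⟨h, h1⟩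
      refine ⟨z, by simp [P], ?_⟩
      have h3 : e z = a' := by
        simp only [e]
        rw [if_neg hyz.symm, if_neg h2.symm, if_neg (hA z).symm]
        simp
      rw [h3, hae]
      exact Nat.not_dvd_of_pos_of_lt (by omega) (by omega)
    · refine ⟨y, by simp [P], ?_⟩
      have h3 : e y = a := by
        simp only [e]
        rw [if_neg hyz, if_neg (hA y).symm, if_neg (Ne.symm h1)]
        simp
      rw [h3]
      exact Nat.not_dvd_of_pos_of_lt ha ha'
  have hw := weil χ hord P e he
  have hprod : ∀ (x w : F) (n : ℕ), w ∈ P → ∏ p ∈ P, χ (p - x) ^ (if p = w then n else 0) = χ (w - x) ^ n := by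
    intro x w n hwP
    rw [prod_eq_single_of_mem w hwP]
    · simp
    · intro p _ hp
      simp [hp]
  have heq : ∑ s : F, (χ (s + y) ^ a * χ (s + A y) ^ b) * (starRingEnd ℂ) (χ (s + z) ^ a * χ (s + A z) ^ b) =
      ∑ x : F, ∏ p ∈ P, χ (p - x) ^ (e p) := by
    refine Fintype.sum_equiv (Equiv.neg F) _ _ fun s => ?_
    simp only [e, pow_add, prod_mul_distrib]
    rw [hprod _ y _ (by simp [P]), hprod _ (A y) _ (by simp [P]), hprod _ z _ (by simp [P]),
      hprod _ (A z) _ (by simp [P]), map_mul, chi_conj χ a ha', chi_conj χ b hb]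
    simp only [Equiv.neg_apply, sub_neg_eq_add, add_comm s]
    ring
  rw [heq]
  refine hw.trans (mul_le_mul_of_nonneg_right ?_ (Real.sqrt_nonneg _))
  have : #P ≤ 4 := card_le_four
  have : (#P : ℝ) ≤ 4 := by exact_mod_cast this
  linarith

theorem duality {F : Type*} [Fintype F] (f : F → F → ℂ) (S : Finset F) :
    (∑ y : F, ‖∑ s ∈ S, f y s‖) ^ 2 ≤
      #S * ∑ p : F × F, ‖∑ s : F, f p.1 s * (starRingEnd ℂ) (f p.2 s)‖ := by
  have hθ : ∀ w : ℂ, ∃ θ : ℂ, ‖θ‖ ≤ 1 ∧ θ * w = ‖w‖ := by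
    intro w
    by_cases hw : w = 0
    · exact ⟨0, by simp, by simp [hw]⟩
    · refine ⟨(starRingEnd ℂ) w / ‖w‖, ?_, ?_⟩
      · rw [norm_div, RCLike.norm_conj, Complex.norm_real, norm_norm, div_self (norm_ne_zero_iff.mpr hw)]
      · have : (‖w‖ : ℂ) ≠ 0 := by exact_mod_cast norm_ne_zero_iff.mpr hw
        field_simp
        rw [Complex.conj_mul']
  choose θ hθ1 hθ2 using fun y : F => hθ (∑ s ∈ S, f y s)
  let g : F → ℂ := fun s => ∑ y : F, θ y * f y s
  have h1 : ((∑ y : F, ‖∑ s ∈ S, f y s‖ : ℝ) : ℂ) = ∑ s ∈ S, g s := by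
    push_cast
    simp only [g]
    rw [sum_comm]
    refine sum_congr rfl fun y _ => ?_
    rw [← hθ2, mul_sum]
  have h2 : (∑ y : F, ‖∑ s ∈ S, f y s‖) ≤ ∑ s ∈ S, ‖g s‖ := by
    have h3 : ‖((∑ y : F, ‖∑ s ∈ S, f y s‖ : ℝ) : ℂ)‖ = ∑ y : F, ‖∑ s ∈ S, f y s‖ := by
      rw [Complex.norm_real, Real.norm_of_nonneg (by positivity)]
    rw [← h3, h1]
    exact norm_sum_le _ _
  have h4 : ∑ s : F, ‖g s‖ ^ 2 ≤ ∑ p : F × F, ‖∑ s : F, f p.1 s * (starRingEnd ℂ) (f p.2 s)‖ := by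
    have h5 : ((∑ s : F, ‖g s‖ ^ 2 : ℝ) : ℂ) =
        ∑ p : F × F, θ p.1 * (starRingEnd ℂ) (θ p.2) * ∑ s : F, f p.1 s * (starRingEnd ℂ) (f p.2 s) := by
      push_cast
      have h7 : ∀ s : F, (‖g s‖ : ℂ) ^ 2 = ∑ p : F × F, θ p.1 * (starRingEnd ℂ) (θ p.2) *
          (f p.1 s * (starRingEnd ℂ) (f p.2 s)) := by
        intro s
        rw [← Complex.mul_conj']
        simp only [g, map_sum]
        rw [sum_mul_sum, Fintype.sum_prod_type]
        refine sum_congr rfl fun y _ => sum_congr rfl fun z _ => ?_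
        rw [map_mul]
        ring
      rw [sum_congr rfl (fun s _ => h7 s), sum_comm]
      exact sum_congr rfl fun p _ => by rw [mul_sum]
    have h6 : ‖((∑ s : F, ‖g s‖ ^ 2 : ℝ) : ℂ)‖ = ∑ s : F, ‖g s‖ ^ 2 := by
      rw [Complex.norm_real, Real.norm_of_nonneg (by positivity)]
    rw [← h6, h5]
    refine (norm_sum_le _ _).trans (sum_le_sum fun p _ => ?_)
    rw [norm_mul, norm_mul, RCLike.norm_conj]
    refine mul_le_of_le_one_left (norm_nonneg _) ?_
    exact mul_le_one₀ (hθ1 _) (norm_nonneg _) (hθ1 _)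
  calc (∑ y : F, ‖∑ s ∈ S, f y s‖) ^ 2 ≤ (∑ s ∈ S, ‖g s‖) ^ 2 := by gcongr
    _ ≤ #S * ∑ s ∈ S, ‖g s‖ ^ 2 := sq_sum_le_card_mul_sum_sq
    _ ≤ #S * ∑ s : F, ‖g s‖ ^ 2 := by
        refine mul_le_mul_of_nonneg_left ?_ (Nat.cast_nonneg _)
        exact sum_le_sum_of_subset_of_nonneg (subset_univ _) (fun _ _ _ => by positivity)
    _ ≤ _ := mul_le_mul_of_nonneg_left h4 (Nat.cast_nonneg _)

theorem K_sum {F : Type*} [Field F] [Fintype F] (χ : MulChar F ℂ)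
    (hord : orderOf χ = Fintype.card F - 1)
    (a b : ℕ) (ha : 0 < a) (ha' : a < Fintype.card F - 1) (hb : b < Fintype.card F - 1)
    (A : F → F) (hA : ∀ y, A y ≠ y) :
    (∑ p : F × F, ‖∑ s : F, (χ (s + p.1) ^ a * χ (s + A p.1) ^ b) *
      (starRingEnd ℂ) (χ (s + p.2) ^ a * χ (s + A p.2) ^ b)‖) ^ 2 ≤ 11 * (Fintype.card F : ℝ) ^ 5 := by
  classical
  set q : ℝ := (Fintype.card F : ℝ) with hq
  have hq0 : 0 ≤ q := Nat.cast_nonneg _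
  let bad : Finset (F × F) := univ.image (fun y => (y, y)) ∪ univ.image (fun y => (y, A y))
  have hbad : (#bad : ℝ) ≤ 2 * q := by
    have h1 : #bad ≤ Fintype.card F + Fintype.card F :=
      (card_union_le _ _).trans (add_le_add card_image_le card_image_le)
    have h2 : (#bad : ℝ) ≤ (Fintype.card F : ℝ) + Fintype.card F := by exact_mod_cast h1
    linarith
  refine sq_sum_le_card_mul_sum_sq.trans ?_
  rw [card_univ, Fintype.card_prod]
  have hpt : ∀ p : F × F, ‖∑ s : F, (χ (s + p.1) ^ a * χ (s + A p.1) ^ b) *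
      (starRingEnd ℂ) (χ (s + p.2) ^ a * χ (s + A p.2) ^ b)‖ ^ 2 ≤ 9 * q + if p ∈ bad then q ^ 2 else 0 := by
    intro p
    split_ifs with hp
    · have h1 : ‖∑ s : F, (χ (s + p.1) ^ a * χ (s + A p.1) ^ b) *
          (starRingEnd ℂ) (χ (s + p.2) ^ a * χ (s + A p.2) ^ b)‖ ≤ q := by
        refine (norm_sum_le _ _).trans ?_
        have h2 : ∀ s ∈ (univ : Finset F), ‖(χ (s + p.1) ^ a * χ (s + A p.1) ^ b) *
          (starRingEnd ℂ) (χ (s + p.2) ^ a * χ (s + A p.2) ^ b)‖ ≤ 1 := by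
          intro s _
          have h3 : ∀ y, ‖χ (s + y) ^ a * χ (s + A y) ^ b‖ ≤ 1 := by
            intro y
            rw [norm_mul, norm_pow, norm_pow]
            exact mul_le_one₀ (pow_le_one₀ (norm_nonneg _) (chi_norm_le χ _)) (by positivity)
              (pow_le_one₀ (norm_nonneg _) (chi_norm_le χ _))
          rw [norm_mul, RCLike.norm_conj]
          exact mul_le_one₀ (h3 _) (norm_nonneg _) (h3 _)
        refine (sum_le_card_nsmul _ _ 1 h2).trans ?_
        simp [hq]
      have h4 := pow_le_pow_left₀ (norm_nonneg _) h1 2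
      linarith
    · have h0 : ¬ (p.1 = p.2) ∧ ¬ (A p.1 = p.2) := by
        simp only [bad, mem_union, mem_image, mem_univ, true_and, not_or] at hp
        exact ⟨fun h => hp.1 ⟨p.1, Prod.ext rfl h⟩, fun h => hp.2 ⟨p.1, Prod.ext rfl h⟩⟩
      have h1 := K_bound χ hord a b ha ha' hb A hA p.1 p.2 h0.1 (fun h => h0.2 h.1)
      have h4 := pow_le_pow_left₀ (norm_nonneg _) h1 2
      rw [mul_pow, Real.sq_sqrt hq0] at h4
      linarith
  have h5 := sum_le_sum (s := univ) fun p (_ : p ∈ (univ : Finset (F × F))) => hpt p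
  rw [sum_add_distrib, sum_const, card_univ, Fintype.card_prod, nsmul_eq_mul, ← sum_filter, sum_const, nsmul_eq_mul] at h5
  have h6 : (univ.filter (· ∈ bad)) = bad := by ext; simp
  rw [h6] at h5
  push_cast at h5 ⊢
  rw [← hq] at h5 ⊢
  have h7 := mul_le_mul_of_nonneg_right hbad (sq_nonneg q)
  have h8 := mul_le_mul_of_nonneg_left (h5.trans (add_le_add_right h7 _)) (mul_nonneg hq0 hq0)
  refine h8.trans (le_of_eq ?_)
  ring

theorem final_arith (N q S K : ℝ) (hN : 0 ≤ N) (hq : 0 ≤ q) (hS : 0 ≤ S)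
    (h1 : N ^ 2 ≤ S * K) (h2 : K ^ 2 ≤ 11 * q ^ 5) :
    N ≤ (11 : ℝ) ^ ((1 : ℝ)/4) * q ^ ((5 : ℝ)/4) * S ^ ((1 : ℝ)/2) := by
  refine le_of_pow_le_pow_left₀ (n := 4) (by norm_num) (by positivity) ?_
  have h3 : N ^ 4 ≤ S ^ 2 * (11 * q ^ 5) := by
    calc N ^ 4 = (N ^ 2) ^ 2 := by ring
      _ ≤ (S * K) ^ 2 := by gcongr
      _ = S ^ 2 * K ^ 2 := by ring
      _ ≤ _ := by gcongr
  refine h3.trans (le_of_eq ?_)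
  rw [mul_pow, mul_pow, ← Real.rpow_mul_natCast (by norm_num), ← Real.rpow_mul_natCast hq, ← Real.rpow_mul_natCast hS]
  norm_num
  ring

theorem stmt_8 {F : Type*} [Field F] [Fintype F]
    (χ : MulChar F ℂ) (hord : orderOf χ = Fintype.card F - 1)
    (a b : ℕ) (ha : 0 < a) (ha' : a < Fintype.card F - 1) (hb : b < Fintype.card F - 1)
    (S : Finset F) (hS : S.Nonempty) (A : F → F) (hA : ∀ y, A y ≠ y) :
    ∑ y : F, ‖∑ s ∈ S, (χ (s + y)) ^ a * (χ (s + A y)) ^ b‖ ≤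
      (11 : ℝ) ^ ((1 : ℝ)/4) * (Fintype.card F : ℝ) ^ ((5 : ℝ)/4) * (S.card : ℝ) ^ ((1 : ℝ)/2) := by
  refine final_arith _ _ _ _ (by positivity) (by positivity) (by positivity)
    (duality (fun y s => χ (s + y) ^ a * χ (s + A y) ^ b) S)
    (K_sum χ hord a b ha ha' hb A hA)
end
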